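/- Let (W, S) be a finite Coxeter system, B⁺ its Artin–Tits monoid, and Δ ∈ B⁺ its Garside element (the product in B⁺ of the letters of any reduced word for the longest element w₀ of W). If x, y ∈ B⁺ are periodic of the same period, i.e. x^d = Δ^p and y^{d'} = Δ^{p'} with d, p, d', p' positive integers satisfying d·p' = d'·p, then x and y are cyclically conjugate: (x, y) lies in the reflexive–transitive closure of the relation relating a·b to b·a for all a, b ∈ B⁺. -/

import Mathlib

/-- The alternating word `s t s t ⋯` of length `m`, starting with `s`. -/
def altWord {B : Type*} (s t : B) : ℕ → List B
  | 0 => []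
  | n + 1 => s :: altWord t s n

/-- The braid congruence on the free monoid over `B` associated to a Coxeter matrix `M`:
the congruence generated by the braid relations, identifying the alternating words
`s t s ⋯` and `t s t ⋯` of length `M s t` whenever `s ≠ t` and `M s t < ∞`
(infinity being encoded by the entry `0`). -/
def braidCon {B : Type*} (M : CoxeterMatrix B) : Con (FreeMonoid B) :=
  conGen (fun a b => ∃ s t : B, s ≠ t ∧ M s t ≠ 0 ∧
    a = FreeMonoid.ofList (altWord s t (M s t)) ∧
    b = FreeMonoid.ofList (altWord t s (M s t)))

/-- The Artin–Tits monoid of a Coxeter matrix `M`: the quotient of the free monoid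
on `B` by the braid relations. -/
def ArtinTitsMonoid {B : Type*} (M : CoxeterMatrix B) : Type _ :=
  (braidCon M).Quotient

instance {B : Type*} (M : CoxeterMatrix B) : Monoid (ArtinTitsMonoid M) :=
  inferInstanceAs (Monoid (braidCon M).Quotient)

/-- The image in the Artin–Tits monoid of a generator. -/
def ArtinTitsMonoid.of {B : Type*} (M : CoxeterMatrix B) (s : B) : ArtinTitsMonoid M :=
  (braidCon M).mk' (FreeMonoid.of s)

/-!
Let `N` and `K` be such that `x ^ N = y ^ N = (Δ ^ 2) ^ K`, and let `n` be the quotient of `N` by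
its greatest common divisor with `K`. In the group of fractions of `B⁺`, which is lattice ordered,
`x` and `y` are conjugate to the same power of positive `n`-th roots of `Δ ^ 2` which are balanced:
all their powers are comparable with `Δ`. It suffices to prove that two balanced `n`-th roots of
`Δ ^ 2` are conjugate, as a conjugating element may be taken in `B⁺`, where it decomposes into
cyclic conjugations.

Let `n ≥ 3` and let `w`, `w'` be the images in `W` of two balanced roots. They have regular
eigenvectors `v`, `v'` with eigenvalue `exp (2πi / n)`, obtained by averaging over the powers of
`w` and `w'`. Following Springer, restriction to the orbit of a regular vector identifies the
coinvariant algebra with the functions on `W`, so the trace on the coinvariant algebra of the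
action of `w`, twisted by the grading, counts the fixed points of `x ↦ w⁻¹ * x * w`, which
include `1`. Computed on the orbit of `v'`, the same trace counts the `x` with `w * x = x * w'`;
hence `w` and `w'` are conjugate.

Finally, the reduced lifts of the conjugates of `w` attached to the chambers of regular eigenvectors
are locally constant up to conjugacy as the eigenvector varies; a line in a complex eigenspace meets
the reflecting hyperplanes in finitely many points, so any two regular eigenvectors of `w` are
joined by a path of regular ones.
-/

namespace ArtinTits

/-! ### The geometric representation -/

section Reflections

open Polynomial

lemma chebyshevS_eval_eq_zero {k : ℕ} (hk : 2 ≤ k) {θ : ℝ} (hθ : 2 * k * θ = Real.pi) :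
    (Chebyshev.S ℝ (k - 1)).eval (2 * Real.cos (2 * θ)) = 0 := by
  have hk' : (2 : ℝ) ≤ k := by exact_mod_cast hk
  have hsin : 0 < Real.sin (2 * θ) :=
    Real.sin_pos_of_pos_of_lt_pi (by nlinarith [Real.pi_pos]) (by nlinarith [Real.pi_pos])
  have h := Chebyshev.S_two_mul_real_cos (2 * θ) (k - 1)
  have e : (((k - 1 : ℤ) : ℝ) + 1) * (2 * θ) = Real.pi := by push_cast; linarith
  rw [e, Real.sin_pi] at h
  exact (mul_eq_zero.mp h).resolve_right hsin.ne'

lemma chebyshevS_eval_add_eq_zero {k : ℕ} (hk : 1 ≤ k) {θ : ℝ} (hθ : (2 * k + 1) * θ = Real.pi) :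
    (Chebyshev.S ℝ k).eval (2 * Real.cos (2 * θ)) +
      (Chebyshev.S ℝ (k - 1)).eval (2 * Real.cos (2 * θ)) = 0 := by
  have hk' : (1 : ℝ) ≤ k := by exact_mod_cast hk
  have hsin : 0 < Real.sin (2 * θ) :=
    Real.sin_pos_of_pos_of_lt_pi (by nlinarith [Real.pi_pos]) (by nlinarith [Real.pi_pos])
  have h := Chebyshev.S_two_mul_real_cos (2 * θ) k
  have h' := Chebyshev.S_two_mul_real_cos (2 * θ) (k - 1)
  have e : ((k : ℤ) + 1 : ℝ) * (2 * θ) = θ + Real.pi := by push_cast; linarith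
  have e' : (((k - 1 : ℤ) : ℝ) + 1) * (2 * θ) = Real.pi - θ := by push_cast; linarith
  rw [e, Real.sin_add_pi] at h
  rw [e', Real.sin_pi_sub] at h'
  refine (mul_eq_zero.mp ?_).resolve_right hsin.ne'
  rw [add_mul, h, h', neg_add_cancel]

lemma reflection_mul_reflection_pow_eq_one {V : Type*} [AddCommGroup V] [Module ℝ V] {x y : V}
    {f g : Module.Dual ℝ V} (hf : f x = 2) (hg : g y = 2) {m : ℕ} (hm : 2 ≤ m)
    (hfy : f y = -2 * Real.cos (Real.pi / m)) (hgx : g x = -2 * Real.cos (Real.pi / m)) :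
    (Module.reflection hf * Module.reflection hg) ^ m = 1 := by
  have ht : 2 * Real.cos (2 * (Real.pi / m)) = f y * g x - 2 := by
    rw [hfy, hgx, Real.cos_two_mul]; ring
  ext z
  rw [Module.reflection_mul_reflection_pow_apply hf hg m z _ ht]
  obtain rfl | hm3 := hm.eq_or_lt
  · simp [hfy, hgx, mul_div_cancel₀]
    module
  have hm0 : (m : ℝ) ≠ 0 := by positivity
  obtain ⟨k, rfl | rfl⟩ := m.even_or_odd'
  · have h := chebyshevS_eval_eq_zero (k := k) (θ := Real.pi / (2 * k : ℕ)) (by lia)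
      (by push_cast at hm0 ⊢; exact mul_div_cancel₀ _ hm0)
    have e₁ : ((2 * k : ℕ) - 1 : ℤ) / 2 = k - 1 := by lia
    have e₂ : ((2 * k : ℕ) - 2 : ℤ) / 2 = k - 1 := by lia
    rw [e₁, e₂, h]
    simp
  · have h := chebyshevS_eval_add_eq_zero (k := k) (θ := Real.pi / (2 * k + 1 : ℕ)) (by lia)
      (by push_cast at hm0 ⊢; exact mul_div_cancel₀ _ hm0)
    have e₁ : ((2 * k + 1 : ℕ) - 1 : ℤ) / 2 = k := by lia
    have e₂ : ((2 * k + 1 : ℕ) - 3 : ℤ) / 2 = k - 1 := by lia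
    have e₃ : ((2 * k + 1 : ℕ) : ℤ) / 2 = k := by lia
    have e₄ : ((2 * k + 1 : ℕ) - 2 : ℤ) / 2 = k - 1 := by lia
    rw [e₁, e₂, e₃, e₄, h]
    simp

end Reflections

section SimpleRoots

open Polynomial

variable {B : Type*} (M : CoxeterMatrix B)

/-- The basis vectors of the geometric representation: the simple roots `α_s`. -/
noncomputable def simpleRoot (s : B) : B →₀ ℝ := Finsupp.single s 1

/-- The simple coroots, with `⟨α_s^∨, α_t⟩ = -2 cos (π / M s t)`. When `M s t = 0` encodes `∞`, the
junk value `π / 0 = 0` produces the customary pairing `-2`. -/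
noncomputable def simpleCoroot (s : B) : Module.Dual ℝ (B →₀ ℝ) :=
  Finsupp.linearCombination ℝ fun t ↦ -2 * Real.cos (Real.pi / M s t)

lemma simpleCoroot_simpleRoot (s t : B) :
    simpleCoroot M s (simpleRoot t) = -2 * Real.cos (Real.pi / M s t) := by
  simp [simpleCoroot, simpleRoot]

lemma simpleCoroot_simpleRoot_self (s : B) : simpleCoroot M s (simpleRoot s) = 2 := by
  simp [simpleCoroot_simpleRoot]

lemma simpleRoot_pos (s : B) : 0 < simpleRoot s :=
  lt_of_le_of_ne (Finsupp.single_nonneg.mpr zero_le_one) (Ne.symm (by simp [simpleRoot]))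

lemma simpleRoot_apply_of_ne {s b : B} (h : b ≠ s) : simpleRoot s b = 0 :=
  Finsupp.single_eq_of_ne h

lemma linearMap_eq_sum_simpleRoot {N : Type*} [AddCommGroup N] [Module ℝ N]
    (f : (B →₀ ℝ) →ₗ[ℝ] N) (v : B →₀ ℝ) : f v = v.sum fun s a ↦ a • f (simpleRoot s) := by
  conv_lhs => rw [← Finsupp.sum_single v, map_finsuppSum]
  simp [simpleRoot, ← map_smul]

variable {M}

lemma two_le_of_ne {s t : B} (hst : s ≠ t) (h0 : M s t ≠ 0) : 2 ≤ M s t := by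
  have := M.off_diagonal s t hst
  lia

variable (M)

lemma isLiftable_reflection :
    M.IsLiftable fun s ↦ Module.reflection (simpleCoroot_simpleRoot_self M s) := by
  intro s t
  obtain rfl | hst := eq_or_ne s t
  · rw [M.diagonal, pow_one]
    exact mul_eq_one_iff_eq_inv.mpr (Module.reflection_inv _).symm
  obtain h0 | h0 := eq_or_ne (M s t) 0
  · rw [h0, pow_zero]
  · exact reflection_mul_reflection_pow_eq_one _ _ (two_le_of_ne hst h0)
      (simpleCoroot_simpleRoot M s t) (M.symmetric s t ▸ simpleCoroot_simpleRoot M t s)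

/-- The coefficients `sin (k θ) / sin θ`, `θ = π / M s t`, of the roots of the rank two system
spanned by `α_s` and `α_t`; for `M s t = ∞` they degenerate to `k`. -/
noncomputable def dihedralCoeff (s t : B) (k : ℕ) : ℝ :=
  (Chebyshev.U ℝ (k - 1)).eval (Real.cos (Real.pi / M s t))

lemma dihedralCoeff_zero (s t : B) : dihedralCoeff M s t 0 = 0 := by simp [dihedralCoeff]

lemma dihedralCoeff_one (s t : B) : dihedralCoeff M s t 1 = 1 := by simp [dihedralCoeff]

lemma dihedralCoeff_add_two (s t : B) (k : ℕ) : dihedralCoeff M s t (k + 2) =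
    2 * Real.cos (Real.pi / M s t) * dihedralCoeff M s t (k + 1) - dihedralCoeff M s t k := by
  have e : ((k + 2 : ℕ) - 1 : ℤ) = (k - 1) + 2 := by lia
  rw [dihedralCoeff, e, Chebyshev.U_add_two]
  simp [dihedralCoeff]

lemma dihedralCoeff_comm (s t : B) (k : ℕ) : dihedralCoeff M s t k = dihedralCoeff M t s k := by
  rw [dihedralCoeff, dihedralCoeff, M.symmetric s t]

variable {M}

lemma dihedralCoeff_nonneg {s t : B} (hst : s ≠ t) {k : ℕ} (hk : M s t = 0 ∨ k ≤ M s t) :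
    0 ≤ dihedralCoeff M s t k := by
  obtain h0 | h0 := eq_or_ne (M s t) 0
  · simp [dihedralCoeff, h0, Chebyshev.U_eval_one]
  have hm : (2 : ℝ) ≤ M s t := by exact_mod_cast two_le_of_ne hst h0
  have hkm : (k : ℝ) ≤ M s t := by exact_mod_cast hk.resolve_left h0
  have hsin : 0 < Real.sin (Real.pi / M s t) :=
    Real.sin_pos_of_pos_of_lt_pi (by positivity) (div_lt_self Real.pi_pos (by linarith))
  refine nonneg_of_mul_nonneg_left ?_ hsin
  rw [dihedralCoeff, Chebyshev.U_real_cos]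
  push_cast
  rw [sub_add_cancel]
  refine Real.sin_nonneg_of_nonneg_of_le_pi (by positivity) ?_
  rw [mul_div_left_comm]
  exact mul_le_of_le_one_right Real.pi_pos.le (div_le_one_of_le₀ hkm (by positivity))

end SimpleRoots

section AlternatingWords

open Polynomial

variable {B : Type*}

/-- The letter following the alternating word `altWord s t k`. -/
def altLetter (s t : B) : ℕ → B
  | 0 => s
  | k + 1 => altLetter t s k

lemma altLetter_eq_or (s t : B) (k : ℕ) :
    (altLetter s t k = s ∧ altLetter t s k = t) ∨ (altLetter s t k = t ∧ altLetter t s k = s) := by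
  induction k generalizing s t with
  | zero => exact .inl ⟨rfl, rfl⟩
  | succ k ih => exact (ih t s).symm

@[simp]
lemma length_altWord (s t : B) (k : ℕ) : (altWord s t k).length = k := by
  induction k generalizing s t with
  | zero => rfl
  | succ k ih => simp [altWord, ih]

lemma altWord_succ_eq_append (s t : B) (k : ℕ) :
    altWord s t (k + 1) = altWord s t k ++ [altLetter s t k] := by
  induction k generalizing s t with
  | zero => rfl
  | succ k ih => rw [altWord, ih]; rfl

lemma exists_altWord_add_eq_append (s t : B) (j i : ℕ) :
    ∃ l, altWord s t (j + i) = altWord s t j ++ l ∧ l.length = i := by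
  induction j generalizing s t with
  | zero => exact ⟨altWord s t i, by simp [altWord]⟩
  | succ j ih =>
    obtain ⟨l, hl, hlen⟩ := ih t s
    exact ⟨l, by rw [Nat.add_right_comm, altWord, hl]; rfl, hlen⟩

lemma alternatingWord_eq_reverse_altWord (s t : B) (k : ℕ) :
    CoxeterSystem.alternatingWord s t k = (altWord t s k).reverse := by
  induction k generalizing s t with
  | zero => rfl
  | succ k ih => rw [CoxeterSystem.alternatingWord_succ, ih, altWord]; simp

variable {M : CoxeterMatrix B} {W : Type*} [Group W] (cs : CoxeterSystem M W)

lemma wordProd_altWord_comm (s t : B) :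
    cs.wordProd (altWord s t (M s t)) = cs.wordProd (altWord t s (M s t)) := by
  have h := cs.wordProd_braidWord_eq s t
  simp only [CoxeterSystem.braidWord, alternatingWord_eq_reverse_altWord, cs.wordProd_reverse,
    M.symmetric t s] at h
  exact (inv_injective h).symm

lemma wordProd_altWord_succ (s t : B) (k : ℕ) : cs.wordProd (altWord s t (k + 1)) =
    cs.wordProd (altWord s t k) * cs.simple (altLetter s t k) := by
  rw [altWord_succ_eq_append, cs.wordProd_append, cs.wordProd_singleton]

lemma length_wordProd_mul_le (l : List B) (v : W) :
    cs.length (cs.wordProd l * v) ≤ l.length + cs.length v :=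
  (cs.length_mul_le _ _).trans (Nat.add_le_add_right (cs.length_wordProd_le l) _)

end AlternatingWords

section GeometricRepresentation

variable {B : Type*} {M : CoxeterMatrix B} {W : Type*} [Group W] (cs : CoxeterSystem M W)

/-- The geometric representation of a Coxeter group. -/
noncomputable def geomRep : Representation ℝ W (B →₀ ℝ) :=
  (LinearEquiv.automorphismGroup.toLinearMapMonoidHom).comp (cs.lift ⟨_, isLiftable_reflection M⟩)

lemma geomRep_simple_apply (s : B) (v : B →₀ ℝ) :
    geomRep cs (cs.simple s) v = v - simpleCoroot M s v • simpleRoot s := by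
  simp [geomRep, Module.reflection_apply]

lemma geomRep_simple_simpleRoot (s : B) :
    geomRep cs (cs.simple s) (simpleRoot s) = -simpleRoot s := by
  rw [geomRep_simple_apply, simpleCoroot_simpleRoot_self]
  module

lemma geomRep_mul_apply (u v : W) (x : B →₀ ℝ) :
    geomRep cs (u * v) x = geomRep cs u (geomRep cs v x) := by
  rw [map_mul, Module.End.mul_apply]

lemma geomRep_inv_wordProd_altWord_apply (s t : B) (k j : ℕ) :
    geomRep cs (cs.wordProd (altWord t s k))⁻¹
        (dihedralCoeff M s t j • simpleRoot t + dihedralCoeff M s t (j + 1) • simpleRoot s) =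
      dihedralCoeff M s t (j + k) • simpleRoot (altLetter t s k) +
        dihedralCoeff M s t (j + k + 1) • simpleRoot (altLetter s t k) := by
  induction k generalizing s t j with
  | zero => simp [altWord, altLetter]
  | succ k ih =>
    have h := ih t s (j + 1)
    rw [dihedralCoeff_comm M t s, dihedralCoeff_comm M t s, dihedralCoeff_comm M t s,
      dihedralCoeff_comm M t s, Nat.add_right_comm j 1 k] at h
    rw [altWord, cs.wordProd_cons, mul_inv_rev, geomRep_mul_apply, cs.inv_simple, altLetter,
      altLetter, ← Nat.add_assoc, ← h]
    congr 1
    simp only [map_add, map_smul, geomRep_simple_apply, simpleCoroot_simpleRoot_self,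
      simpleCoroot_simpleRoot, M.symmetric t s, dihedralCoeff_add_two]
    module

lemma geomRep_wordProd_altWord_altLetter (s t : B) (k : ℕ) :
    geomRep cs (cs.wordProd (altWord s t k)) (simpleRoot (altLetter s t k)) =
      dihedralCoeff M s t k • simpleRoot t + dihedralCoeff M s t (k + 1) • simpleRoot s := by
  induction k generalizing s t with
  | zero => simp [altWord, altLetter, dihedralCoeff_zero, dihedralCoeff_one]
  | succ k ih =>
    rw [altWord, cs.wordProd_cons, geomRep_mul_apply, altLetter, ih t s, dihedralCoeff_comm M t s,
      dihedralCoeff_comm M t s]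
    simp only [map_add, map_smul, geomRep_simple_apply, simpleCoroot_simpleRoot_self,
      simpleCoroot_simpleRoot, dihedralCoeff_add_two]
    module

variable {cs}

lemma lt_of_eq_wordProd_altWord_mul {w v : W} {s t : B} {k : ℕ}
    (hw : w = cs.wordProd (altWord t s k) * v) (hlen : cs.length w = cs.length v + k)
    (hs : cs.length w < cs.length (cs.simple s * w)) (h0 : M s t ≠ 0) : k < M s t := by
  by_contra! hk
  obtain ⟨i, rfl⟩ := Nat.exists_eq_add_of_le hk
  obtain ⟨l, hl, hli⟩ := exists_altWord_add_eq_append t s (M s t) i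
  obtain ⟨m, hm⟩ := Nat.exists_eq_succ_of_ne_zero h0
  have hsw : cs.simple s * w = cs.wordProd (altWord t s m ++ l) * v := by
    rw [hw, hl, cs.wordProd_append, ← wordProd_altWord_comm cs s t, hm, altWord, cs.wordProd_cons,
      cs.wordProd_append]
    simp [mul_assoc]
  have hle := length_wordProd_mul_le cs (altWord t s m ++ l) v
  rw [← hsw, List.length_append, length_altWord, hli] at hle
  exact hs.not_ge (by lia)

lemma exists_eq_wordProd_altWord_mul {w : W} {t : B} (s : B) (ht : cs.IsLeftDescent w t) :
    ∃ k v, 0 < k ∧ w = cs.wordProd (altWord t s k) * v ∧ cs.length w = cs.length v + k ∧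
      cs.length v < cs.length (cs.simple s * v) ∧ cs.length v < cs.length (cs.simple t * v) := by
  classical
  rw [cs.isLeftDescent_iff] at ht
  let P (k : ℕ) : Prop := ∃ v, w = cs.wordProd (altWord t s k) * v ∧ cs.length w = cs.length v + k
  have hP : P 1 := ⟨cs.simple t * w, by simp [altWord], ht.symm⟩
  obtain ⟨k, hkP, hk⟩ : ∃ k, P (k + 1) ∧ ¬ P (k + 2) := by
    by_contra! h
    have hall (k : ℕ) : P (k + 1) := Nat.rec hP h k
    obtain ⟨v, -, hv⟩ := hall (cs.length w)
    lia
  obtain ⟨v, hw, hlen⟩ := hkP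
  have hnext : cs.length v < cs.length (cs.simple (altLetter t s (k + 1)) * v) := by
    by_contra! hle
    have := cs.length_simple_mul v (altLetter t s (k + 1))
    refine hk ⟨cs.simple (altLetter t s (k + 1)) * v, ?_, by lia⟩
    rw [wordProd_altWord_succ, mul_assoc, cs.simple_mul_simple_cancel_left, ← hw]
  have hlast : cs.length v < cs.length (cs.simple (altLetter t s k) * v) := by
    by_contra! hle
    have := cs.length_simple_mul v (altLetter t s k)
    have h := length_wordProd_mul_le cs (altWord t s k) (cs.simple (altLetter t s k) * v)
    rw [← mul_assoc, ← wordProd_altWord_succ, ← hw, length_altWord] at h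
    lia
  refine ⟨k + 1, v, k.succ_pos, hw, hlen, ?_⟩
  rw [altLetter] at hnext
  obtain ⟨e, e'⟩ | ⟨e, e'⟩ := altLetter_eq_or t s k
  · exact ⟨e' ▸ hnext, e ▸ hlast⟩
  · exact ⟨e ▸ hlast, e' ▸ hnext⟩

theorem geomRep_inv_simpleRoot_nonneg {w : W} {s : B}
    (hs : cs.length w < cs.length (cs.simple s * w)) :
    0 ≤ geomRep cs w⁻¹ (simpleRoot s) := by
  induction hn : cs.length w using Nat.strong_induction_on generalizing w s with
  | _ n ih =>
  subst hn
  obtain rfl | hw1 := eq_or_ne w 1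
  · simpa using (simpleRoot_pos s).le
  obtain ⟨t, ht⟩ := cs.exists_leftDescent_of_ne_one hw1
  have hst : s ≠ t := by
    rintro rfl
    exact hs.asymm ht
  obtain ⟨k, v, hk, hw, hlen, hvs, hvt⟩ := exists_eq_wordProd_altWord_mul s ht
  have hkM : M s t = 0 ∨ k + 1 ≤ M s t :=
    or_iff_not_imp_left.mpr fun h0 ↦ lt_of_eq_wordProd_altWord_mul hw hlen hs h0
  have hrot := geomRep_inv_wordProd_altWord_apply cs s t k 0
  rw [zero_add, zero_add, dihedralCoeff_zero, dihedralCoeff_one, zero_smul, zero_add, one_smul]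
    at hrot
  rw [hw, mul_inv_rev, geomRep_mul_apply, hrot, map_add, map_smul, map_smul]
  have hs' := ih _ (by lia) hvs rfl
  have ht' := ih _ (by lia) hvt rfl
  have hc := dihedralCoeff_nonneg hst hkM
  have hc' : 0 ≤ dihedralCoeff M s t k := dihedralCoeff_nonneg hst (by lia)
  obtain ⟨e, e'⟩ | ⟨e, e'⟩ := altLetter_eq_or t s k <;> rw [e, e'] <;>
    exact add_nonneg (smul_nonneg hc' ‹_›) (smul_nonneg hc ‹_›)

end GeometricRepresentation

section Roots

variable {B : Type*} {M : CoxeterMatrix B} {W : Type*} [Group W] (cs : CoxeterSystem M W)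

/-- The roots of a Coxeter system: the orbit of the simple roots. -/
def IsRoot (β : B →₀ ℝ) : Prop := ∃ w s, β = geomRep cs w (simpleRoot s)

lemma isRoot_simpleRoot (s : B) : IsRoot cs (simpleRoot s) := ⟨1, s, by simp⟩

variable {cs}

lemma IsRoot.geomRep {β : B →₀ ℝ} (h : IsRoot cs β) (u : W) : IsRoot cs (geomRep cs u β) := by
  obtain ⟨w, s, rfl⟩ := h
  exact ⟨u * w, s, (geomRep_mul_apply cs u w _).symm⟩

lemma IsRoot.neg {β : B →₀ ℝ} (h : IsRoot cs β) : IsRoot cs (-β) := by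
  obtain ⟨w, s, rfl⟩ := h
  exact ⟨w * cs.simple s, s, by rw [geomRep_mul_apply, geomRep_simple_simpleRoot, map_neg]⟩

lemma IsRoot.ne_zero {β : B →₀ ℝ} (h : IsRoot cs β) : β ≠ 0 := by
  obtain ⟨w, s, rfl⟩ := h
  intro h0
  rw [← map_zero (ArtinTits.geomRep cs w)] at h0
  exact (simpleRoot_pos s).ne' ((ArtinTits.geomRep cs).apply_bijective w |>.injective h0)

lemma geomRep_inv_simpleRoot_pos {w : W} {s : B}
    (hs : cs.length w < cs.length (cs.simple s * w)) : 0 < geomRep cs w⁻¹ (simpleRoot s) :=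
  (geomRep_inv_simpleRoot_nonneg hs).lt_of_ne ((isRoot_simpleRoot cs s).geomRep w⁻¹).ne_zero.symm

lemma geomRep_inv_simpleRoot_neg {w : W} {s : B}
    (hs : cs.length (cs.simple s * w) < cs.length w) : geomRep cs w⁻¹ (simpleRoot s) < 0 := by
  have h := geomRep_inv_simpleRoot_pos (cs := cs) (w := cs.simple s * w) (s := s)
    (by rwa [cs.simple_mul_simple_cancel_left])
  rwa [mul_inv_rev, cs.inv_simple, geomRep_mul_apply, geomRep_simple_simpleRoot, map_neg,
    neg_pos] at h

lemma length_lt_length_simple_mul_iff (cs : CoxeterSystem M W) (w : W) (s : B) :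
    cs.length w < cs.length (cs.simple s * w) ↔ 0 < geomRep cs w⁻¹ (simpleRoot s) := by
  refine ⟨geomRep_inv_simpleRoot_pos, fun h ↦ ?_⟩
  by_contra! hle
  exact h.asymm (geomRep_inv_simpleRoot_neg (hle.lt_of_ne (cs.length_simple_mul_ne w s)))

lemma length_simple_mul_lt_length_iff (cs : CoxeterSystem M W) (w : W) (s : B) :
    cs.length (cs.simple s * w) < cs.length w ↔ geomRep cs w⁻¹ (simpleRoot s) < 0 := by
  refine ⟨geomRep_inv_simpleRoot_neg, fun h ↦ ?_⟩
  by_contra! hle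
  exact h.asymm (geomRep_inv_simpleRoot_pos (hle.lt_of_ne (cs.length_simple_mul_ne w s).symm))

lemma length_inv_simple_mul (cs : CoxeterSystem M W) (w : W) (s : B) :
    cs.length (cs.simple s * w⁻¹) = cs.length (w * cs.simple s) := by
  rw [← cs.length_inv, mul_inv_rev, inv_inv, cs.inv_simple]

lemma length_lt_length_mul_simple_iff (cs : CoxeterSystem M W) (w : W) (s : B) :
    cs.length w < cs.length (w * cs.simple s) ↔ 0 < geomRep cs w (simpleRoot s) := by
  rw [← length_inv_simple_mul, ← cs.length_inv w, length_lt_length_simple_mul_iff, inv_inv]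

lemma length_mul_simple_lt_length_iff (cs : CoxeterSystem M W) (w : W) (s : B) :
    cs.length (w * cs.simple s) < cs.length w ↔ geomRep cs w (simpleRoot s) < 0 := by
  rw [← length_inv_simple_mul, ← cs.length_inv w, length_simple_mul_lt_length_iff, inv_inv]

lemma IsRoot.pos_or_neg {β : B →₀ ℝ} (h : IsRoot cs β) : 0 < β ∨ β < 0 := by
  obtain ⟨w, s, rfl⟩ := h
  rw [← length_lt_length_mul_simple_iff, ← length_mul_simple_lt_length_iff]
  exact (cs.length_mul_simple_ne w s).symm.lt_or_gt

lemma IsRoot.exists_eq_smul_simpleRoot {γ : B →₀ ℝ} (h : IsRoot cs γ) {s : B} (hpos : 0 < γ)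
    (hneg : ArtinTits.geomRep cs (cs.simple s) γ < 0) :
    ∃ c : ℝ, 0 < c ∧ γ = c • simpleRoot s := by
  have hzero (b : B) (hb : b ≠ s) : γ b = 0 := by
    have h' := hneg.le b
    simp only [geomRep_simple_apply, Finsupp.sub_apply, Finsupp.smul_apply,
      simpleRoot_apply_of_ne hb, smul_zero, sub_zero, Finsupp.zero_apply] at h'
    exact h'.antisymm (hpos.le b)
  have heq : γ = γ s • simpleRoot s := by
    ext b
    obtain rfl | hb := eq_or_ne b s
    · simp [simpleRoot]
    · simp [hzero b hb, simpleRoot_apply_of_ne hb]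
  refine ⟨γ s, (hpos.le s).lt_of_ne fun h0 ↦ h.ne_zero ?_, heq⟩
  rw [heq, ← h0, Finsupp.zero_apply, zero_smul]

end Roots

section LengthAdditive

variable {B : Type*} {M : CoxeterMatrix B} {W : Type*} [Group W] (cs : CoxeterSystem M W)

/-- The product `u * v` is length-additive, i.e. concatenating reduced words of `u` and `v` gives
a reduced word. -/
def LengthAdditive (u v : W) : Prop :=
  cs.length (u * v) = cs.length u + cs.length v

variable {cs}

lemma LengthAdditive.geomRep_inv_neg {u v : W} (h : LengthAdditive cs u v) {β : B →₀ ℝ}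
    (hβ : IsRoot cs β) (hpos : 0 < β) (hneg : geomRep cs u⁻¹ β < 0) :
    geomRep cs (u * v)⁻¹ β < 0 := by
  induction hn : cs.length v generalizing u v with
  | zero =>
    rw [cs.length_eq_zero_iff] at hn
    rwa [hn, mul_one]
  | succ n ih =>
    have hv1 : v ≠ 1 := by
      rintro rfl
      simp at hn
    obtain ⟨s, hs⟩ := cs.exists_leftDescent_of_ne_one hv1
    rw [cs.isLeftDescent_iff] at hs
    have e : (u * cs.simple s) * (cs.simple s * v) = u * v := by simp [mul_assoc]
    have hle := cs.length_mul_le (u * cs.simple s) (cs.simple s * v)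
    have hle' := cs.length_mul_le u (cs.simple s)
    rw [cs.length_simple] at hle'
    rw [e, h] at hle
    rw [← e]
    refine ih (by rw [LengthAdditive, e, h]; lia) ?_ (by lia)
    rw [mul_inv_rev, cs.inv_simple, geomRep_mul_apply]
    refine ((hβ.geomRep u⁻¹).geomRep (cs.simple s)).pos_or_neg.resolve_left fun hpos' ↦ ?_
    obtain ⟨c, hc, hβc⟩ := (hβ.geomRep u⁻¹).neg.exists_eq_smul_simpleRoot (s := s)
      (neg_pos.mpr hneg) (by rwa [map_neg, neg_lt_zero])
    have hus := (length_lt_length_mul_simple_iff cs u s).mp (by lia)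
    have hβ' : -β = c • geomRep cs u (simpleRoot s) := by
      rw [← map_smul, ← hβc, map_neg, (geomRep cs).self_inv_apply]
    exact (neg_lt_zero.mpr hpos).not_ge (hβ' ▸ smul_nonneg hc.le hus.le)

lemma LengthAdditive.of_geomRep_inv_neg {u v : W}
    (h : ∀ β, IsRoot cs β → 0 < β → geomRep cs u⁻¹ β < 0 → geomRep cs (u * v)⁻¹ β < 0) :
    LengthAdditive cs u v := by
  induction hn : cs.length v generalizing u v with
  | zero =>
    rw [cs.length_eq_zero_iff] at hn
    simp [LengthAdditive, hn]
  | succ n ih =>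
    have hv1 : v ≠ 1 := by
      rintro rfl
      simp at hn
    obtain ⟨s, hs⟩ := cs.exists_leftDescent_of_ne_one hv1
    have hneg := (length_simple_mul_lt_length_iff cs v s).mp hs
    rw [cs.isLeftDescent_iff] at hs
    have e : (u * cs.simple s) * (cs.simple s * v) = u * v := by simp [mul_assoc]
    have hus : cs.length (u * cs.simple s) = cs.length u + 1 := by
      refine (cs.length_mul_simple u s).resolve_right fun hlen ↦ ?_
      have hdesc := (length_mul_simple_lt_length_iff cs u s).mp (by lia)
      have h' := h (-geomRep cs u (simpleRoot s)) ((isRoot_simpleRoot cs s).geomRep u).neg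
        (neg_pos.mpr hdesc)
        (by rw [map_neg, (geomRep cs).inv_self_apply, neg_lt_zero]; exact simpleRoot_pos s)
      rw [mul_inv_rev, geomRep_mul_apply, map_neg, (geomRep cs).inv_self_apply, map_neg,
        neg_lt_zero] at h'
      exact h'.asymm hneg
    have hadd : LengthAdditive cs (u * cs.simple s) (cs.simple s * v) := by
      refine ih (fun β hβ hpos hneg' ↦ ?_) (by lia)
      rw [mul_inv_rev, cs.inv_simple, geomRep_mul_apply] at hneg'
      rw [e]
      obtain hpos' | hneg'' := (hβ.geomRep u⁻¹).pos_or_neg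
      · obtain ⟨c, hc, hβc⟩ := (hβ.geomRep u⁻¹).exists_eq_smul_simpleRoot hpos' hneg'
        refine ((hβ.geomRep (u * v)⁻¹).pos_or_neg).resolve_left fun hpos'' ↦ ?_
        rw [mul_inv_rev, geomRep_mul_apply, hβc, map_smul] at hpos''
        exact hpos''.not_ge (smul_nonpos_of_nonneg_of_nonpos hc.le hneg.le)
      · exact h β hβ hpos hneg''
    rw [LengthAdditive, e] at hadd
    rw [LengthAdditive]
    lia

variable {w₀ : W}

lemma length_simple_mul_longest_lt (hw₀ : ∀ w : W, cs.length w ≤ cs.length w₀) (s : B) :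
    cs.length (cs.simple s * w₀) < cs.length w₀ :=
  (hw₀ _).lt_of_ne (cs.length_simple_mul_ne w₀ s)

lemma geomRep_longest_inv_neg (hw₀ : ∀ w : W, cs.length w ≤ cs.length w₀) {β : B →₀ ℝ}
    (hβ : IsRoot cs β) (hpos : 0 < β) : geomRep cs w₀⁻¹ β < 0 := by
  refine (hβ.geomRep w₀⁻¹).pos_or_neg.resolve_left fun h ↦ h.not_ge ?_
  rw [linearMap_eq_sum_simpleRoot (geomRep cs w₀⁻¹) β]
  exact Finset.sum_nonpos fun s _ ↦ smul_nonpos_of_nonneg_of_nonpos (hpos.le s)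
    ((length_simple_mul_lt_length_iff cs w₀ s).mp (length_simple_mul_longest_lt hw₀ s)).le

lemma lengthAdditive_inv_mul_longest (hw₀ : ∀ w : W, cs.length w ≤ cs.length w₀) (u : W) :
    LengthAdditive cs u (u⁻¹ * w₀) := by
  refine .of_geomRep_inv_neg fun β hβ hpos _ ↦ ?_
  rw [mul_inv_cancel_left]
  exact geomRep_longest_inv_neg hw₀ hβ hpos

lemma longest_mul_self (hw₀ : ∀ w : W, cs.length w ≤ cs.length w₀) : w₀ * w₀ = 1 := by
  have h := lengthAdditive_inv_mul_longest hw₀ w₀⁻¹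
  rw [LengthAdditive, mul_inv_cancel_left, cs.length_inv, inv_inv] at h
  rw [← cs.length_eq_zero_iff]
  lia

end LengthAdditive

/-! ### The weak order -/

section WeakOrder

variable {B : Type*} {M : CoxeterMatrix B} {W : Type*} [Group W] (cs : CoxeterSystem M W)

/-- The (right) weak order on a Coxeter group: `u` is a prefix of a reduced expression of `w`. -/
def WeakLE (u w : W) : Prop := LengthAdditive cs u (u⁻¹ * w)

variable {cs}

lemma weakLE_iff {u w : W} :
    WeakLE cs u w ↔ cs.length w = cs.length u + cs.length (u⁻¹ * w) := by
  rw [WeakLE, LengthAdditive, mul_inv_cancel_left]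

lemma WeakLE.refl (u : W) : WeakLE cs u u := by simp [weakLE_iff]

lemma one_weakLE (u : W) : WeakLE cs 1 u := by simp [weakLE_iff]

lemma WeakLE.trans {u v w : W} (h : WeakLE cs u v) (h' : WeakLE cs v w) : WeakLE cs u w := by
  rw [weakLE_iff] at *
  have h₁ := cs.length_mul_le (u⁻¹ * v) (v⁻¹ * w)
  have h₂ := cs.length_mul_le u (u⁻¹ * w)
  rw [mul_assoc, mul_inv_cancel_left] at h₁
  rw [mul_inv_cancel_left] at h₂
  lia

lemma WeakLE.antisymm {u v : W} (h : WeakLE cs u v) (h' : WeakLE cs v u) : u = v := by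
  rw [weakLE_iff] at *
  exact inv_mul_eq_one.mp (cs.length_eq_zero_iff.mp (by lia))

lemma WeakLE.lengthAdditive_inv_mul {a b c : W} (h : WeakLE cs a b) (h' : WeakLE cs b c) :
    LengthAdditive cs (a⁻¹ * b) (b⁻¹ * c) := by
  have h'' := h.trans h'
  rw [weakLE_iff] at *
  rw [LengthAdditive, mul_assoc, mul_inv_cancel_left]
  lia

lemma LengthAdditive.weakLE_mul {u v : W} (h : LengthAdditive cs u v) : WeakLE cs u (u * v) := by
  rwa [WeakLE, inv_mul_cancel_left]

lemma LengthAdditive.of_weakLE {u a b : W} (h : LengthAdditive cs u b) (hab : WeakLE cs a b) :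
    LengthAdditive cs u a := by
  have h₁ := cs.length_mul_le (u * a) (a⁻¹ * b)
  have h₂ := cs.length_mul_le u a
  rw [mul_assoc, mul_inv_cancel_left] at h₁
  simp only [LengthAdditive, weakLE_iff] at *
  lia

lemma mul_weakLE_mul_iff {u a b : W} (ha : LengthAdditive cs u a) (hb : LengthAdditive cs u b) :
    WeakLE cs (u * a) (u * b) ↔ WeakLE cs a b := by
  simp only [LengthAdditive, weakLE_iff, mul_inv_rev, mul_assoc, inv_mul_cancel_left] at *
  lia

lemma LengthAdditive.mul_weakLE_mul {u a b : W} (h : LengthAdditive cs u b) (hab : WeakLE cs a b) :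
    WeakLE cs (u * a) (u * b) :=
  (mul_weakLE_mul_iff (h.of_weakLE hab) h).mpr hab

lemma WeakLE.inv_mul_iff {u a b : W} (ha : WeakLE cs u a) (hb : WeakLE cs u b) :
    WeakLE cs (u⁻¹ * a) (u⁻¹ * b) ↔ WeakLE cs a b := by
  rw [← mul_weakLE_mul_iff ha hb, mul_inv_cancel_left, mul_inv_cancel_left]

lemma simple_weakLE_iff {s : B} {w : W} :
    WeakLE cs (cs.simple s) w ↔ cs.length (cs.simple s * w) < cs.length w := by
  rw [weakLE_iff, cs.length_simple, cs.inv_simple]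
  have := cs.length_simple_mul w s
  lia

lemma exists_simple_weakLE {w : W} (h : w ≠ 1) : ∃ s, WeakLE cs (cs.simple s) w :=
  (cs.exists_leftDescent_of_ne_one h).imp fun _ ↦ simple_weakLE_iff.mpr

end WeakOrder

section Dihedral

variable {B : Type*} {M : CoxeterMatrix B} {W : Type*} [Group W] {cs : CoxeterSystem M W}

lemma length_inv_wordProd_altWord_mul {s t : B} (hst : s ≠ t) {x : W}
    (hs : WeakLE cs (cs.simple s) x) (ht : WeakLE cs (cs.simple t) x) {k : ℕ}
    (hk : M s t = 0 ∨ k ≤ M s t) :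
    cs.length ((cs.wordProd (altWord s t k))⁻¹ * x) + k = cs.length x := by
  induction k with
  | zero => simp [altWord]
  | succ k ih =>
    specialize ih (by lia)
    set y := (cs.wordProd (altWord s t k))⁻¹ * x with hy
    have hneg : geomRep cs y⁻¹ (simpleRoot (altLetter s t k)) < 0 := by
      refine (((isRoot_simpleRoot cs _).geomRep _).pos_or_neg).resolve_left fun hpos ↦ ?_
      rw [hy, mul_inv_rev, inv_inv, geomRep_mul_apply, geomRep_wordProd_altWord_altLetter, map_add,
        map_smul, map_smul] at hpos
      have hs' := (length_simple_mul_lt_length_iff cs x s).mp (simple_weakLE_iff.mp hs)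
      have ht' := (length_simple_mul_lt_length_iff cs x t).mp (simple_weakLE_iff.mp ht)
      have hc : 0 ≤ dihedralCoeff M s t k := dihedralCoeff_nonneg hst (by lia)
      exact hpos.not_ge (add_nonpos (smul_nonpos_of_nonneg_of_nonpos hc ht'.le)
        (smul_nonpos_of_nonneg_of_nonpos (dihedralCoeff_nonneg hst hk) hs'.le))
    have hdesc := (length_simple_mul_lt_length_iff cs y _).mpr hneg
    have := cs.length_simple_mul y (altLetter s t k)
    rw [wordProd_altWord_succ, mul_inv_rev, cs.inv_simple, mul_assoc, ← hy]
    lia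

lemma matrix_ne_zero_of_weakLE {s t : B} (hst : s ≠ t) {x : W} (hs : WeakLE cs (cs.simple s) x)
    (ht : WeakLE cs (cs.simple t) x) : M s t ≠ 0 := by
  intro h
  have := length_inv_wordProd_altWord_mul hst hs ht (k := cs.length x + 1) (.inl h)
  lia

variable (cs) in
/-- The longest element of the dihedral parabolic subgroup generated by `s` and `t`. -/
def dihedralLongest (s t : B) : W := cs.wordProd (altWord s t (M s t))

lemma dihedralLongest_comm (s t : B) : dihedralLongest cs s t = dihedralLongest cs t s := by
  rw [dihedralLongest, dihedralLongest, wordProd_altWord_comm, M.symmetric t s]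

lemma length_dihedralLongest_le (s t : B) : cs.length (dihedralLongest cs s t) ≤ M s t :=
  (cs.length_wordProd_le _).trans_eq (length_altWord s t _)

lemma dihedralLongest_weakLE {s t : B} (hst : s ≠ t) {x : W} (hs : WeakLE cs (cs.simple s) x)
    (ht : WeakLE cs (cs.simple t) x) : WeakLE cs (dihedralLongest cs s t) x := by
  have h := length_inv_wordProd_altWord_mul hst hs ht (.inr le_rfl)
  have hle := cs.length_mul_le (dihedralLongest cs s t) ((dihedralLongest cs s t)⁻¹ * x)
  have := length_dihedralLongest_le (cs := cs) s t
  rw [mul_inv_cancel_left] at hle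
  rw [weakLE_iff]
  rw [← dihedralLongest] at h
  lia

lemma length_dihedralLongest {s t : B} (hst : s ≠ t) {x : W} (hs : WeakLE cs (cs.simple s) x)
    (ht : WeakLE cs (cs.simple t) x) : cs.length (dihedralLongest cs s t) = M s t := by
  have h := length_inv_wordProd_altWord_mul hst hs ht (.inr le_rfl)
  rw [← dihedralLongest] at h
  have := weakLE_iff.mp (dihedralLongest_weakLE hst hs ht)
  lia

lemma simple_weakLE_dihedralLongest {s t : B} (h0 : M s t ≠ 0)
    (h : cs.length (dihedralLongest cs s t) = M s t) :
    WeakLE cs (cs.simple s) (dihedralLongest cs s t) := by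
  obtain ⟨m, hm⟩ := Nat.exists_eq_succ_of_ne_zero h0
  have hle := cs.length_wordProd_le (altWord t s m)
  rw [simple_weakLE_iff, h, dihedralLongest, hm, altWord, cs.wordProd_cons,
    cs.simple_mul_simple_cancel_left]
  rw [length_altWord] at hle
  lia

end Dihedral

section WeakSup

variable {B : Type*} {M : CoxeterMatrix B} {W : Type*} [Group W] (cs : CoxeterSystem M W)

/-- `j` is a least upper bound of `u` and `v` in the weak order. -/
def IsWeakSup (u v j : W) : Prop :=
  WeakLE cs u j ∧ WeakLE cs v j ∧ ∀ x, WeakLE cs u x → WeakLE cs v x → WeakLE cs j x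

variable {cs}

lemma exists_isWeakSup_of_inv_simple_mul {s : B} {u v w j : W} (hsu : WeakLE cs (cs.simple s) u)
    (hsv : WeakLE cs (cs.simple s) v) (huw : WeakLE cs u w)
    (hjw : WeakLE cs j ((cs.simple s)⁻¹ * w))
    (hj : IsWeakSup cs ((cs.simple s)⁻¹ * u) ((cs.simple s)⁻¹ * v) j) :
    ∃ j, WeakLE cs j w ∧ IsWeakSup cs u v j := by
  have hsw := hsu.trans huw
  have hsj : LengthAdditive cs (cs.simple s) j := LengthAdditive.of_weakLE hsw hjw
  refine ⟨cs.simple s * j, ?_, ?_, ?_, fun x hux hvx ↦ ?_⟩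
  · simpa only [mul_inv_cancel_left] using LengthAdditive.mul_weakLE_mul hsw hjw
  · simpa only [mul_inv_cancel_left] using hsj.mul_weakLE_mul hj.1
  · simpa only [mul_inv_cancel_left] using hsj.mul_weakLE_mul hj.2.1
  · have hsx := hsu.trans hux
    simpa only [mul_inv_cancel_left] using LengthAdditive.mul_weakLE_mul hsx
      (hj.2.2 _ ((hsu.inv_mul_iff hsx).mpr hux) ((hsv.inv_mul_iff hsx).mpr hvx))

lemma exists_isWeakSup_of_weakLE {u v w : W} (hu : WeakLE cs u w) (hv : WeakLE cs v w) :
    ∃ j, WeakLE cs j w ∧ IsWeakSup cs u v j := by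
  induction hn : cs.length w using Nat.strong_induction_on generalizing w u v with
  | _ n ih =>
  subst hn
  have hsame (s : B) (u v : W) (hsu : WeakLE cs (cs.simple s) u) (hsv : WeakLE cs (cs.simple s) v)
      (huw : WeakLE cs u w) (hvw : WeakLE cs v w) : ∃ j, WeakLE cs j w ∧ IsWeakSup cs u v j := by
    have hsw := hsu.trans huw
    have hlen := weakLE_iff.mp hsw
    rw [cs.length_simple] at hlen
    obtain ⟨j, hjw, hj⟩ := ih (cs.length ((cs.simple s)⁻¹ * w)) (by lia)
      ((hsu.inv_mul_iff hsw).mpr huw) ((hsv.inv_mul_iff hsw).mpr hvw) rfl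
    exact exists_isWeakSup_of_inv_simple_mul hsu hsv huw hjw hj
  obtain rfl | hu1 := eq_or_ne u 1
  · exact ⟨v, hv, one_weakLE v, .refl v, fun x _ h ↦ h⟩
  obtain rfl | hv1 := eq_or_ne v 1
  · exact ⟨u, hu, .refl u, one_weakLE u, fun x h _ ↦ h⟩
  obtain ⟨s, hs⟩ := exists_simple_weakLE (cs := cs) hu1
  obtain ⟨t, ht⟩ := exists_simple_weakLE (cs := cs) hv1
  obtain rfl | hst := eq_or_ne s t
  · exact hsame s u v hs ht hu hv
  have h0 := matrix_ne_zero_of_weakLE hst (hs.trans hu) (ht.trans hv)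
  have hmw := dihedralLongest_weakLE hst (hs.trans hu) (ht.trans hv)
  have hlen := length_dihedralLongest hst (hs.trans hu) (ht.trans hv)
  have hsm := simple_weakLE_dihedralLongest h0 hlen
  have htm : WeakLE cs (cs.simple t) (dihedralLongest cs s t) := by
    rw [dihedralLongest_comm, M.symmetric s t] at hlen
    rw [dihedralLongest_comm]
    exact simple_weakLE_dihedralLongest (M.symmetric s t ▸ h0) hlen
  obtain ⟨j₁, hj₁w, hu₁, hm₁, hj₁⟩ := hsame s u _ hs hsm hu hmw
  obtain ⟨j₂, hj₂w, hv₂, hm₂, hj₂⟩ := hsame t v _ ht htm hv hmw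
  obtain ⟨j, hjw, h₁, h₂, hj⟩ := hsame s j₁ j₂ (hsm.trans hm₁) (hsm.trans hm₂) hj₁w hj₂w
  refine ⟨j, hjw, hu₁.trans h₁, hv₂.trans h₂, fun x hux hvx ↦ ?_⟩
  have hmx := dihedralLongest_weakLE hst (hs.trans hux) (ht.trans hvx)
  exact hj x (hj₁ x hux hmx) (hj₂ x hvx hmx)

variable [Finite W]

lemma exists_forall_length_le (cs : CoxeterSystem M W) :
    ∃ w₀ : W, ∀ w, cs.length w ≤ cs.length w₀ :=
  Finite.exists_max cs.length

lemma exists_isWeakSup (cs : CoxeterSystem M W) (u v : W) : ∃ j, IsWeakSup cs u v j := by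
  obtain ⟨w₀, hw₀⟩ := exists_forall_length_le cs
  obtain ⟨j, -, hj⟩ := exists_isWeakSup_of_weakLE (lengthAdditive_inv_mul_longest hw₀ u)
    (lengthAdditive_inv_mul_longest hw₀ v)
  exact ⟨j, hj⟩

lemma length_dihedralLongest_of_finite (cs : CoxeterSystem M W) {s t : B} (hst : s ≠ t) :
    cs.length (dihedralLongest cs s t) = M s t := by
  obtain ⟨w₀, hw₀⟩ := exists_forall_length_le cs
  exact length_dihedralLongest hst (lengthAdditive_inv_mul_longest hw₀ (cs.simple s))
    (lengthAdditive_inv_mul_longest hw₀ (cs.simple t))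

variable (cs) in
/-- The join of two elements in the weak order. -/
noncomputable def weakSup (u v : W) : W := (exists_isWeakSup cs u v).choose

lemma isWeakSup_weakSup (u v : W) : IsWeakSup cs u v (weakSup cs u v) :=
  (exists_isWeakSup cs u v).choose_spec

lemma weakLE_weakSup_left (u v : W) : WeakLE cs u (weakSup cs u v) := (isWeakSup_weakSup u v).1

lemma weakLE_weakSup_right (u v : W) : WeakLE cs v (weakSup cs u v) := (isWeakSup_weakSup u v).2.1

lemma weakSup_weakLE {u v x : W} (h : WeakLE cs u x) (h' : WeakLE cs v x) :
    WeakLE cs (weakSup cs u v) x :=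
  (isWeakSup_weakSup u v).2.2 x h h'

lemma weakSup_comm (u v : W) : weakSup cs u v = weakSup cs v u :=
  (weakSup_weakLE (weakLE_weakSup_right v u) (weakLE_weakSup_left v u)).antisymm
    (weakSup_weakLE (weakLE_weakSup_right u v) (weakLE_weakSup_left u v))

lemma weakSup_eq_right {u v : W} (h : WeakLE cs u v) : weakSup cs u v = v :=
  (weakSup_weakLE h (.refl v)).antisymm (weakLE_weakSup_right u v)

lemma weakSup_mul_mul {u a b : W} (ha : LengthAdditive cs u a) (hb : LengthAdditive cs u b) :
    weakSup cs (u * a) (u * b) = u * weakSup cs a b := by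
  set j := weakSup cs (u * a) (u * b)
  have hle : u * (u⁻¹ * j) = j := mul_inv_cancel_left u j
  have huj : WeakLE cs u j := ha.weakLE_mul.trans (weakLE_weakSup_left _ _)
  have haj : WeakLE cs a (u⁻¹ * j) :=
    (mul_weakLE_mul_iff ha huj).mp (hle.symm ▸ weakLE_weakSup_left _ _)
  have hbj : WeakLE cs b (u⁻¹ * j) :=
    (mul_weakLE_mul_iff hb huj).mp (hle.symm ▸ weakLE_weakSup_right _ _)
  have hsup : LengthAdditive cs u (weakSup cs a b) :=
    LengthAdditive.of_weakLE huj (weakSup_weakLE haj hbj)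
  refine (weakSup_weakLE (hsup.mul_weakLE_mul (weakLE_weakSup_left a b))
    (hsup.mul_weakLE_mul (weakLE_weakSup_right a b))).antisymm ?_
  simpa only [hle] using LengthAdditive.mul_weakLE_mul huj (weakSup_weakLE haj hbj)

variable (cs) in
/-- The right complement of `u` in `v`: the element `x` such that `u * x` is the join of `u` and
`v`. -/
noncomputable def rightCompl (u v : W) : W := u⁻¹ * weakSup cs u v

lemma mul_rightCompl (u v : W) : u * rightCompl cs u v = weakSup cs u v :=
  mul_inv_cancel_left _ _

lemma lengthAdditive_rightCompl (u v : W) : LengthAdditive cs u (rightCompl cs u v) :=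
  weakLE_weakSup_left u v

lemma rightCompl_self (u : W) : rightCompl cs u u = 1 := by
  rw [rightCompl, weakSup_eq_right (.refl u), inv_mul_cancel]

lemma rightCompl_one (u : W) : rightCompl cs u 1 = 1 := by
  rw [rightCompl, weakSup_comm, weakSup_eq_right (one_weakLE u), inv_mul_cancel]

lemma one_rightCompl (u : W) : rightCompl cs 1 u = u := by
  rw [rightCompl, weakSup_eq_right (one_weakLE u), inv_one, one_mul]

lemma weakSup_mul_left {u v : W} (h : LengthAdditive cs u v) (w : W) :
    weakSup cs (u * v) w = u * weakSup cs v (rightCompl cs u w) := by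
  rw [← weakSup_mul_mul h (lengthAdditive_rightCompl u w), mul_rightCompl]
  exact (weakSup_weakLE (weakLE_weakSup_left _ _)
      ((weakLE_weakSup_right u w).trans (weakLE_weakSup_right _ _))).antisymm
    (weakSup_weakLE (weakLE_weakSup_left _ _)
      (weakSup_weakLE (h.weakLE_mul.trans (weakLE_weakSup_left _ _)) (weakLE_weakSup_right _ _)))

lemma rightCompl_mul_left {u v : W} (h : LengthAdditive cs u v) (w : W) :
    rightCompl cs (u * v) w = rightCompl cs v (rightCompl cs u w) := by
  rw [rightCompl, weakSup_mul_left h, mul_inv_rev, mul_assoc, inv_mul_cancel_left]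
  rfl

lemma rightCompl_mul_right {u v : W} (h : LengthAdditive cs u v) (w : W) :
    rightCompl cs w (u * v) = rightCompl cs w u * rightCompl cs (rightCompl cs u w) v := by
  rw [rightCompl, weakSup_comm, weakSup_mul_left h, weakSup_comm v,
    ← mul_rightCompl (rightCompl cs u w), ← mul_assoc u, mul_rightCompl, weakSup_comm u,
    ← mul_assoc]
  rfl

lemma lengthAdditive_rightCompl_rightCompl {u v : W} (h : LengthAdditive cs u v) (w : W) :
    LengthAdditive cs (rightCompl cs w u) (rightCompl cs (rightCompl cs u w) v) := by
  have e : rightCompl cs (rightCompl cs u w) v =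
      (weakSup cs w u)⁻¹ * weakSup cs w (u * v) := by
    rw [← mul_rightCompl w (u * v), rightCompl_mul_right h, ← mul_assoc w, mul_rightCompl,
      inv_mul_cancel_left]
  rw [e]
  exact (weakLE_weakSup_left w u).lengthAdditive_inv_mul (weakSup_weakLE (weakLE_weakSup_left _ _)
    (h.weakLE_mul.trans (weakLE_weakSup_right _ _)))

end WeakSup

/-! ### The Artin–Tits monoid -/

section Words

variable {B : Type*} (M : CoxeterMatrix B)

/-- The element of the Artin–Tits monoid represented by a word. -/
def ofWord (l : List B) : ArtinTitsMonoid M := (braidCon M).mk' (FreeMonoid.ofList l)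

lemma ofWord_nil : ofWord M [] = 1 := rfl

lemma ofWord_append (l l' : List B) : ofWord M (l ++ l') = ofWord M l * ofWord M l' := rfl

lemma ofWord_cons (s : B) (l : List B) : ofWord M (s :: l) = ofWord M [s] * ofWord M l := rfl

lemma ofWord_surjective : Function.Surjective (ofWord M) := fun b ↦ by
  obtain ⟨l, hl⟩ := (braidCon M).mk'_surjective b
  exact ⟨FreeMonoid.toList l, hl⟩

variable {M}

lemma ofWord_altWord_comm {s t : B} (hst : s ≠ t) (h0 : M s t ≠ 0) :
    ofWord M (altWord s t (M s t)) = ofWord M (altWord t s (M s t)) :=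
  (braidCon M).eq.mpr (ConGen.Rel.of _ _ ⟨s, t, hst, h0, rfl, rfl⟩)

@[elab_as_elim]
lemma monoid_induction {p : ArtinTitsMonoid M → Prop} (b : ArtinTitsMonoid M) (one : p 1)
    (simple_mul : ∀ s b, p b → p (ofWord M [s] * b)) : p b := by
  obtain ⟨l, rfl⟩ := ofWord_surjective M b
  induction l with
  | nil => exact one
  | cons s l ih => exact simple_mul s _ ih

/-- The condition for a map on generators to extend to the Artin–Tits monoid. -/
def PreservesBraidRelations {G : Type*} [Monoid G] (M : CoxeterMatrix B) (f : B → G) : Prop :=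
  ∀ s t, s ≠ t → M s t ≠ 0 →
    ((altWord s t (M s t)).map f).prod = ((altWord t s (M s t)).map f).prod

/-- The universal property of the Artin–Tits monoid. -/
def monoidLift {G : Type*} [Monoid G] (f : B → G) (hf : PreservesBraidRelations M f) :
    ArtinTitsMonoid M →* G :=
  (braidCon M).lift (FreeMonoid.lift f) <| Con.conGen_le.mpr <| by
    rintro _ _ ⟨s, t, hst, h0, rfl, rfl⟩
    rw [Con.ker_rel, FreeMonoid.lift_apply, FreeMonoid.lift_apply]
    exact hf s t hst h0

lemma monoidLift_ofWord {G : Type*} [Monoid G] (f : B → G) (hf : PreservesBraidRelations M f)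
    (l : List B) : monoidLift f hf (ofWord M l) = (l.map f).prod :=
  ((braidCon M).lift_mk' _ _).trans (FreeMonoid.lift_apply f _)

end Words

section Degree

variable {B : Type*} {M : CoxeterMatrix B}

lemma preservesBraidRelations_const (M : CoxeterMatrix B) {G : Type*} [Monoid G] (g : G) :
    PreservesBraidRelations M fun _ ↦ g := by
  intro s t _ _
  simp

/-- The length of any word representing an element of the Artin–Tits monoid. -/
def degree (b : ArtinTitsMonoid M) : ℕ :=
  (monoidLift _ (preservesBraidRelations_const M (Multiplicative.ofAdd 1)) b).toAdd

lemma degree_mul (a b : ArtinTitsMonoid M) : degree (a * b) = degree a + degree b := by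
  simp [degree]

lemma degree_ofWord (l : List B) : degree (ofWord M l) = l.length := by
  rw [degree, monoidLift_ofWord]
  simp [← ofAdd_nsmul]

lemma degree_one : degree (1 : ArtinTitsMonoid M) = 0 := degree_ofWord []

lemma eq_one_of_degree_eq_zero {b : ArtinTitsMonoid M} (h : degree b = 0) : b = 1 := by
  obtain ⟨l, rfl⟩ := ofWord_surjective M b
  rw [degree_ofWord, List.length_eq_zero_iff] at h
  rw [h, ofWord_nil]

lemma degree_le_of_dvd {a b : ArtinTitsMonoid M} (h : a ∣ b) : degree a ≤ degree b := by
  obtain ⟨c, rfl⟩ := h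
  rw [degree_mul]
  lia

lemma eq_one_of_dvd_one {b : ArtinTitsMonoid M} (h : b ∣ 1) : b = 1 :=
  eq_one_of_degree_eq_zero (Nat.le_zero.mp (degree_one (M := M) ▸ degree_le_of_dvd h))

lemma eq_of_dvd_of_degree_le {a b : ArtinTitsMonoid M} (h : a ∣ b) (hle : degree b ≤ degree a) :
    a = b := by
  obtain ⟨c, rfl⟩ := h
  rw [degree_mul] at hle
  rw [eq_one_of_degree_eq_zero (b := c) (by lia), mul_one]

end Degree

section ReducedLift

variable {B : Type*} {M : CoxeterMatrix B} {W : Type*} [Group W] (cs : CoxeterSystem M W)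

lemma preservesBraidRelations_simple : PreservesBraidRelations M cs.simple :=
  fun s t _ _ ↦ wordProd_altWord_comm cs s t

/-- The canonical projection from the Artin–Tits monoid to the Coxeter group. -/
def toCoxeter : ArtinTitsMonoid M →* W := monoidLift cs.simple (preservesBraidRelations_simple cs)

lemma toCoxeter_ofWord (l : List B) : toCoxeter cs (ofWord M l) = cs.wordProd l :=
  monoidLift_ofWord _ _ l

variable {cs}

lemma length_toCoxeter_le (b : ArtinTitsMonoid M) : cs.length (toCoxeter cs b) ≤ degree b := by
  obtain ⟨l, rfl⟩ := ofWord_surjective M b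
  rw [toCoxeter_ofWord, degree_ofWord]
  exact cs.length_wordProd_le l

lemma simple_weakLE_wordProd_cons {s : B} {l : List B} (h : cs.IsReduced (s :: l)) :
    WeakLE cs (cs.simple s) (cs.wordProd (s :: l)) := by
  have hle := cs.length_wordProd_le l
  rw [simple_weakLE_iff, h.eq, cs.wordProd_cons, cs.simple_mul_simple_cancel_left,
    List.length_cons]
  lia

lemma exists_isReduced_altWord_append {s t : B} (hst : s ≠ t) {w : W}
    (hs : WeakLE cs (cs.simple s) w) (ht : WeakLE cs (cs.simple t) w) :
    ∃ l, cs.IsReduced (altWord s t (M s t) ++ l) ∧ cs.IsReduced (altWord t s (M s t) ++ l) ∧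
      cs.wordProd (altWord s t (M s t) ++ l) = w ∧ cs.wordProd (altWord t s (M s t) ++ l) = w := by
  obtain ⟨l, hl, hlw⟩ := cs.exists_isReduced ((dihedralLongest cs s t)⁻¹ * w)
  have hprod : cs.wordProd (altWord s t (M s t) ++ l) = w := by
    rw [cs.wordProd_append, ← hlw, ← dihedralLongest, mul_inv_cancel_left]
  have hprod' : cs.wordProd (altWord t s (M s t) ++ l) = w := by
    rwa [cs.wordProd_append, ← wordProd_altWord_comm, ← cs.wordProd_append]
  have hlen := weakLE_iff.mp (dihedralLongest_weakLE hst hs ht)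
  rw [length_dihedralLongest hst hs ht, hlw, hl.eq] at hlen
  refine ⟨l, ?_, ?_, hprod, hprod'⟩
  · rw [CoxeterSystem.IsReduced, hprod, hlen, List.length_append, length_altWord]
  · rw [CoxeterSystem.IsReduced, hprod', hlen, List.length_append, length_altWord]

/-- **Matsumoto's theorem**. -/
theorem ofWord_eq_of_wordProd_eq {l l' : List B} (hl : cs.IsReduced l) (hl' : cs.IsReduced l')
    (h : cs.wordProd l = cs.wordProd l') : ofWord M l = ofWord M l' := by
  have hlen : l'.length = l.length := by rw [← hl.eq, ← hl'.eq, h]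
  induction hn : l.length generalizing l l' with
  | zero =>
    rw [List.eq_nil_of_length_eq_zero hn, List.eq_nil_of_length_eq_zero (hlen.trans hn)]
  | succ n ih =>
    have hsame {s : B} {p q : List B} (hpn : (s :: p).length = n + 1) (hp : cs.IsReduced (s :: p))
        (hq : cs.IsReduced (s :: q)) (hpq : cs.wordProd (s :: p) = cs.wordProd (s :: q)) :
        ofWord M (s :: p) = ofWord M (s :: q) := by
      have hlen : (s :: q).length = (s :: p).length := by rw [← hp.eq, ← hq.eq, hpq]
      simp only [cs.wordProd_cons, mul_right_inj, List.length_cons, add_left_inj] at hpn hpq hlen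
      rw [ofWord_cons, ofWord_cons M s q,
        ih (by simpa using hp.drop 1) (by simpa using hq.drop 1) hpq hlen hpn]
    obtain ⟨s, p, rfl⟩ := List.exists_cons_of_length_eq_add_one hn
    obtain ⟨t, q, rfl⟩ := List.exists_cons_of_length_eq_add_one (hlen.trans hn)
    obtain rfl | hst := eq_or_ne s t
    · exact hsame hn hl hl' h
    have hs := simple_weakLE_wordProd_cons hl
    have ht := simple_weakLE_wordProd_cons hl'
    rw [← h] at ht
    obtain ⟨r, hr, hr', hrw, hrw'⟩ := exists_isReduced_altWord_append hst hs ht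
    have h0 := matrix_ne_zero_of_weakLE hst hs ht
    have hbraid : ofWord M (altWord s t (M s t) ++ r) = ofWord M (altWord t s (M s t) ++ r) := by
      rw [ofWord_append, ofWord_append, ofWord_altWord_comm hst h0]
    obtain ⟨m, hm⟩ := Nat.exists_eq_succ_of_ne_zero h0
    rw [hm] at hr hr' hrw hrw' hbraid
    calc ofWord M (s :: p) = ofWord M (altWord s t (m + 1) ++ r) := hsame hn hl hr hrw.symm
      _ = ofWord M (altWord t s (m + 1) ++ r) := hbraid
      _ = ofWord M (t :: q) := (hsame (hlen.trans hn) hl' hr' (h.symm.trans hrw'.symm)).symm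

variable (cs) in
/-- The canonical lift of an element of the Coxeter group to the Artin–Tits monoid, represented by
any of its reduced words. -/
noncomputable def reducedLift (w : W) : ArtinTitsMonoid M := ofWord M (cs.exists_isReduced w).choose

lemma reducedLift_wordProd {l : List B} (h : cs.IsReduced l) :
    reducedLift cs (cs.wordProd l) = ofWord M l := by
  obtain ⟨hred, heq⟩ := (cs.exists_isReduced (cs.wordProd l)).choose_spec
  exact ofWord_eq_of_wordProd_eq hred h heq.symm

lemma reducedLift_one : reducedLift cs (1 : W) = 1 := by
  rw [← cs.wordProd_nil, reducedLift_wordProd (by simp [CoxeterSystem.IsReduced]), ofWord_nil]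

lemma reducedLift_simple (s : B) : reducedLift cs (cs.simple s) = ofWord M [s] := by
  rw [← cs.wordProd_singleton, reducedLift_wordProd (by simp [CoxeterSystem.IsReduced])]

lemma LengthAdditive.reducedLift_mul {u v : W} (h : LengthAdditive cs u v) :
    reducedLift cs u * reducedLift cs v = reducedLift cs (u * v) := by
  obtain ⟨l, hl, rfl⟩ := cs.exists_isReduced u
  obtain ⟨l', hl', rfl⟩ := cs.exists_isReduced v
  have happ : cs.IsReduced (l ++ l') := by
    rw [CoxeterSystem.IsReduced, cs.wordProd_append, h, hl.eq, hl'.eq, List.length_append]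
  rw [reducedLift_wordProd hl, reducedLift_wordProd hl', ← ofWord_append, ← cs.wordProd_append,
    reducedLift_wordProd happ]

lemma toCoxeter_reducedLift (w : W) : toCoxeter cs (reducedLift cs w) = w := by
  rw [reducedLift, toCoxeter_ofWord]
  exact (cs.exists_isReduced w).choose_spec.2.symm

lemma degree_reducedLift (w : W) : degree (reducedLift cs w) = cs.length w := by
  obtain ⟨l, hl, rfl⟩ := cs.exists_isReduced w
  rw [reducedLift_wordProd hl, degree_ofWord, hl.eq]

lemma eq_reducedLift_of_degree_eq {b : ArtinTitsMonoid M}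
    (h : degree b = cs.length (toCoxeter cs b)) : b = reducedLift cs (toCoxeter cs b) := by
  obtain ⟨l, rfl⟩ := ofWord_surjective M b
  rw [toCoxeter_ofWord, degree_ofWord] at h
  rw [toCoxeter_ofWord, reducedLift_wordProd h.symm]

lemma exists_of_mul_eq_reducedLift {a b : ArtinTitsMonoid M} {w : W}
    (h : a * b = reducedLift cs w) :
    ∃ u v, a = reducedLift cs u ∧ b = reducedLift cs v ∧ u * v = w ∧ LengthAdditive cs u v := by
  have hdeg := congrArg degree h
  have hW := congrArg (toCoxeter cs) h
  rw [degree_mul, degree_reducedLift] at hdeg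
  rw [map_mul, toCoxeter_reducedLift] at hW
  have hle := cs.length_mul_le (toCoxeter cs a) (toCoxeter cs b)
  have := length_toCoxeter_le (cs := cs) a
  have := length_toCoxeter_le (cs := cs) b
  rw [hW] at hle
  refine ⟨toCoxeter cs a, toCoxeter cs b, eq_reducedLift_of_degree_eq (by lia),
    eq_reducedLift_of_degree_eq (by lia), hW, ?_⟩
  rw [LengthAdditive, hW]
  lia

end ReducedLift

section Transducer

variable {B : Type*} {M : CoxeterMatrix B} {W : Type*} [Group W] [Finite W]
  (cs : CoxeterSystem M W)

/-- Reading a generator `s` in state `w`, output the complement of `w` in `s` and move to the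
complement of `s` in `w`. Running this transducer computes right complements of arbitrary monoid
elements in simple ones. -/
noncomputable def transducerStep (s : B) : (Function.End (ArtinTitsMonoid M × W))ᵐᵒᵖ :=
  .op fun p ↦ (p.1 * reducedLift cs (rightCompl cs p.2 (cs.simple s)),
    rightCompl cs (cs.simple s) p.2)

lemma unop_mul_apply {X : Type*} (f g : (Function.End X)ᵐᵒᵖ) (x : X) :
    (f * g).unop x = g.unop (f.unop x) := rfl

variable {cs}

lemma prod_map_transducerStep_apply {l : List B} (hl : cs.IsReduced l) (c : ArtinTitsMonoid M)
    (w : W) : (l.map (transducerStep cs)).prod.unop (c, w) =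
      (c * reducedLift cs (rightCompl cs w (cs.wordProd l)), rightCompl cs (cs.wordProd l) w) := by
  induction l generalizing c w with
  | nil =>
    rw [cs.wordProd_nil, rightCompl_one, reducedLift_one, mul_one, one_rightCompl]
    rfl
  | cons s l ih =>
    have hl' : cs.IsReduced l := by simpa using hl.drop 1
    have hadd : LengthAdditive cs (cs.simple s) (cs.wordProd l) := by
      rw [LengthAdditive, ← cs.wordProd_cons, hl.eq, hl'.eq, cs.length_simple, List.length_cons,
        add_comm]
    rw [List.map_cons, List.prod_cons, unop_mul_apply, cs.wordProd_cons,
      rightCompl_mul_right hadd w, ← (lengthAdditive_rightCompl_rightCompl hadd w).reducedLift_mul,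
      rightCompl_mul_left hadd, ← mul_assoc]
    exact ih hl' _ _

variable (cs)

lemma preservesBraidRelations_transducerStep : PreservesBraidRelations M (transducerStep cs) := by
  intro s t hst _
  have hred : cs.IsReduced (altWord s t (M s t)) := by
    rw [CoxeterSystem.IsReduced, length_altWord, ← dihedralLongest,
      length_dihedralLongest_of_finite cs hst]
  have hred' : cs.IsReduced (altWord t s (M s t)) := by
    rw [CoxeterSystem.IsReduced, ← wordProd_altWord_comm, hred, length_altWord, length_altWord]
  apply MulOpposite.unop_injective
  funext ⟨c, w⟩
  rw [prod_map_transducerStep_apply hred, prod_map_transducerStep_apply hred',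
    wordProd_altWord_comm]

/-- The transducer as an action of the Artin–Tits monoid. -/
noncomputable def transducer : ArtinTitsMonoid M →* (Function.End (ArtinTitsMonoid M × W))ᵐᵒᵖ :=
  monoidLift (transducerStep cs) (preservesBraidRelations_transducerStep cs)

/-- The right complement of the simple element `w` in `b`: what remains of `b` once the common
multiple with `w` has been reached. -/
noncomputable def complement (w : W) (b : ArtinTitsMonoid M) : ArtinTitsMonoid M :=
  ((transducer cs b).unop (1, w)).1

/-- The right complement of `b` in the simple element `w`, which is again simple. -/
noncomputable def residual (b : ArtinTitsMonoid M) (w : W) : W :=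
  ((transducer cs b).unop (1, w)).2

variable {cs}

lemma transducer_apply (b c : ArtinTitsMonoid M) (w : W) :
    (transducer cs b).unop (c, w) = (c * complement cs w b, residual cs b w) := by
  unfold complement residual
  induction b using monoid_induction generalizing c w with
  | one =>
    rw [map_one]
    exact Prod.ext (mul_one c).symm rfl
  | simple_mul s b ih =>
    have hstep (c w) : (transducer cs (ofWord M [s])).unop (c, w) =
        (c * reducedLift cs (rightCompl cs w (cs.simple s)), rightCompl cs (cs.simple s) w) := by
      rw [transducer, monoidLift_ofWord, List.map_singleton, List.prod_singleton]
      rfl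
    rw [map_mul, unop_mul_apply, unop_mul_apply, hstep, hstep, ih, ih (1 * _), one_mul, mul_assoc]

lemma complement_mul (w : W) (a b : ArtinTitsMonoid M) :
    complement cs w (a * b) = complement cs w a * complement cs (residual cs a w) b := by
  rw [complement, map_mul, unop_mul_apply, transducer_apply a, transducer_apply b, one_mul]

lemma residual_mul (w : W) (a b : ArtinTitsMonoid M) :
    residual cs (a * b) w = residual cs b (residual cs a w) := by
  rw [residual, map_mul, unop_mul_apply, transducer_apply a, transducer_apply b]

lemma transducer_reducedLift (u w : W) : (transducer cs (reducedLift cs u)).unop (1, w) =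
    (reducedLift cs (rightCompl cs w u), rightCompl cs u w) := by
  obtain ⟨l, hl, rfl⟩ := cs.exists_isReduced u
  rw [reducedLift_wordProd hl, transducer, monoidLift_ofWord, prod_map_transducerStep_apply hl,
    one_mul]

lemma complement_reducedLift (w u : W) :
    complement cs w (reducedLift cs u) = reducedLift cs (rightCompl cs w u) := by
  rw [complement, transducer_reducedLift]

lemma residual_reducedLift (u w : W) :
    residual cs (reducedLift cs u) w = rightCompl cs u w := by
  rw [residual, transducer_reducedLift]

lemma complement_one (w : W) : complement cs w 1 = 1 := by
  rw [← reducedLift_one (cs := cs), complement_reducedLift, rightCompl_one]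

lemma residual_one (w : W) : residual cs 1 w = w := by
  rw [← reducedLift_one (cs := cs), residual_reducedLift, one_rightCompl]

lemma mul_reducedLift_residual (b : ArtinTitsMonoid M) (w : W) :
    b * reducedLift cs (residual cs b w) = reducedLift cs w * complement cs w b := by
  induction b using monoid_induction generalizing w with
  | one => rw [residual_one, complement_one, one_mul, mul_one]
  | simple_mul s b ih =>
    rw [residual_mul, complement_mul, mul_assoc, ih, ← mul_assoc, ← mul_assoc,
      ← reducedLift_simple (cs := cs), complement_reducedLift, residual_reducedLift,
      (lengthAdditive_rightCompl _ _).reducedLift_mul,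
      (lengthAdditive_rightCompl _ _).reducedLift_mul, mul_rightCompl, mul_rightCompl,
      weakSup_comm]

lemma residual_apply_one (b : ArtinTitsMonoid M) : residual cs b 1 = 1 := by
  induction b using monoid_induction with
  | one => exact residual_one 1
  | simple_mul s b ih =>
    rw [residual_mul, ← reducedLift_simple (cs := cs), residual_reducedLift, rightCompl_one, ih]

lemma one_complement (b : ArtinTitsMonoid M) : complement cs 1 b = b := by
  have h := mul_reducedLift_residual (cs := cs) b 1
  rwa [residual_apply_one, reducedLift_one, mul_one, one_mul, eq_comm] at h

lemma complement_reducedLift_mul (w : W) (b : ArtinTitsMonoid M) :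
    complement cs w (reducedLift cs w * b) = b := by
  rw [complement_mul, complement_reducedLift, residual_reducedLift, rightCompl_self,
    reducedLift_one, one_mul, one_complement]

lemma reducedLift_dvd_iff {w : W} {c : ArtinTitsMonoid M} :
    reducedLift cs w ∣ c ↔ residual cs c w = 1 := by
  refine ⟨?_, fun h ↦ ⟨complement cs w c, ?_⟩⟩
  · rintro ⟨d, rfl⟩
    rw [residual_mul, residual_reducedLift, rightCompl_self, residual_apply_one]
  · rw [← mul_reducedLift_residual, h, reducedLift_one, mul_one]

end Transducer

section Divisibility

variable {B : Type*} {M : CoxeterMatrix B} {W : Type*} [Group W] [Finite W]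

theorem mul_left_cancel_of_finite (cs : CoxeterSystem M W) {a b c : ArtinTitsMonoid M}
    (h : a * b = a * c) : b = c := by
  induction a using monoid_induction with
  | one => rwa [one_mul, one_mul] at h
  | simple_mul s a ih =>
    refine ih ?_
    have h' := congrArg (complement cs (cs.simple s)) h
    rwa [← reducedLift_simple (cs := cs), mul_assoc, mul_assoc, complement_reducedLift_mul,
      complement_reducedLift_mul] at h'

theorem exists_lcm (cs : CoxeterSystem M W) (a b : ArtinTitsMonoid M) :
    ∃ j, a ∣ j ∧ b ∣ j ∧ ∀ x, a ∣ x → b ∣ x → j ∣ x := by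
  induction a using monoid_induction generalizing b with
  | one => exact ⟨b, one_dvd b, dvd_rfl, fun x _ h ↦ h⟩
  | simple_mul s a ih =>
    rw [← reducedLift_simple (cs := cs)]
    set w := cs.simple s
    obtain ⟨j, ⟨c, hc⟩, ⟨d, hd⟩, hj⟩ := ih (complement cs w b)
    refine ⟨reducedLift cs w * j, ⟨c, by rw [hc, mul_assoc]⟩,
      ⟨reducedLift cs (residual cs b w) * d, ?_⟩, ?_⟩
    · rw [← mul_assoc, mul_reducedLift_residual, mul_assoc, ← hd]
    · rintro x ⟨e, he⟩ ⟨f, hf⟩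
      have hres : reducedLift cs w ∣ x := ⟨a * e, by rw [he, mul_assoc]⟩
      rw [reducedLift_dvd_iff, hf, residual_mul, ← reducedLift_dvd_iff] at hres
      obtain ⟨g, hg⟩ := hres
      have hx : x = reducedLift cs w * (complement cs w b * g) := by
        rw [hf, hg, ← mul_assoc, ← mul_assoc, mul_reducedLift_residual]
      have hae : complement cs w b * g = a * e :=
        mul_left_cancel_of_finite cs (a := reducedLift cs w) (by rw [← hx, he, mul_assoc])
      obtain ⟨k, hk⟩ := hj (complement cs w b * g) ⟨e, hae⟩ ⟨g, rfl⟩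
      exact ⟨k, by rw [hx, hk, mul_assoc]⟩

theorem exists_gcd (cs : CoxeterSystem M W) (T : Set (ArtinTitsMonoid M))
    (hT : T.Nonempty) :
    ∃ g, (∀ x ∈ T, g ∣ x) ∧ ∀ c, (∀ x ∈ T, c ∣ x) → c ∣ g := by
  obtain ⟨x₀, hx₀⟩ := hT
  obtain ⟨g, hg, hmax⟩ := (measure fun g ↦ degree x₀ - degree g).wf.has_min
    {g | ∀ x ∈ T, g ∣ x} ⟨1, fun x _ ↦ one_dvd x⟩
  refine ⟨g, hg, fun c hc ↦ ?_⟩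
  obtain ⟨j, hcj, hgj, hj⟩ := exists_lcm cs c g
  have hjT (x) (hx : x ∈ T) : j ∣ x := hj x (hc x hx) (hg x hx)
  have hnlt : ¬ degree x₀ - degree j < degree x₀ - degree g := hmax j hjT
  have hle : degree j ≤ degree g := by
    have := degree_le_of_dvd (hjT x₀ hx₀)
    have := degree_le_of_dvd hgj
    lia
  rwa [eq_of_dvd_of_degree_le hgj hle]

end Divisibility

section Garside

variable {B : Type*} {M : CoxeterMatrix B} {W : Type*} [Group W] {cs : CoxeterSystem M W} {w₀ : W}

lemma reducedLift_mul_eq_longest (hw₀ : ∀ w : W, cs.length w ≤ cs.length w₀) (u : W) :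
    reducedLift cs u * reducedLift cs (u⁻¹ * w₀) = reducedLift cs w₀ := by
  rw [(lengthAdditive_inv_mul_longest hw₀ u).reducedLift_mul, mul_inv_cancel_left]

lemma reducedLift_mul_longest (hw₀ : ∀ w : W, cs.length w ≤ cs.length w₀) (u : W) :
    reducedLift cs u * reducedLift cs w₀ = reducedLift cs w₀ * reducedLift cs (w₀ * u * w₀) := by
  have h := reducedLift_mul_eq_longest hw₀ (u⁻¹ * w₀)
  rw [mul_inv_rev, inv_inv, inv_eq_of_mul_eq_one_left (longest_mul_self hw₀)] at h
  calc reducedLift cs u * reducedLift cs w₀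
    _ = reducedLift cs u * (reducedLift cs (u⁻¹ * w₀) * reducedLift cs (w₀ * u * w₀)) := by rw [h]
    _ = reducedLift cs w₀ * reducedLift cs (w₀ * u * w₀) := by
      rw [← mul_assoc, reducedLift_mul_eq_longest hw₀ u]

lemma commute_longest_sq (hw₀ : ∀ w : W, cs.length w ≤ cs.length w₀) (b : ArtinTitsMonoid M) :
    Commute b (reducedLift cs w₀ ^ 2) := by
  induction b using monoid_induction with
  | one => exact Commute.one_left _
  | simple_mul s b ih =>
    refine Commute.mul_left ?_ ih
    have hw : w₀ * (w₀ * cs.simple s * w₀) * w₀ = cs.simple s := by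
      rw [mul_assoc, mul_assoc (w₀ * _), longest_mul_self hw₀, mul_one, ← mul_assoc,
        longest_mul_self hw₀, one_mul]
    rw [← reducedLift_simple (cs := cs), commute_iff_eq, pow_two, ← mul_assoc,
      reducedLift_mul_longest hw₀, mul_assoc, reducedLift_mul_longest hw₀, ← mul_assoc, hw]

lemma exists_mul_eq_longest_sq_pow (hw₀ : ∀ w : W, cs.length w ≤ cs.length w₀)
    (b : ArtinTitsMonoid M) : ∃ k c, b * c = (reducedLift cs w₀ ^ 2) ^ k := by
  induction b using monoid_induction with
  | one => exact ⟨0, 1, by simp⟩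
  | simple_mul s b ih =>
    obtain ⟨k, c, h⟩ := ih
    have hs := reducedLift_mul_eq_longest hw₀ (cs.simple s)
    have hc := (commute_longest_sq hw₀ (ofWord M [s])).pow_right k
    refine ⟨k + 1, c * (reducedLift cs ((cs.simple s)⁻¹ * w₀) * reducedLift cs w₀), ?_⟩
    rw [mul_assoc, ← mul_assoc b, h, ← mul_assoc, hc.eq, mul_assoc, ← mul_assoc (ofWord M [s]),
      ← reducedLift_simple (cs := cs), hs, ← pow_two, pow_succ _ k]

lemma exists_mul_longest_eq (hw₀ : ∀ w : W, cs.length w ≤ cs.length w₀) (b : ArtinTitsMonoid M) :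
    ∃ b', b * reducedLift cs w₀ = reducedLift cs w₀ * b' := by
  induction b using monoid_induction with
  | one => exact ⟨1, by simp⟩
  | simple_mul s b ih =>
    obtain ⟨b', h⟩ := ih
    refine ⟨reducedLift cs (w₀ * cs.simple s * w₀) * b', ?_⟩
    rw [mul_assoc, h, ← mul_assoc, ← reducedLift_simple (cs := cs), reducedLift_mul_longest hw₀,
      mul_assoc]

end Garside

/-! ### Periodic elements of Garside groups -/

section GroupOfFractions

open Multiplicative (ofAdd)

universe u

open OreLocalization in
theorem exists_group_of_fractions {Q : Type u} [Monoid Q] [IsLeftCancelMul Q] (D : Q)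
    (hcomm : ∀ b, Commute b D) (hdvd : ∀ b : Q, ∃ k c, b * c = D ^ k) :
    ∃ (Γ : Type u) (_ : Group Γ) (ι : Q →* Γ), Function.Injective ι ∧
      ∀ γ : Γ, ∃ k b, ι D ^ k * γ = ι b := by
  let S := Submonoid.powers D
  have hS (s : S) (b : Q) : (s : Q) * b = b * s := by
    obtain ⟨_, k, rfl⟩ := s
    exact ((hcomm b).pow_right k).eq.symm
  let _ : OreSet S :=
    { ore_right_cancel r₁ r₂ s h := ⟨s, by rw [hS, hS, h]⟩
      oreNum r _ := r
      oreDenom _ s := s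
      ore_eq r s := hS s r }
  let ι : Q →* OreLocalization S Q := numeratorHom
  have hfrac (γ : OreLocalization S Q) : ∃ k b, ι D ^ k * γ = ι b := by
    induction γ using OreLocalization.ind with
    | _ b s =>
      obtain ⟨_, k, rfl⟩ := s
      refine ⟨k, b, ?_⟩
      rw [← map_pow]
      exact OreLocalization.mul_cancel (s := (⟨D ^ k, k, rfl⟩ : S)) (t := 1) (r := b)
  have hinj : Function.Injective ι := by
    intro a b h
    obtain ⟨u, v, huv, hv⟩ := oreDiv_eq_iff.mp h
    rw [OneMemClass.coe_one, mul_one, mul_one] at hv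
    rw [← hv] at huv
    exact (mul_left_cancel huv).symm
  have hunit (b : Q) : IsUnit (ι b) := by
    obtain ⟨k, c, hbc⟩ := hdvd b
    have hcb : Commute b c := mul_left_cancel (a := b) <| by
      rw [← mul_assoc b c b, hbc, ((hcomm b).pow_right k).eq]
    have hu : IsUnit (ι b * ι c) := by
      rw [← map_mul, hbc]
      exact numerator_isUnit (⟨D ^ k, k, rfl⟩ : S)
    exact ((hcb.map ι).isUnit_mul_iff.mp hu).1
  have hall (γ : OreLocalization S Q) : IsUnit γ := by
    obtain ⟨k, b, h⟩ := hfrac γ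
    exact ((hunit D).pow k).mul_left_iff.mp (h ▸ hunit b)
  exact ⟨OreLocalization S Q, groupOfIsUnit hall, ι, hinj, hfrac⟩

end GroupOfFractions

section GarsideGroup

open Multiplicative (ofAdd)

variable {Γ : Type*} [Group Γ]

/-- `P` is the positive cone of a lattice ordering `a⁻¹ * b ∈ P` of `Γ`, bounded sets having an
infimum, and `Δ` is a Garside element: a positive element whose conjugation preserves `P` and
whose square is central. -/
structure IsGarside (P : Submonoid Γ) (Δ : Γ) : Prop where
  eq_one_of_inv_mem : ∀ a ∈ P, a⁻¹ ∈ P → a = 1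
  mem : Δ ∈ P
  commute_sq : ∀ a, Commute (Δ ^ 2) a
  conj_mem : ∀ a ∈ P, Δ⁻¹ * a * Δ ∈ P
  exists_inf : ∀ T : Set Γ, T.Nonempty → (∃ c, ∀ t ∈ T, c⁻¹ * t ∈ P) →
    ∃ g, (∀ t ∈ T, g⁻¹ * t ∈ P) ∧ ∀ c, (∀ t ∈ T, c⁻¹ * t ∈ P) → c⁻¹ * g ∈ P

/-- A positive `n`-th root of `Δ²` whose powers are all comparable with `Δ`. -/
structure IsBalancedRoot (P : Submonoid Γ) (Δ : Γ) (n : ℕ) (z : Γ) : Prop where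
  pow_eq : z ^ n = Δ ^ 2
  mem : z ∈ P
  inv_pow_mul_mem : ∀ j, 2 * j ≤ n → (z ^ j)⁻¹ * Δ ∈ P
  inv_mul_pow_mem : ∀ j, n ≤ 2 * j → Δ⁻¹ * z ^ j ∈ P

variable {P : Submonoid Γ} {Δ : Γ} {A : Type*} [AddCommGroup A] {c : Multiplicative A →* Γ}
  {wt : A →+ ℤ} {δ : A} {n : ℕ}

lemma IsGarside.mul_mul_inv_mem (G : IsGarside P Δ) {a : Γ} (ha : a ∈ P) :
    Δ * a * Δ⁻¹ ∈ P := by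
  have h : Δ⁻¹ * a * Δ = Δ * a * Δ⁻¹ := by
    have := (G.commute_sq a).eq
    rw [eq_mul_inv_iff_mul_eq, mul_assoc, mul_assoc, inv_mul_eq_iff_eq_mul, ← sq, ← mul_assoc,
      ← sq, this]
  exact h ▸ G.conj_mem a ha

-- The conjugating element is the infimum of the elements of nonnegative weight together with the
-- `Δ`-translates of those of weight at least `-n / 2`.
lemma IsGarside.exists_conj_of_weight (G : IsGarside P Δ) (hδ : c (ofAdd δ) = Δ ^ 2)
    (hwt : wt δ = n) {l : Γ} (hl : ∀ a, -n ≤ 2 * wt a → l⁻¹ * c (ofAdd a) ∈ P) :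
    ∃ b, (∀ a, 0 ≤ wt a → b⁻¹ * c (ofAdd a) * b ∈ P) ∧
      ∀ a, n ≤ 2 * wt a → Δ⁻¹ * (b⁻¹ * c (ofAdd a) * b) ∈ P := by
  let T : Set Γ := {t | ∃ a, 0 ≤ wt a ∧ c (ofAdd a) = t} ∪
    {t | ∃ a, -n ≤ 2 * wt a ∧ c (ofAdd a) * Δ = t}
  obtain ⟨b, hb, hmax⟩ := G.exists_inf T ⟨_, .inl ⟨0, (map_zero wt).ge, rfl⟩⟩ ⟨l, by
    rintro _ (⟨a, ha, rfl⟩ | ⟨a, ha, rfl⟩)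
    · exact hl a (by lia)
    · rw [← mul_assoc]
      exact mul_mem (hl a ha) G.mem⟩
  have hmul (a a' : A) : c (ofAdd (a + a')) = c (ofAdd a) * c (ofAdd a') := map_mul c _ _
  have hle (a : A) (s : Γ) (h : ∀ t ∈ T, s⁻¹ * (c (ofAdd a) * t) ∈ P) :
      s⁻¹ * c (ofAdd a) * b ∈ P := by
    have := hmax ((c (ofAdd a))⁻¹ * s) fun t ht ↦ by
      rw [mul_inv_rev, inv_inv, mul_assoc]
      exact h t ht
    rwa [mul_inv_rev, inv_inv] at this
  have hΔ (t : Γ) (ht : t ∈ T) : (b * Δ)⁻¹ * (t * Δ) ∈ P := by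
    rw [mul_inv_rev, mul_assoc, ← mul_assoc b⁻¹, ← mul_assoc]
    exact G.conj_mem _ (hb t ht)
  refine ⟨b, fun a ha ↦ hle a b ?_, fun a ha ↦ ?_⟩
  · rintro _ (⟨a', ha', rfl⟩ | ⟨a', ha', rfl⟩)
    · exact hb _ (.inl ⟨a + a', by rw [map_add]; lia, hmul a a'⟩)
    · exact hb _ (.inr ⟨a + a', by rw [map_add]; lia, by rw [hmul, mul_assoc]⟩)
  · have := hle a (b * Δ) ?_
    · rwa [mul_inv_rev, mul_assoc, mul_assoc, ← mul_assoc b⁻¹] at this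
    rintro _ (⟨a', ha', rfl⟩ | ⟨a', ha', rfl⟩)
    · have h : c (ofAdd a) * c (ofAdd a') = c (ofAdd (a + a' - δ)) * Δ * Δ := by
        rw [mul_assoc, ← sq, ← hδ, ← hmul, ← hmul, sub_add_cancel]
      rw [h]
      exact hΔ _ (.inr ⟨_, by rw [map_sub, map_add, hwt]; lia, rfl⟩)
    · rw [← mul_assoc (c _), ← hmul]
      exact hΔ _ (.inl ⟨a + a', by rw [map_add]; lia, rfl⟩)

theorem IsGarside.exists_isBalancedRoot_of_weight (G : IsGarside P Δ)
    (hδ : c (ofAdd δ) = Δ ^ 2) (hwt : wt δ = n) {a : A} (ha : wt a = 1) {l : Γ}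
    (hl : ∀ a, -n ≤ 2 * wt a → l⁻¹ * c (ofAdd a) ∈ P) :
    ∃ b z, IsBalancedRoot P Δ n z ∧
      ∀ (a' : A) (k : ℕ), wt a' = k → b⁻¹ * c (ofAdd a') * b = z ^ k := by
  obtain ⟨b, hb, hbΔ⟩ := G.exists_conj_of_weight hδ hwt hl
  let f (a : A) : Γ := b⁻¹ * c (ofAdd a) * b
  have hsub (u v : A) : f (u - v) = (f v)⁻¹ * f u := by
    have h : c (ofAdd v) * c (ofAdd (u - v)) = c (ofAdd u) := by
      rw [← map_mul, ← ofAdd_add, add_sub_cancel]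
    simp only [f, ← h]
    group
  have hinj (u v : A) (huv : wt u = wt v) : f u = f v := by
    refine (inv_mul_eq_one.mp ?_).symm
    refine G.eq_one_of_inv_mem _ ?_ ?_
    · rw [← hsub]
      exact hb _ (by rw [map_sub]; lia)
    · rw [mul_inv_rev, inv_inv, ← hsub]
      exact hb _ (by rw [map_sub]; lia)
  have hpow (k : ℕ) (u : A) (hu : wt u = k) : f u = f a ^ k := by
    rw [hinj u (k • a) (by rw [map_nsmul, ha, hu, nsmul_one])]
    calc b⁻¹ * c (ofAdd a ^ k) * b = b⁻¹ * c (ofAdd a) ^ k * b⁻¹⁻¹ := by rw [map_pow, inv_inv]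
      _ = (b⁻¹ * c (ofAdd a) * b) ^ k := by rw [← conj_pow, inv_inv]
  have hfδ : f δ = Δ ^ 2 := by
    change b⁻¹ * _ * b = _
    rw [hδ, mul_assoc, (G.commute_sq b).eq, inv_mul_cancel_left]
  refine ⟨b, f a, ⟨?_, hb a (by lia), fun j hj ↦ ?_, fun j hj ↦ ?_⟩, fun u k ↦ hpow k u⟩
  · rw [← hpow n δ hwt, hfδ]
  · have := G.mul_mul_inv_mem <| hbΔ (δ - j • a) <| by
      rw [map_sub, hwt, map_nsmul, ha, nsmul_one]
      lia
    change Δ * (Δ⁻¹ * f (δ - j • a)) * Δ⁻¹ ∈ P at this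
    rwa [mul_inv_cancel_left, hsub, hfδ, hpow j (j • a) (by rw [map_nsmul, ha, nsmul_one]),
      sq, mul_assoc, mul_inv_cancel_right] at this
  · rw [← hpow j (j • a) (by rw [map_nsmul, ha, nsmul_one])]
    exact hbΔ _ (by rw [map_nsmul, ha, nsmul_one]; lia)

lemma inv_mul_zpow_mul_zpow_mem {D x : Γ} {K N : ℕ} (hD : D ∈ P) (hx : x ∈ P)
    (hDx : Commute D x) (hN : 0 < N) (hpow : x ^ N = D ^ K) {j m : ℤ}
    (h : -N < j * K + m * N) : (D ^ K)⁻¹⁻¹ * (x ^ j * D ^ m) ∈ P := by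
  have hmod : j % N < N := Int.emod_lt_of_pos _ (by lia)
  have hxj : x ^ j = D ^ (K * (j / N)) * x ^ (j % N) := by
    rw [← zpow_natCast, ← zpow_natCast] at hpow
    rw [zpow_mul, ← hpow, ← zpow_mul, ← zpow_add, Int.mul_ediv_add_emod]
  have hexp : 0 ≤ K + K * (j / N) + m := by
    have := Int.mul_ediv_add_emod j N
    have : j % N * K ≤ N * K := mul_le_mul_of_nonneg_right hmod.le (by positivity)
    by_contra! hneg
    nlinarith
  obtain ⟨k, hk⟩ := Int.eq_ofNat_of_zero_le hexp
  obtain ⟨i, hi⟩ := Int.eq_ofNat_of_zero_le (Int.emod_nonneg j (by lia : (N : ℤ) ≠ 0))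
  have : (D ^ K)⁻¹⁻¹ * (x ^ j * D ^ m) = D ^ k * x ^ i := by
    rw [inv_inv, hxj, mul_assoc, ((hDx.zpow_zpow m (j % N))).symm.eq, ← mul_assoc (D ^ (_ : ℤ)),
      ← mul_assoc, ← zpow_natCast D K, ← zpow_add, ← zpow_add, ← add_assoc, hk, hi,
      zpow_natCast, zpow_natCast]
  rw [this]
  exact mul_mem (pow_mem hD k) (pow_mem hx i)

theorem IsGarside.exists_isBalancedRoot (G : IsGarside P Δ) {x : Γ} (hx : x ∈ P) {g n k : ℕ}
    (hg : 0 < g) (hn : 0 < n) (hnk : n.Coprime k) (hpow : x ^ (n * g) = (Δ ^ 2) ^ (k * g)) :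
    ∃ b z, IsBalancedRoot P Δ n z ∧ b⁻¹ * x * b = z ^ k := by
  let c : Multiplicative (ℤ × ℤ) →* Γ := MonoidHom.mk'
    (fun a ↦ x ^ a.toAdd.1 * (Δ ^ 2) ^ a.toAdd.2) fun a a' ↦ by
      rw [toAdd_mul, Prod.fst_add, Prod.snd_add, zpow_add, zpow_add]
      exact ((G.commute_sq x).zpow_zpow _ _).mul_mul_mul_comm _ _ |>.symm
  let wt : ℤ × ℤ →+ ℤ := (k : ℤ) • AddMonoidHom.fst ℤ ℤ + (n : ℤ) • AddMonoidHom.snd ℤ ℤ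
  have hc (j m : ℤ) : c (ofAdd (j, m)) = x ^ j * (Δ ^ 2) ^ m := rfl
  have hwt (j m : ℤ) : wt (j, m) = k * j + n * m := rfl
  have hbezout : wt (n.gcdB k, n.gcdA k) = 1 := by
    rw [hwt, add_comm, ← Nat.gcd_eq_gcd_ab, hnk, Nat.cast_one]
  obtain ⟨b, z, hz, hb⟩ := G.exists_isBalancedRoot_of_weight (c := c) (δ := (0, 1)) (n := n)
    (by rw [hc]; simp only [zpow_zero, zpow_one, one_mul]) (by rw [hwt]; lia) hbezout
    (l := ((Δ ^ 2) ^ (k * g))⁻¹) fun a ha ↦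
      inv_mul_zpow_mul_zpow_mem (pow_mem G.mem 2) hx (G.commute_sq x) (Nat.mul_pos hn hg) hpow <| by
        obtain ⟨j, m⟩ := a
        rw [hwt] at ha
        have : -(n : ℤ) * g < (k * j + n * m) * g :=
          mul_lt_mul_of_pos_right (by lia) (by exact_mod_cast hg)
        push_cast [toAdd_ofAdd]
        linarith
  refine ⟨b, z, hz, ?_⟩
  rw [← hb (1, 0) k (by rw [hwt]; lia), hc, zpow_one, zpow_zero, mul_one]

end GarsideGroup

section CyclicConjugacy

open Multiplicative (ofAdd)

variable {B : Type*} {M : CoxeterMatrix B} {W : Type*} [Group W] [Finite W]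
  {cs : CoxeterSystem M W} {w₀ : W} {x y : ArtinTitsMonoid M}

/-- Cyclic conjugacy: the reflexive transitive closure of `a * b ↦ b * a`. -/
def CyclicallyConj : ArtinTitsMonoid M → ArtinTitsMonoid M → Prop :=
  Relation.ReflTransGen fun u v ↦ ∃ a b, u = a * b ∧ v = b * a

lemma dvd_of_dvd_mul_of_dvd_mul (cs : CoxeterSystem M W) {c y u v : ArtinTitsMonoid M}
    (huv : ∀ e, e ∣ u → e ∣ v → e = 1) (hu : c ∣ y * u) (hv : c ∣ y * v) : c ∣ y := by
  obtain ⟨j, hc, ⟨e, rfl⟩, hj⟩ := exists_lcm cs c y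
  have he (a) (h : c ∣ y * a) : e ∣ a := by
    obtain ⟨k, hk⟩ := hj _ h ⟨a, rfl⟩
    rw [mul_assoc] at hk
    exact ⟨k, mul_left_cancel_of_finite cs hk⟩
  rwa [huv e (he u hu) (he v hv), mul_one] at hc

lemma eq_one_of_dvd_pow_of_mul_eq (cs : CoxeterSystem M W) {g e : ArtinTitsMonoid M}
    (hyg : y * g = g * x) (hcop : ∀ e, e ∣ y → e ∣ g → e = 1) (m : ℕ) (heg : e ∣ g)
    (hey : e ∣ y ^ m) : e = 1 := by
  induction m generalizing e with
  | zero => exact eq_one_of_dvd_one (by rwa [pow_zero] at hey)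
  | succ m ih =>
    refine hcop e (dvd_of_dvd_mul_of_dvd_mul cs (fun _ ↦ ih) ?_ ?_) heg
    · exact heg.trans ⟨x, hyg⟩
    · rwa [← pow_succ']

theorem cyclicallyConj_of_mul_eq (hw₀ : ∀ w : W, cs.length w ≤ cs.length w₀) {N K : ℕ}
    (hK : 0 < K) (g : ArtinTitsMonoid M) (hy : y ^ N = (reducedLift cs w₀ ^ 2) ^ K)
    (hyg : y * g = g * x) : CyclicallyConj y x := by
  induction hn : degree g using Nat.strong_induction_on generalizing y g with
  | _ n ih =>
  obtain ⟨a, ha, hmax⟩ := exists_gcd cs {y, g} ⟨y, .inl rfl⟩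
  obtain ⟨y', rfl⟩ := ha y (.inl rfl)
  obtain ⟨g', rfl⟩ := ha g (.inr rfl)
  by_cases h1 : a = 1
  · obtain ⟨k, c, hkc⟩ := exists_mul_eq_longest_sq_pow hw₀ (a * g')
    have hg : a * g' = 1 := by
      refine eq_one_of_dvd_pow_of_mul_eq cs hyg (fun e hey heg ↦ ?_) (N * k) dvd_rfl ?_
      · subst h1
        exact eq_one_of_dvd_one (hmax e (by rintro _ (rfl | rfl) <;> assumption))
      · rw [pow_mul, hy, ← pow_mul]
        exact Dvd.dvd.trans ⟨c, hkc.symm⟩ (pow_dvd_pow _ (Nat.le_mul_of_pos_left k hK))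
    rw [hg, mul_one, one_mul] at hyg
    rw [hyg]
    exact .refl
  · have hsemi : SemiconjBy a (y' * a) (a * y') := (mul_assoc a y' a).symm
    refine .head ⟨a, y', rfl, rfl⟩ (ih (degree g') ?_ g' ?_ ?_ rfl)
    · have : degree a ≠ 0 := fun h ↦ h1 (eq_one_of_degree_eq_zero h)
      rw [← hn, degree_mul]
      lia
    · apply mul_left_cancel_of_finite cs (a := a)
      rw [(hsemi.pow_right N).eq, hy, ((commute_longest_sq hw₀ a).pow_right K).eq]
    · apply mul_left_cancel_of_finite cs (a := a)
      simpa only [mul_assoc] using hyg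

end CyclicConjugacy

section ArtinTitsGroup

open Multiplicative (ofAdd)

universe u
variable {B : Type u} {M : CoxeterMatrix B} {W : Type*} [Group W]
  {cs : CoxeterSystem M W} {w₀ : W} {Γ : Type*} [Group Γ] {ι : ArtinTitsMonoid M →* Γ}

theorem exists_artinTitsGroup [Finite W] (hw₀ : ∀ w : W, cs.length w ≤ cs.length w₀) :
    ∃ (Γ : Type u) (_ : Group Γ) (ι : ArtinTitsMonoid M →* Γ), Function.Injective ι ∧
      ∀ γ : Γ, ∃ k b, ι (reducedLift cs w₀ ^ 2) ^ k * γ = ι b :=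
  have : IsLeftCancelMul (ArtinTitsMonoid M) := ⟨fun _ _ _ ↦ mul_left_cancel_of_finite cs⟩
  exists_group_of_fractions _ (commute_longest_sq hw₀) (exists_mul_eq_longest_sq_pow hw₀)

lemma commute_map_longest_sq (hw₀ : ∀ w : W, cs.length w ≤ cs.length w₀)
    (hfrac : ∀ γ : Γ, ∃ k b, ι (reducedLift cs w₀ ^ 2) ^ k * γ = ι b) (γ : Γ) :
    Commute (ι (reducedLift cs w₀ ^ 2)) γ := by
  obtain ⟨k, b, h⟩ := hfrac γ
  have hb := (commute_longest_sq hw₀ b).symm.map ι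
  rw [← h] at hb
  simpa using ((Commute.refl _).pow_right k).inv_right.mul_right hb

lemma exists_inf_of_fractions [Finite W] (hι : Function.Injective ι)
    (hfrac : ∀ γ : Γ, ∃ k b, ι (reducedLift cs w₀ ^ 2) ^ k * γ = ι b) (T : Set Γ)
    (hT : T.Nonempty) (hbdd : ∃ c, ∀ t ∈ T, c⁻¹ * t ∈ MonoidHom.mrange ι) :
    ∃ g, (∀ t ∈ T, g⁻¹ * t ∈ MonoidHom.mrange ι) ∧
      ∀ e, (∀ t ∈ T, e⁻¹ * t ∈ MonoidHom.mrange ι) → e⁻¹ * g ∈ MonoidHom.mrange ι := by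
  obtain ⟨c, hc⟩ := hbdd
  have hcT (t) (ht : t ∈ T) : ∃ b, c * ι b = t := by
    obtain ⟨b, hb⟩ := hc t ht
    exact ⟨b, by rw [hb, mul_inv_cancel_left]⟩
  obtain ⟨g, hg, hmax⟩ := exists_gcd cs {b | c * ι b ∈ T} <| by
    obtain ⟨t, ht⟩ := hT
    obtain ⟨b, rfl⟩ := hcT t ht
    exact ⟨b, ht⟩
  refine ⟨c * ι g, fun t ht ↦ ?_, fun e he ↦ ?_⟩
  · obtain ⟨b, rfl⟩ := hcT t ht
    obtain ⟨d, rfl⟩ := hg b ht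
    exact ⟨d, by rw [map_mul]; group⟩
  obtain ⟨k, f, hf⟩ := hfrac (c⁻¹ * e)
  set D := reducedLift cs w₀ ^ 2
  have hiff (b) : f ∣ D ^ k * b ↔ e⁻¹ * (c * ι b) ∈ MonoidHom.mrange ι := by
    have hd (d) : D ^ k * b = f * d ↔ ι d = e⁻¹ * (c * ι b) := by
      rw [← hι.eq_iff, map_mul, map_mul, ← hf, map_pow, mul_assoc, mul_right_inj, mul_assoc,
        eq_inv_mul_iff_mul_eq, eq_inv_mul_iff_mul_eq, eq_comm]
    exact exists_congr hd
  obtain ⟨j, hfj, ⟨q, rfl⟩, hj⟩ := exists_lcm cs f (D ^ k)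
  have hqg : q ∣ g := hmax q fun b hb ↦ by
    obtain ⟨p, hp⟩ := hj _ ((hiff b).mpr (he _ hb)) ⟨b, rfl⟩
    rw [mul_assoc] at hp
    exact ⟨p, mul_left_cancel_of_finite cs hp⟩
  exact (hiff g).mp (hfj.trans (mul_dvd_mul_left _ hqg))

theorem isGarside_mrange [Finite W] (hw₀ : ∀ w : W, cs.length w ≤ cs.length w₀)
    (hι : Function.Injective ι)
    (hfrac : ∀ γ : Γ, ∃ k b, ι (reducedLift cs w₀ ^ 2) ^ k * γ = ι b) :
    IsGarside (MonoidHom.mrange ι) (ι (reducedLift cs w₀)) where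
  eq_one_of_inv_mem := by
    rintro _ ⟨b, rfl⟩ ⟨c, hc⟩
    have h : b * c = 1 := hι (by rw [map_mul, hc, mul_inv_cancel, map_one])
    rw [eq_one_of_dvd_one ⟨c, h.symm⟩, map_one]
  mem := ⟨_, rfl⟩
  commute_sq γ := map_pow ι _ 2 ▸ commute_map_longest_sq hw₀ hfrac γ
  conj_mem := by
    rintro _ ⟨b, rfl⟩
    obtain ⟨b', h⟩ := exists_mul_longest_eq hw₀ b
    exact ⟨b', by rw [mul_assoc, ← map_mul, h, map_mul, inv_mul_cancel_left]⟩
  exists_inf := exists_inf_of_fractions hι hfrac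

end ArtinTitsGroup

/-! ### Good elements and their regular eigenvectors -/

section LexPos

/-- Positivity for the ordering of the real vector space `ℂ` that is lexicographic in the real
part and the negated imaginary part. -/
def LexPos (z : ℂ) : Prop := 0 < z.re ∨ z.re = 0 ∧ z.im < 0

variable {a b : ℂ}

lemma LexPos.re_nonneg (ha : LexPos a) : 0 ≤ a.re := by
  rcases ha with ha | ⟨ha, -⟩
  exacts [ha.le, ha.ge]

lemma LexPos.ne_zero (ha : LexPos a) : a ≠ 0 := by
  rintro rfl
  simp [LexPos] at ha

lemma LexPos.add (ha : LexPos a) (hb : LexPos b) : LexPos (a + b) := by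
  simp only [LexPos, Complex.add_re, Complex.add_im] at *
  grind

lemma lexPos_ofReal_mul_iff {t : ℝ} (ht : 0 < t) : LexPos (t * a) ↔ LexPos a := by
  simp only [LexPos, Complex.re_ofReal_mul, Complex.im_ofReal_mul, mul_pos_iff_of_pos_left ht,
    mul_eq_zero, ht.ne', false_or, mul_neg_iff, ht, ht.not_gt, true_and, false_and, or_false]

lemma lexPos_neg_iff (ha : a ≠ 0) : LexPos (-a) ↔ ¬ LexPos a := by
  simp only [LexPos, Complex.neg_re, Complex.neg_im]
  rw [Ne, Complex.ext_iff, Complex.zero_re, Complex.zero_im] at ha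
  grind

lemma LexPos.sum {ι : Type*} {T : Finset ι} {f : ι → ℂ} (h : ∀ i ∈ T, LexPos (f i))
    (hT : T.Nonempty) : LexPos (∑ i ∈ T, f i) := by
  induction hT using Finset.Nonempty.cons_induction with
  | singleton i => simpa using h
  | cons i T hi _ ih =>
    rw [Finset.sum_cons]
    exact (h i (Finset.mem_cons_self i T)).add (ih fun j hj ↦ h j (Finset.mem_cons_of_mem hj))

end LexPos

section Zeta

/-- The primitive root of unity `exp (2πi / N)`. -/
noncomputable def zeta (N : ℕ) : ℂ := Complex.exp ((2 * Real.pi / N : ℝ) * Complex.I)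

variable {N : ℕ}

lemma zeta_ne_zero : zeta N ≠ 0 := Complex.exp_ne_zero _

lemma zeta_pow (n : ℕ) : zeta N ^ n = Complex.exp ((n * (2 * Real.pi / N) : ℝ) * Complex.I) := by
  rw [zeta, ← Complex.exp_nat_mul, ← mul_assoc]
  push_cast
  rfl

lemma zeta_pow_self (hN : N ≠ 0) : zeta N ^ N = 1 := by
  rw [zeta_pow, mul_div_cancel₀ _ (Nat.cast_ne_zero.mpr hN), Complex.ofReal_mul,
    Complex.ofReal_ofNat, Complex.exp_two_pi_mul_I]

lemma zeta_im_pos (hN : 3 ≤ N) : 0 < (zeta N).im := by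
  have h : (3 : ℝ) ≤ N := by exact_mod_cast hN
  rw [zeta, Complex.exp_ofReal_mul_I_im]
  refine Real.sin_pos_of_pos_of_lt_pi (by positivity) ?_
  rw [div_lt_iff₀ (by positivity)]
  nlinarith [Real.pi_pos]

lemma sin_mul_zeta_pow (n : ℕ) :
    (Real.sin ((n + 1) * (2 * Real.pi / N)) : ℂ) * zeta N ^ n =
      Real.sin (2 * Real.pi / N) +
        Real.sin (n * (2 * Real.pi / N)) * (zeta N * zeta N ^ n) := by
  rw [zeta_pow, zeta, add_one_mul]
  generalize (n * (2 * Real.pi / N) : ℝ) = x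
  generalize 2 * Real.pi / N = y
  rw [Real.sin_add, Complex.exp_mul_I, Complex.exp_mul_I, ← Complex.ofReal_cos,
    ← Complex.ofReal_sin, ← Complex.ofReal_cos, ← Complex.ofReal_sin]
  apply Complex.ext <;> simp only [Complex.add_re, Complex.mul_re, Complex.add_im, Complex.mul_im,
    Complex.ofReal_re, Complex.ofReal_im, Complex.I_re, Complex.I_im]
  · linear_combination Real.sin y * Real.sin_sq_add_cos_sq x
  · ring

end Zeta

section SignSequence

/-- The sign behaviour of the heights of `w ^ (-k) • α`, where `α` is a root and `w` is the image
of a balanced `N`-th root of `Δ²`: a change of sign is followed by half a period of constant sign,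
and the sign changes at least once in every half period (rounded up). -/
structure IsSignSequence (N : ℕ) (A : ℤ → ℝ) : Prop where
  three_le : 3 ≤ N
  periodic : ∀ k, A (k + N) = A k
  ne_zero : ∀ k, A k ≠ 0
  mul_pos_of_mul_neg : ∀ (p : ℤ) (i j : ℕ), 2 * (i + j) ≤ N →
    A p * A (p + i) < 0 → 0 < A (p + i) * A (p + i + j)
  mul_neg_of_mul_pos : ∀ p : ℤ,
    0 < A p * A (p + (N / 2 : ℕ)) → A p * A (p + (N - N / 2 : ℕ)) < 0

/-- The coefficients of `signTransform`, namely `i exp (-πi (2k + 1) / N)`. -/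
noncomputable def signCoeff (N : ℕ) (k : ℤ) : ℂ :=
  Complex.I * Complex.exp (-(Real.pi * (2 * k + 1) / N : ℝ) * Complex.I)

/-- The isotypic component of a sequence of period `N` on which the shift acts by `zeta N`. -/
noncomputable def signTransform (N : ℕ) (A : ℤ → ℝ) : ℂ :=
  ∑ k ∈ Finset.range N, A k * signCoeff N k

variable {N : ℕ} {A : ℤ → ℝ}

lemma signCoeff_eq_mul_add_one (k : ℤ) : signCoeff N k = zeta N * signCoeff N (k + 1) := by
  rw [signCoeff, zeta, signCoeff, mul_left_comm, ← Complex.exp_add]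
  congr 2
  push_cast
  ring

lemma signCoeff_natCast (hN : N ≠ 0) : signCoeff N N = signCoeff N 0 := by
  have h (n : ℕ) : signCoeff N 0 = zeta N ^ n * signCoeff N n := by
    induction n with
    | zero => rw [pow_zero, one_mul, Nat.cast_zero]
    | succ n ih => rw [ih, signCoeff_eq_mul_add_one, pow_succ, mul_assoc, Nat.cast_succ]
  rw [h N, zeta_pow_self hN, one_mul]

lemma signTransform_neg : signTransform N (fun k ↦ -A k) = -signTransform N A := by
  simp only [signTransform, Complex.ofReal_neg, neg_mul, Finset.sum_neg_distrib]

lemma signTransform_shift (hN : N ≠ 0) (hper : ∀ k, A (k + N) = A k) :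
    signTransform N (fun k ↦ A (1 + k)) = zeta N * signTransform N A := by
  let f (k : ℕ) : ℂ := A k * signCoeff N k
  have hf : f N = f 0 := by
    have := hper 0
    rw [zero_add] at this
    simp only [f, this, signCoeff_natCast hN, Nat.cast_zero]
  calc signTransform N (fun k ↦ A (1 + k))
    _ = ∑ k ∈ Finset.range N, zeta N * f (k + 1) := by
      refine Finset.sum_congr rfl fun k _ ↦ ?_
      simp only [f, signCoeff_eq_mul_add_one (k : ℤ), Nat.cast_succ, add_comm (1 : ℤ)]
      ring
    _ = zeta N * signTransform N A := by
      rw [← Finset.mul_sum]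
      congr 1
      have := (Finset.sum_range_succ f N).symm.trans (Finset.sum_range_succ' f N)
      rw [hf] at this
      exact (add_right_cancel this).symm

lemma sin_pos_of_two_mul_le {k : ℕ} (hk : 2 * (k + 1) ≤ N) :
    0 < Real.sin (Real.pi * (2 * k + 1) / N) := by
  have h : (2 : ℝ) * (k + 1) ≤ N := by exact_mod_cast hk
  have hN : (0 : ℝ) < N := by linarith [k.cast_nonneg (α := ℝ)]
  refine Real.sin_pos_of_pos_of_lt_pi (by positivity) ?_
  rw [div_lt_iff₀ hN]
  exact mul_lt_mul_of_pos_left (by linarith) Real.pi_pos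

namespace IsSignSequence

lemma neg (h : IsSignSequence N A) : IsSignSequence N (fun k ↦ -A k) where
  three_le := h.three_le
  periodic k := by rw [h.periodic]
  ne_zero k := neg_ne_zero.mpr (h.ne_zero k)
  mul_pos_of_mul_neg := by simpa only [neg_mul_neg] using h.mul_pos_of_mul_neg
  mul_neg_of_mul_pos := by simpa only [neg_mul_neg] using h.mul_neg_of_mul_pos

lemma shift (h : IsSignSequence N A) (q : ℤ) : IsSignSequence N (fun k ↦ A (q + k)) where
  three_le := h.three_le
  periodic k := by rw [← add_assoc, h.periodic]
  ne_zero k := h.ne_zero _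
  mul_pos_of_mul_neg p := by simpa only [add_assoc] using h.mul_pos_of_mul_neg (q + p)
  mul_neg_of_mul_pos p := by simpa only [add_assoc] using h.mul_neg_of_mul_pos (q + p)

lemma pos_or_neg (h : IsSignSequence N A) (k : ℤ) : 0 < A k ∨ A k < 0 :=
  (h.ne_zero k).lt_or_gt.symm

lemma pos_of_neg_neg_one (h : IsSignSequence N A) (h0 : 0 < A 0) (h1 : A (-1) < 0) {k : ℕ}
    (hk : 2 * (k + 1) ≤ N) : 0 < A k := by
  have := h.mul_pos_of_mul_neg (-1) 1 k (by lia)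
  simp only [Nat.cast_one, neg_add_cancel, zero_add] at this
  exact (pos_iff_pos_of_mul_pos (this (mul_neg_of_neg_of_pos h1 h0))).mp h0

lemma neg_of_neg_neg_one (h : IsSignSequence N A) (h0 : 0 < A 0) (h1 : A (-1) < 0) {j : ℕ}
    (hj : 2 * (j + 1) ≤ N) : A (-1 - j) < 0 := by
  refine (h.pos_or_neg _).resolve_left fun hpos ↦ ?_
  have := h.mul_pos_of_mul_neg (-1 - j) j 1 (by lia)
  simp only [sub_add_cancel, Nat.cast_one, neg_add_cancel] at this
  exact (this (mul_neg_of_pos_of_neg hpos h1)).not_ge (mul_nonpos_of_nonpos_of_nonneg h1.le h0.le)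

lemma mul_sin_nonneg (h : IsSignSequence N A) (h0 : 0 < A 0) (h1 : A (-1) < 0) {k : ℕ}
    (hk : k < N) : 0 ≤ A k * Real.sin (Real.pi * (2 * k + 1) / N) := by
  have hN : (N : ℝ) ≠ 0 := by exact_mod_cast (by lia : N ≠ 0)
  rcases lt_trichotomy (2 * k + 1) N with hlt | heq | hgt
  · exact (mul_pos (h.pos_of_neg_neg_one h0 h1 (by lia)) (sin_pos_of_two_mul_le (by lia))).le
  · have : (2 * k + 1 : ℝ) = N := by exact_mod_cast heq
    rw [this, mul_div_cancel_right₀ _ hN, Real.sin_pi, mul_zero]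
  · obtain ⟨j, rfl⟩ : ∃ j, N = k + 1 + j := ⟨N - (k + 1), by lia⟩
    have hA : A k = A (-1 - j) := by
      rw [← h.periodic (-1 - j)]
      congr 1
      push_cast
      ring
    have hsin : Real.sin (Real.pi * (2 * k + 1) / (k + 1 + j : ℕ)) =
        -Real.sin (Real.pi * (2 * j + 1) / (k + 1 + j : ℕ)) := by
      rw [← Real.sin_two_pi_sub]
      congr 1
      field_simp
      push_cast
      ring
    rw [hA, hsin, mul_neg, ← neg_mul]
    exact (mul_pos (neg_pos.mpr (h.neg_of_neg_neg_one h0 h1 (by lia)))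
      (sin_pos_of_two_mul_le (by lia))).le

lemma re_signTransform_pos (h : IsSignSequence N A) (h0 : 0 < A 0) (h1 : A (-1) < 0) :
    0 < (signTransform N A).re := by
  have hN := h.three_le
  have hre : (signTransform N A).re =
      ∑ k ∈ Finset.range N, A k * Real.sin (Real.pi * (2 * k + 1) / N) := by
    rw [signTransform, Complex.re_sum]
    refine Finset.sum_congr rfl fun k _ ↦ ?_
    rw [Complex.re_ofReal_mul, signCoeff, ← Complex.ofReal_neg, Complex.I_mul_re,
      Complex.exp_ofReal_mul_I_im, Real.sin_neg, neg_neg, Int.cast_natCast]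
  rw [hre]
  refine Finset.sum_pos' (fun k hk ↦ h.mul_sin_nonneg h0 h1 (Finset.mem_range.mp hk))
    ⟨0, Finset.mem_range.mpr (by lia), mul_pos ?_ (sin_pos_of_two_mul_le (by lia))⟩
  exact_mod_cast h0

lemma re_zeta_mul_signTransform_neg (h : IsSignSequence N A) (h0 : 0 < A 0) (h1 : A 1 < 0) :
    (zeta N * signTransform N A).re < 0 := by
  have := (h.shift 1).neg.re_signTransform_pos (by simpa using h1) (by simpa using h0)
  rwa [signTransform_neg, signTransform_shift (by have := h.three_le; lia) h.periodic,
    Complex.neg_re, neg_pos] at this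

lemma zeta_pow_mul_signTransform (h : IsSignSequence N A) (n : ℕ) :
    zeta N ^ n * signTransform N (fun k ↦ A (-n + k)) = signTransform N A := by
  induction n with
  | zero => simp
  | succ n ih =>
    have hN : N ≠ 0 := by have := h.three_le; lia
    have := signTransform_shift (A := fun k ↦ A (-(n + 1 : ℕ) + k)) hN (h.shift _).periodic
    rw [pow_succ, mul_assoc, ← this, ← ih]
    congr 3 with k
    congr 1
    push_cast
    ring

lemma exists_neg_of_pos (h : IsSignSequence N A) (h0 : 0 < A 0) :
    ∃ n : ℕ, n + 1 ≤ N - N / 2 ∧ A (-n - 1) < 0 ∧ ∀ j : ℕ, j ≤ n → 0 < A (-j) := by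
  have h3 := h.three_le
  have hex : ∃ n : ℕ, n + 1 ≤ N - N / 2 ∧ A (-n - 1) < 0 := by
    by_contra! hpos
    have hpos (m : ℕ) (hm : 1 ≤ m) (hm' : m ≤ N - N / 2) (k : ℤ) (hk : k = N - m) : 0 < A k := by
      rw [show k = -(m - 1 : ℕ) - 1 + N by lia, h.periodic]
      exact (h.pos_or_neg _).resolve_right (hpos (m - 1) (by lia)).not_gt
    have hhalf := h.mul_neg_of_mul_pos 0
      (mul_pos h0 (hpos (N - N / 2) (by lia) le_rfl _ (by lia)))
    exact hhalf.not_gt (mul_pos h0 (hpos (N / 2) (by lia) (by lia) _ (by lia)))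
  classical
  obtain ⟨hle, hneg⟩ := Nat.find_spec hex
  refine ⟨Nat.find hex, hle, hneg, fun j hj ↦ ?_⟩
  rcases j with _ | j
  · simpa using h0
  · have := Nat.find_min hex hj
    rw [not_and, show (-(j : ℤ) - 1) = -(j + 1 : ℕ) by lia] at this
    exact (h.pos_or_neg _).resolve_right (this (by lia))

lemma re_signTransform_shift_pos (h : IsSignSequence N A) {n : ℕ} (hpos : 0 < A (-n))
    (hneg : A (-n - 1) < 0) : 0 < (signTransform N (fun k ↦ A (-n + k))).re :=
  (h.shift (-n)).re_signTransform_pos (by rwa [add_zero]) hneg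

theorem signTransform_ne_zero (h : IsSignSequence N A) : signTransform N A ≠ 0 := by
  wlog h0 : 0 < A 0 generalizing A
  · have := this h.neg (neg_pos.mpr ((h.pos_or_neg 0).resolve_left h0))
    rwa [signTransform_neg, neg_ne_zero] at this
  obtain ⟨n, -, hneg, hpos⟩ := h.exists_neg_of_pos h0
  have hre := h.re_signTransform_shift_pos (hpos n le_rfl) hneg
  rw [← h.zeta_pow_mul_signTransform n]
  refine mul_ne_zero (pow_ne_zero _ zeta_ne_zero) fun hzero ↦ ?_
  rw [hzero, Complex.zero_re] at hre
  exact hre.false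

lemma neg_one_of_forall_pos (h : IsSignSequence N A) {n : ℕ} (hn : n + 1 ≤ N - N / 2)
    (hN : N ≤ 2 * (n + 1)) (hpos : ∀ j : ℕ, j ≤ n → 0 < A (-j)) : A 1 < 0 := by
  have h3 := h.three_le
  have hpos' (j : ℕ) (hj : j ≤ n) (k : ℤ) (hk : k = -j + N) : 0 < A k := by
    rw [hk, h.periodic]
    exact hpos j hj
  refine (h.pos_or_neg 1).resolve_left fun h1 ↦ ?_
  have hhalf := h.mul_neg_of_mul_pos 1 (mul_pos h1 (hpos' n le_rfl _ (by lia)))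
  exact hhalf.not_gt (mul_pos h1 (hpos' (N / 2 - 1) (by lia) _ (by lia)))

theorem lexPos_signTransform (h : IsSignSequence N A) (h0 : 0 < A 0)
    (hp : LexPos (zeta N * signTransform N A)) : LexPos (signTransform N A) := by
  obtain ⟨n, hn, hneg, hpos⟩ := h.exists_neg_of_pos h0
  have hre := h.re_signTransform_shift_pos (hpos n le_rfl) hneg
  have hshift := h.zeta_pow_mul_signTransform n
  rcases n.eq_zero_or_pos with rfl | hn0
  · rw [pow_zero, one_mul] at hshift
    exact .inl (hshift ▸ hre)
  have hlt : 2 * (n + 1) < N := by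
    by_contra! hle
    have h1 := h.neg_one_of_forall_pos hn hle hpos
    exact (h.re_zeta_mul_signTransform_neg h0 h1).not_ge hp.re_nonneg
  have hltR : 2 * ((n : ℝ) + 1) < N := by exact_mod_cast hlt
  have hN : (0 : ℝ) < N := by linarith [n.cast_nonneg (α := ℝ)]
  have hsin {t : ℝ} (ht : 0 < t) (htN : 2 * t < N) : 0 < Real.sin (t * (2 * Real.pi / N)) := by
    refine Real.sin_pos_of_pos_of_lt_pi (mul_pos ht (by positivity)) ?_
    rw [← mul_div_assoc, div_lt_iff₀ (by linarith)]
    nlinarith [Real.pi_pos]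
  rw [← lexPos_ofReal_mul_iff (hsin (by positivity) hltR)]
  have hcomb : (Real.sin ((n + 1) * (2 * Real.pi / N)) : ℂ) * signTransform N A =
      (Real.sin (1 * (2 * Real.pi / N)) : ℝ) * signTransform N (fun k ↦ A (-n + k)) +
        (Real.sin (n * (2 * Real.pi / N)) : ℝ) * (zeta N * signTransform N A) := by
    rw [← hshift, ← mul_assoc, sin_mul_zeta_pow, one_mul]
    ring
  rw [hcomb]
  refine LexPos.add ?_ ?_
  · exact (lexPos_ofReal_mul_iff (hsin one_pos (by linarith))).mpr (.inl hre)
  · exact (lexPos_ofReal_mul_iff (hsin (by exact_mod_cast hn0) (by linarith))).mpr hp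

end IsSignSequence

end SignSequence

section LexPos

lemma im_mul_mul_self (a b : ℂ) :
    ((a * b).im : ℂ) * b = b.im * (a * b) + (a.im * Complex.normSq b : ℝ) := by
  apply Complex.ext <;> simp only [Complex.add_re, Complex.add_im, Complex.mul_re,
    Complex.mul_im, Complex.ofReal_re, Complex.ofReal_im, Complex.normSq_apply] <;> ring

-- `b * z` lies in the convex cone spanned by `z` and `a * b * z`.
lemma LexPos.mul_of_mul_mul {a b z : ℂ} (ha : 0 ≤ a.im) (hb : 0 ≤ b.im) (hab : 0 ≤ (a * b).im)
    (hpos : 0 < a.im ∨ 0 < b.im) (hz : LexPos z) (habz : LexPos (a * b * z)) :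
    LexPos (b * z) := by
  have hb0 : b ≠ 0 := fun h ↦ habz.ne_zero (by rw [h, mul_zero, zero_mul])
  have hcone : LexPos ((b.im : ℂ) * (a * b * z) + (a.im * Complex.normSq b : ℝ) * z) := by
    have hscale (h : 0 < a.im) : LexPos ((a.im * Complex.normSq b : ℝ) * z) :=
      (lexPos_ofReal_mul_iff (mul_pos h (Complex.normSq_pos.mpr hb0))).mpr hz
    rcases hb.eq_or_lt with hb | hb
    · rw [← hb, Complex.ofReal_zero, zero_mul, zero_add]
      exact hscale (hpos.resolve_right hb.not_lt)
    · have hleft := (lexPos_ofReal_mul_iff hb).mpr habz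
      rcases ha.eq_or_lt with ha | ha
      · rwa [← ha, zero_mul, Complex.ofReal_zero, zero_mul, add_zero]
      · exact hleft.add (hscale ha)
  rw [← mul_assoc, ← add_mul, ← im_mul_mul_self, mul_assoc] at hcone
  rcases hab.eq_or_lt with hab | hab
  · rw [← hab, Complex.ofReal_zero, zero_mul] at hcone
    exact absurd rfl hcone.ne_zero
  · exact (lexPos_ofReal_mul_iff hab).mp hcone

end LexPos

section Chamber

variable {B : Type*} {M : CoxeterMatrix B} {W : Type*} [Group W] (cs : CoxeterSystem M W)

lemma simple_injective : Function.Injective cs.simple := by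
  intro s t h
  have hneg : geomRep cs (cs.simple t) (simpleRoot s) < 0 := by
    rw [← h, geomRep_simple_simpleRoot, neg_lt_zero]
    exact simpleRoot_pos s
  obtain ⟨c, -, hc⟩ := (isRoot_simpleRoot cs s).exists_eq_smul_simpleRoot (simpleRoot_pos s) hneg
  by_contra hst
  have := DFunLike.congr_fun hc s
  simp [simpleRoot, hst] at this

lemma finite_simple (cs : CoxeterSystem M W) [Finite W] : Finite B :=
  Finite.of_injective _ (simple_injective cs)

lemma finite_setOf_isRoot [Finite W] : {β | IsRoot cs β}.Finite := by
  have := finite_simple cs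
  refine (Set.finite_range fun q : W × B ↦ geomRep cs q.1 (simpleRoot q.2)).subset ?_
  rintro β ⟨w, s, rfl⟩
  exact ⟨(w, s), rfl⟩

/-- A functional is regular if it vanishes on no root, i.e. it avoids every complexified
reflecting hyperplane. -/
def IsRegular (v : (B →₀ ℝ) →ₗ[ℝ] ℂ) : Prop := ∀ β, IsRoot cs β → v β ≠ 0

/-- `v` lies in the chamber indexed by `g`: it is lexicographically positive on the image under
`g` of every simple root. -/
def InChamber (v : (B →₀ ℝ) →ₗ[ℝ] ℂ) (g : W) : Prop :=
  ∀ s, LexPos (v (geomRep cs g (simpleRoot s)))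

variable {cs} {v : (B →₀ ℝ) →ₗ[ℝ] ℂ} {g : W} {β : B →₀ ℝ}

lemma InChamber.lexPos (h : InChamber cs v g) (hβ : 0 < β) : LexPos (v (geomRep cs g β)) := by
  rw [← LinearMap.comp_apply, linearMap_eq_sum_simpleRoot (v ∘ₗ geomRep cs g) β]
  refine LexPos.sum (fun s hs ↦ ?_) (Finsupp.support_nonempty_iff.mpr hβ.ne')
  exact (lexPos_ofReal_mul_iff
    ((hβ.le s).lt_of_ne (Finsupp.mem_support_iff.mp hs).symm)).mpr (h s)

lemma InChamber.pos_iff (h : InChamber cs v g) (hβ : IsRoot cs β) :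
    0 < geomRep cs g⁻¹ β ↔ LexPos (v β) := by
  constructor <;> intro hpos
  · have := h.lexPos hpos
    rwa [(geomRep cs).self_inv_apply] at this
  · refine (hβ.geomRep g⁻¹).pos_or_neg.resolve_right fun hneg ↦ ?_
    have hlex := h.lexPos (neg_pos.mpr hneg)
    rw [map_neg, (geomRep cs).self_inv_apply, map_neg, lexPos_neg_iff hpos.ne_zero] at hlex
    exact hlex hpos

lemma InChamber.neg_iff (h : InChamber cs v g) (hβ : IsRoot cs β) :
    geomRep cs g⁻¹ β < 0 ↔ ¬ LexPos (v β) := by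
  rw [← h.pos_iff hβ]
  exact ⟨fun hneg ↦ hneg.asymm, (hβ.geomRep g⁻¹).pos_or_neg.resolve_left⟩

variable (cs v g) in
/-- The positive roots on whose image under `g` the functional `v` is not positive; when there are
none, `v` lies in the chamber of `g`. -/
def badRoots : Set (B →₀ ℝ) := {β | IsRoot cs β ∧ 0 < β ∧ ¬ LexPos (v (geomRep cs g β))}

lemma finite_badRoots [Finite W] : (badRoots cs v g).Finite :=
  (finite_setOf_isRoot cs).subset fun _ hβ ↦ hβ.1

lemma geomRep_simple_mem_badRoots (hv : IsRegular cs v) {s : B}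
    (hs : ¬ LexPos (v (geomRep cs g (simpleRoot s)))) (hβ : β ∈ badRoots cs v (g * cs.simple s)) :
    geomRep cs (cs.simple s) β ∈ badRoots cs v g := by
  obtain ⟨hroot, hpos, hlex⟩ := hβ
  rw [geomRep_mul_apply] at hlex
  refine ⟨hroot.geomRep _, (hroot.geomRep _).pos_or_neg.resolve_right fun hneg ↦ hlex ?_, hlex⟩
  obtain ⟨c, hc, rfl⟩ := hroot.exists_eq_smul_simpleRoot hpos hneg
  rw [map_smul, geomRep_simple_simpleRoot, map_smul, map_smul, Complex.real_smul,
    lexPos_ofReal_mul_iff hc, map_neg, map_neg,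
    lexPos_neg_iff (hv _ ((isRoot_simpleRoot cs s).geomRep g))]
  exact hs

lemma ncard_badRoots_mul_simple_lt [Finite W] (hv : IsRegular cs v) {s : B}
    (hs : ¬ LexPos (v (geomRep cs g (simpleRoot s)))) :
    (badRoots cs v (g * cs.simple s)).ncard < (badRoots cs v g).ncard := by
  rw [← Set.ncard_image_of_injective _ ((geomRep cs).apply_bijective (cs.simple s)).injective]
  refine Set.ncard_lt_ncard (Set.ssubset_iff_exists.mpr ⟨?_, simpleRoot s,
    ⟨isRoot_simpleRoot cs s, simpleRoot_pos s, hs⟩, ?_⟩) finite_badRoots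
  · rintro - ⟨β, hβ, rfl⟩
    exact geomRep_simple_mem_badRoots hv hs hβ
  · rintro ⟨β, ⟨-, hpos, -⟩, hβ⟩
    have := congrArg (geomRep cs (cs.simple s)) hβ
    rw [← geomRep_mul_apply, cs.simple_mul_simple_self, map_one, Module.End.one_apply,
      geomRep_simple_simpleRoot] at this
    exact hpos.asymm (this ▸ neg_lt_zero.mpr (simpleRoot_pos s))

theorem IsRegular.exists_inChamber [Finite W] (hv : IsRegular cs v) : ∃ g, InChamber cs v g := by
  obtain ⟨g, hg⟩ := Finite.exists_min fun g ↦ (badRoots cs v g).ncard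
  refine ⟨g, fun s ↦ ?_⟩
  by_contra hs
  exact (hg (g * cs.simple s)).not_gt (ncard_badRoots_mul_simple_lt hv hs)

end Chamber

section Height

variable {B : Type*} {M : CoxeterMatrix B} {W : Type*} [Group W] {cs : CoxeterSystem M W}

/-- The height of a vector, i.e. the sum of its coordinates in the basis of simple roots. -/
noncomputable def height : (B →₀ ℝ) →ₗ[ℝ] ℝ := Finsupp.linearCombination ℝ fun _ ↦ (1 : ℝ)

lemma height_pos {β : B →₀ ℝ} (hβ : 0 < β) : 0 < height β := by
  rw [height, Finsupp.linearCombination_apply]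
  refine Finset.sum_pos (fun s hs ↦ ?_) (Finsupp.support_nonempty_iff.mpr hβ.ne')
  simp only [smul_eq_mul, mul_one]
  exact (hβ.le s).lt_of_ne (Finsupp.mem_support_iff.mp hs).symm

lemma height_neg {β : B →₀ ℝ} (hβ : β < 0) : height β < 0 := by
  rw [← neg_pos, ← map_neg]
  exact height_pos (neg_pos.mpr hβ)

lemma IsRoot.height_pos_iff {β : B →₀ ℝ} (hβ : IsRoot cs β) : 0 < height β ↔ 0 < β :=
  ⟨fun h ↦ hβ.pos_or_neg.resolve_right fun hneg ↦ h.asymm (height_neg hneg), height_pos⟩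

lemma IsRoot.height_neg_iff {β : B →₀ ℝ} (hβ : IsRoot cs β) : height β < 0 ↔ β < 0 :=
  ⟨fun h ↦ hβ.pos_or_neg.resolve_left fun hpos ↦ h.asymm (height_pos hpos), height_neg⟩

lemma IsRoot.height_ne_zero {β : B →₀ ℝ} (hβ : IsRoot cs β) : height β ≠ 0 :=
  hβ.pos_or_neg.elim (fun h ↦ (height_pos h).ne') fun h ↦ (height_neg h).ne

end Height

section GoodElement

variable {B : Type*} {M : CoxeterMatrix B} {W : Type*} [Group W] {cs : CoxeterSystem M W}

lemma semiconjBy_reducedLift {w g g' : W}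
    (hg : ∀ β, IsRoot cs β → 0 < geomRep cs g⁻¹ β → geomRep cs g⁻¹ (geomRep cs w⁻¹ β) < 0 →
      geomRep cs g'⁻¹ (geomRep cs w⁻¹ β) < 0)
    (hg' : ∀ β, IsRoot cs β → 0 < geomRep cs g⁻¹ β → geomRep cs g'⁻¹ β < 0 →
      geomRep cs g'⁻¹ (geomRep cs w⁻¹ β) < 0) :
    SemiconjBy (reducedLift cs (g⁻¹ * g')) (reducedLift cs (g'⁻¹ * w * g'))
      (reducedLift cs (g⁻¹ * w * g)) := by
  have hleft : LengthAdditive cs (g⁻¹ * g') (g'⁻¹ * w * g') := by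
    refine LengthAdditive.of_geomRep_inv_neg fun β hβ hpos hneg ↦ ?_
    have := hg' _ (hβ.geomRep g) (by rwa [(geomRep cs).inv_self_apply])
      (by rwa [← geomRep_mul_apply, ← inv_inv g, ← mul_inv_rev])
    simpa only [← geomRep_mul_apply, mul_inv_rev, inv_inv, mul_assoc,
      mul_inv_cancel_left] using this
  have hright : LengthAdditive cs (g⁻¹ * w * g) (g⁻¹ * g') := by
    refine LengthAdditive.of_geomRep_inv_neg fun β hβ hpos hneg ↦ ?_
    have := hg _ (hβ.geomRep g) (by rwa [(geomRep cs).inv_self_apply])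
      (by simpa only [← geomRep_mul_apply, mul_inv_rev, inv_inv, mul_assoc] using hneg)
    simpa only [← geomRep_mul_apply, mul_inv_rev, inv_inv, mul_assoc, inv_mul_cancel_left,
      mul_inv_cancel_left] using this
  rw [SemiconjBy, hleft.reducedLift_mul, hright.reducedLift_mul]
  congr 1
  group

/-- The properties of the image `w` in `W` of a balanced `N`-th root of `Δ²` that determine its
conjugacy class, where `N ≥ 3`. -/
structure IsGoodElement (cs : CoxeterSystem M W) (w : W) (N : ℕ) : Prop where
  three_le : 3 ≤ N
  pow_eq_one : w ^ N = 1
  lengthAdditive : ∀ i j, 2 * (i + j) ≤ N → LengthAdditive cs (w ^ i) (w ^ j)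
  geomRep_inv_neg : ∀ β, IsRoot cs β → 0 < β → 0 < geomRep cs (w ^ (N / 2))⁻¹ β →
    geomRep cs (w ^ (N - N / 2))⁻¹ β < 0

namespace IsGoodElement

variable {w : W} {N : ℕ} {β : B →₀ ℝ}

lemma height_mul_height_pos (h : IsGoodElement cs w N) (hβ : IsRoot cs β) {i j : ℕ}
    (hij : 2 * (i + j) ≤ N) (hneg : height β * height (geomRep cs (w ^ i)⁻¹ β) < 0) :
    0 < height (geomRep cs (w ^ i)⁻¹ β) * height (geomRep cs (w ^ (i + j))⁻¹ β) := by
  wlog hpos : 0 < β generalizing β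
  · have := this hβ.neg (by simpa only [map_neg, neg_mul_neg] using hneg)
      (neg_pos.mpr (hβ.pos_or_neg.resolve_left hpos))
    simpa only [map_neg, neg_mul_neg] using this
  have hlt := neg_of_mul_neg_right hneg (height_pos hpos).le
  refine mul_pos_of_neg_of_neg hlt (height_neg ?_)
  rw [pow_add]
  exact (h.lengthAdditive i j hij).geomRep_inv_neg hβ hpos ((hβ.geomRep _).height_neg_iff.mp hlt)

lemma height_mul_height_neg (h : IsGoodElement cs w N) (hβ : IsRoot cs β)
    (hpos : 0 < height β * height (geomRep cs (w ^ (N / 2))⁻¹ β)) :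
    height β * height (geomRep cs (w ^ (N - N / 2))⁻¹ β) < 0 := by
  wlog hβpos : 0 < β generalizing β
  · have := this hβ.neg (by simpa only [map_neg, neg_mul_neg] using hpos)
      (neg_pos.mpr (hβ.pos_or_neg.resolve_left hβpos))
    simpa only [map_neg, neg_mul_neg] using this
  have hlt := pos_of_mul_pos_right hpos (height_pos hβpos).le
  exact mul_neg_of_pos_of_neg (height_pos hβpos)
    (height_neg (h.geomRep_inv_neg β hβ hβpos ((hβ.geomRep _).height_pos_iff.mp hlt)))

theorem isSignSequence (h : IsGoodElement cs w N) (hβ : IsRoot cs β) :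
    IsSignSequence N fun k : ℤ ↦ height (geomRep cs (w ^ (-k)) β) := by
  have hshift (p : ℤ) (i : ℕ) :
      geomRep cs (w ^ (-(p + i))) β = geomRep cs (w ^ i)⁻¹ (geomRep cs (w ^ (-p)) β) := by
    rw [← geomRep_mul_apply, neg_add_rev, zpow_add, zpow_neg w i, zpow_natCast]
  refine ⟨h.three_le, fun k ↦ ?_, fun k ↦ (hβ.geomRep _).height_ne_zero,
    fun p i j hij hneg ↦ ?_, fun p hpos ↦ ?_⟩
  · rw [hshift, h.pow_eq_one, inv_one, map_one, Module.End.one_apply]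
  · rw [hshift] at hneg ⊢
    rw [add_assoc, ← Nat.cast_add, hshift]
    exact h.height_mul_height_pos (hβ.geomRep _) hij hneg
  · rw [hshift] at hpos ⊢
    exact h.height_mul_height_neg (hβ.geomRep _) hpos

end IsGoodElement

/-- `v` is a regular eigenvector of `w` in the sense of Springer, with eigenvalue `zeta N`, in the
dual of the complexified reflection representation. -/
structure IsRegularEigenvector (cs : CoxeterSystem M W) (w : W) (N : ℕ)
    (v : (B →₀ ℝ) →ₗ[ℝ] ℂ) : Prop where
  isRegular : IsRegular cs v
  apply_inv : ∀ β, v (geomRep cs w⁻¹ β) = zeta N * v β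

variable (cs) in
/-- The projection of the height functional to the `zeta N`-eigenspace of `w`. -/
noncomputable def heightProjection (w : W) (N : ℕ) : (B →₀ ℝ) →ₗ[ℝ] ℂ :=
  ∑ k ∈ Finset.range N, (height ∘ₗ geomRep cs (w ^ (-(k : ℤ)))).smulRight (signCoeff N k)

lemma heightProjection_apply (w : W) (N : ℕ) (β : B →₀ ℝ) : heightProjection cs w N β =
    signTransform N fun k : ℤ ↦ height (geomRep cs (w ^ (-k)) β) := by
  simp only [heightProjection, LinearMap.sum_apply, LinearMap.smulRight_apply,
    LinearMap.comp_apply, Complex.real_smul, signTransform]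

namespace IsGoodElement

variable {w : W} {N : ℕ}

lemma isRegularEigenvector_heightProjection (h : IsGoodElement cs w N) :
    IsRegularEigenvector cs w N (heightProjection cs w N) := by
  refine ⟨fun β hβ ↦ ?_, fun β ↦ ?_⟩
  · rw [heightProjection_apply]
    exact (h.isSignSequence hβ).signTransform_ne_zero
  · have hN : N ≠ 0 := by have := h.three_le; lia
    rw [heightProjection_apply, heightProjection_apply, ← signTransform_shift hN]
    · simp only [← geomRep_mul_apply, neg_add_rev, zpow_add, zpow_neg_one]
    · intro k
      rw [neg_add_rev, zpow_add, zpow_neg, zpow_natCast, h.pow_eq_one, inv_one, one_mul]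

theorem exists_semiconjBy [Finite W] (h : IsGoodElement cs w N) :
    ∃ v g, IsRegularEigenvector cs w N v ∧ InChamber cs v g ∧
      SemiconjBy (reducedLift cs g) (reducedLift cs (g⁻¹ * w * g)) (reducedLift cs w) := by
  have hv := h.isRegularEigenvector_heightProjection
  obtain ⟨g, hg⟩ := hv.isRegular.exists_inChamber
  refine ⟨_, g, hv, hg, ?_⟩
  have := semiconjBy_reducedLift (cs := cs) (w := w) (g := 1) (g' := g) ?_ ?_
  · simpa only [inv_one, one_mul, mul_one] using this
  all_goals
    intro β hβ hpos hneg
    rw [inv_one, map_one, Module.End.one_apply] at hpos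
    rw [hg.neg_iff (hβ.geomRep _), hv.apply_inv]
    intro hlex
    rw [heightProjection_apply] at hlex
  · have := (h.isSignSequence hβ).re_zeta_mul_signTransform_neg (by simpa using height_pos hpos)
      (by simpa using height_neg hneg)
    exact this.not_ge hlex.re_nonneg
  · rw [hg.neg_iff hβ, heightProjection_apply] at hneg
    exact hneg ((h.isSignSequence hβ).lexPos_signTransform (by simpa using height_pos hpos) hlex)

end IsGoodElement

lemma IsRegularEigenvector.semiconjBy_of_sector {w : W} {N : ℕ} (hN : 3 ≤ N)
    {v v' : (B →₀ ℝ) →ₗ[ℝ] ℂ} (hv : IsRegularEigenvector cs w N v)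
    (hv' : IsRegularEigenvector cs w N v')
    (hsector : ∀ β, IsRoot cs β → ∃ τ : ℂ, v' β = τ * v β ∧ 0 ≤ τ.im ∧ 0 ≤ (zeta N * τ).im)
    {g g' : W} (hg : InChamber cs v g) (hg' : InChamber cs v' g') :
    SemiconjBy (reducedLift cs (g⁻¹ * g')) (reducedLift cs (g'⁻¹ * w * g'))
      (reducedLift cs (g⁻¹ * w * g)) := by
  have hz := zeta_im_pos hN
  apply semiconjBy_reducedLift
  all_goals
    intro β hβ hpos hneg
    rw [hg'.neg_iff (hβ.geomRep _), hv'.apply_inv]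
    rw [hg.pos_iff hβ] at hpos
    intro hlex
    obtain ⟨τ, hτ, hτ0, hτ1⟩ := hsector β hβ
    rw [hτ] at hlex
  · rw [hg.neg_iff (hβ.geomRep _), hv.apply_inv] at hneg
    refine hneg (hpos.mul_of_mul_mul hτ0 hz.le ?_ (.inr hz) ?_)
    · rwa [mul_comm]
    · rwa [mul_comm τ, mul_assoc]
  · rw [hg'.neg_iff hβ, hτ] at hneg
    exact hneg (hpos.mul_of_mul_mul hz.le hτ0 hτ1 (.inl hz) (by rwa [mul_assoc]))

end GoodElement

/-! ### Lifting conjugacy along the chambers -/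

section Connectivity

open Filter Topology

variable {B : Type*} {M : CoxeterMatrix B} {W : Type*} [Group W] {cs : CoxeterSystem M W}
  {w : W} {N : ℕ} {v v₀ v₁ : (B →₀ ℝ) →ₗ[ℝ] ℂ}

lemma IsRegularEigenvector.smul (hv : IsRegularEigenvector cs w N v) {c : ℂ} (hc : c ≠ 0) :
    IsRegularEigenvector cs w N (c • v) where
  isRegular β hβ := mul_ne_zero hc (hv.isRegular β hβ)
  apply_inv β := by
    rw [LinearMap.smul_apply, LinearMap.smul_apply, hv.apply_inv, smul_eq_mul, smul_eq_mul,
      mul_left_comm]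

lemma IsRegularEigenvector.comp_geomRep_inv (hv : IsRegularEigenvector cs w N v) (x : W) :
    IsRegularEigenvector cs (x * w * x⁻¹) N (v ∘ₗ geomRep cs x⁻¹) where
  isRegular β hβ := hv.isRegular _ (hβ.geomRep _)
  apply_inv β := by
    rw [LinearMap.comp_apply, LinearMap.comp_apply, ← hv.apply_inv, ← geomRep_mul_apply,
      ← geomRep_mul_apply, mul_inv_rev, mul_inv_rev, inv_inv, inv_mul_cancel_left]

lemma InChamber.comp_geomRep_inv {g : W} (hg : InChamber cs v g) (x : W) :
    InChamber cs (v ∘ₗ geomRep cs x⁻¹) (x * g) := fun s ↦ by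
  rw [LinearMap.comp_apply, ← geomRep_mul_apply, inv_mul_cancel_left]
  exact hg s

lemma lineMap_apply_apply (t : ℂ) (β : B →₀ ℝ) :
    AffineMap.lineMap v₀ v₁ t β = (1 - t) * v₀ β + t * v₁ β := by
  rw [AffineMap.lineMap_apply_module, LinearMap.add_apply, LinearMap.smul_apply,
    LinearMap.smul_apply, smul_eq_mul, smul_eq_mul]

lemma IsRegularEigenvector.lineMap (h₀ : IsRegularEigenvector cs w N v₀)
    (h₁ : IsRegularEigenvector cs w N v₁) {t : ℂ}
    (ht : IsRegular cs (AffineMap.lineMap v₀ v₁ t)) :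
    IsRegularEigenvector cs w N (AffineMap.lineMap v₀ v₁ t) where
  isRegular := ht
  apply_inv β := by
    rw [lineMap_apply_apply, lineMap_apply_apply, h₀.apply_inv, h₁.apply_inv]
    ring

lemma IsRegular.countable_not_isRegular_lineMap [Finite W] (h₀ : IsRegular cs v₀) :
    {t : ℂ | ¬ IsRegular cs (AffineMap.lineMap v₀ v₁ t)}.Countable := by
  have hsub : {t : ℂ | ¬ IsRegular cs (AffineMap.lineMap v₀ v₁ t)} ⊆
      ⋃ β ∈ {β | IsRoot cs β}, {t : ℂ | (1 - t) * v₀ β + t * v₁ β = 0} := fun t ht ↦ by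
    simpa [IsRegular, lineMap_apply_apply] using ht
  refine ((finite_setOf_isRoot cs).countable.biUnion fun β hβ ↦ ?_).mono hsub
  refine Set.Subsingleton.countable fun t ht t' ht' ↦ ?_
  rw [Set.mem_ofPred_eq] at ht ht'
  by_contra hne
  have hmul : (t - t') * (v₁ β - v₀ β) = 0 := by linear_combination ht - ht'
  have heq := (mul_eq_zero.mp hmul).resolve_left (sub_ne_zero.mpr hne)
  exact h₀ β hβ (by linear_combination ht - t * heq)

lemma exists_im_pos_zeta_mul_im_pos (hN : 3 ≤ N) :
    ∃ ω : ℂ, 0 < ω.im ∧ 0 < (zeta N * ω).im := by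
  have hz := zeta_im_pos hN
  refine ⟨1 - starRingEnd ℂ (zeta N), by simpa using hz, ?_⟩
  rw [mul_sub, mul_one, Complex.mul_conj, Complex.sub_im, Complex.ofReal_im, sub_zero]
  exact hz

variable {Γ : Type*} [Group Γ] (ι : ArtinTitsMonoid M →* Γ)

variable (cs w) in
/-- The lifts of the conjugates of `w` attached to the chambers of `v` and of `v'` are conjugate
under `ι`. -/
def LiftsConj (v v' : (B →₀ ℝ) →ₗ[ℝ] ℂ) : Prop :=
  ∀ g g', InChamber cs v g → InChamber cs v' g' →
    IsConj (ι (reducedLift cs (g⁻¹ * w * g))) (ι (reducedLift cs (g'⁻¹ * w * g')))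

variable {ι} {v' v'' : (B →₀ ℝ) →ₗ[ℝ] ℂ}

lemma LiftsConj.symm (h : LiftsConj cs w ι v v') : LiftsConj cs w ι v' v :=
  fun g g' hg hg' ↦ (h g' g hg' hg).symm

lemma LiftsConj.trans [Finite W] (hv' : IsRegular cs v') (h : LiftsConj cs w ι v v')
    (h' : LiftsConj cs w ι v' v'') : LiftsConj cs w ι v v'' := fun g g' hg hg' ↦ by
  obtain ⟨k, hk⟩ := hv'.exists_inChamber
  exact (h g k hg hk).trans (h' k g' hk hg')

lemma isConj_of_semiconjBy {a x y : Γ} (h : SemiconjBy a x y) : IsConj x y :=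
  ⟨toUnits a, h⟩

lemma IsRegularEigenvector.liftsConj_of_sector (hN : 3 ≤ N) (hv : IsRegularEigenvector cs w N v)
    (hv' : IsRegularEigenvector cs w N v')
    (hsector : ∀ β, IsRoot cs β → ∃ τ : ℂ, v' β = τ * v β ∧ 0 ≤ τ.im ∧ 0 ≤ (zeta N * τ).im) :
    LiftsConj cs w ι v v' := fun _ _ hg hg' ↦
  (isConj_of_semiconjBy ((hv.semiconjBy_of_sector hN hv' hsector hg hg').map ι)).symm

-- Rotating by `ω` moves the ratios `v' β / v β`, which are close to `1`, inside an open sector.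
lemma IsRegularEigenvector.liftsConj_of_ratio [Finite W] (hN : 3 ≤ N) {ω : ℂ} (hω : 0 < ω.im)
    (hζω : 0 < (zeta N * ω).im) (hv : IsRegularEigenvector cs w N v)
    (hv' : IsRegularEigenvector cs w N v')
    (hratio : ∀ β, IsRoot cs β → 0 < (ω * (v' β / v β)).im ∧ 0 < (zeta N * (ω * (v' β / v β))).im) :
    LiftsConj cs w ι v v' := by
  have hω0 : ω ≠ 0 := fun h ↦ hω.ne' (by rw [h, Complex.zero_im])
  have hrot := hv'.smul hω0
  refine (hv.liftsConj_of_sector hN hrot fun β hβ ↦ ?_).trans hrot.isRegular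
    (hv'.liftsConj_of_sector hN hrot fun β _ ↦ ⟨ω, rfl, hω.le, hζω.le⟩).symm
  refine ⟨_, ?_, (hratio β hβ).1.le, (hratio β hβ).2.le⟩
  rw [mul_assoc, div_mul_cancel₀ _ (hv.isRegular β hβ), LinearMap.smul_apply, smul_eq_mul]

lemma IsRegular.eventually_ratio_lineMap [Finite W] {ω : ℂ} (hω : 0 < ω.im)
    (hζω : 0 < (zeta N * ω).im) {t : ℂ} (ht : IsRegular cs (AffineMap.lineMap v₀ v₁ t)) :
    ∀ᶠ t' in 𝓝 t, ∀ β, IsRoot cs β →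
      0 < (ω * (AffineMap.lineMap v₀ v₁ t' β / AffineMap.lineMap v₀ v₁ t β)).im ∧
        0 < (zeta N * (ω * (AffineMap.lineMap v₀ v₁ t' β / AffineMap.lineMap v₀ v₁ t β))).im := by
  refine (eventually_all_finite (finite_setOf_isRoot cs)).mpr fun β hβ ↦ ?_
  have hcont : Continuous fun t' : ℂ ↦
      (AffineMap.lineMap v₀ v₁ t' : (B →₀ ℝ) →ₗ[ℝ] ℂ) β / AffineMap.lineMap v₀ v₁ t β := by
    simp only [lineMap_apply_apply]
    fun_prop
  have hone : (AffineMap.lineMap v₀ v₁ t : (B →₀ ℝ) →ₗ[ℝ] ℂ) β / AffineMap.lineMap v₀ v₁ t β = 1 :=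
    div_self (ht β hβ)
  have hpos (c : ℂ) (hc : 0 < c.im) : ∀ᶠ t' in 𝓝 t,
      0 < (c * (AffineMap.lineMap v₀ v₁ t' β / AffineMap.lineMap v₀ v₁ t β)).im := by
    refine (Complex.continuous_im.comp (hcont.const_mul c)).continuousAt.eventually_const_lt ?_
    rwa [Function.comp_apply, hone, mul_one]
  exact (hpos ω hω).and (by simpa only [mul_assoc] using hpos _ hζω)

theorem IsRegularEigenvector.liftsConj [Finite W] (hN : 3 ≤ N)
    (h₀ : IsRegularEigenvector cs w N v₀) (h₁ : IsRegularEigenvector cs w N v₁) :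
    LiftsConj cs w ι v₀ v₁ := by
  obtain ⟨ω, hω, hζω⟩ := exists_im_pos_zeta_mul_im_pos hN
  let U : Set ℂ := {t | ¬ IsRegular cs (AffineMap.lineMap v₀ v₁ t)}ᶜ
  have hU (t : ℂ) (ht : t ∈ U) : IsRegularEigenvector cs w N (AffineMap.lineMap v₀ v₁ t) :=
    h₀.lineMap h₁ (not_not.mp ht)
  have hconn : IsPreconnected U :=
    (h₀.isRegular.countable_not_isRegular_lineMap.isPathConnected_compl_of_one_lt_rank
      (by rw [Complex.rank_real_complex]; exact Cardinal.one_lt_two)).isConnected.isPreconnected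
  have key : LiftsConj cs w ι (AffineMap.lineMap v₀ v₁ (0 : ℂ))
      (AffineMap.lineMap v₀ v₁ (1 : ℂ)) := by
    refine hconn.induction₂ (fun t t' ↦ LiftsConj cs w ι (AffineMap.lineMap v₀ v₁ t)
      (AffineMap.lineMap v₀ v₁ t')) (fun t ht ↦ ?_) (fun _ _ _ _ ht _ h h' ↦
        h.trans (hU _ ht).isRegular h') (fun _ _ _ _ h ↦ h.symm) ?_ ?_
    · filter_upwards [nhdsWithin_le_nhds ((hU t ht).isRegular.eventually_ratio_lineMap hω hζω),
        self_mem_nhdsWithin] with t' hratio ht'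
      exact (hU t ht).liftsConj_of_ratio hN hω hζω (hU t' ht') hratio
    · simpa [U] using h₀.isRegular
    · simpa [U] using h₁.isRegular
  rwa [AffineMap.lineMap_apply_zero, AffineMap.lineMap_apply_one] at key

theorem IsGoodElement.isConj_map_reducedLift [Finite W] {w' : W} (h : IsGoodElement cs w N)
    (h' : IsGoodElement cs w' N) (hconj : IsConj w w') :
    IsConj (ι (reducedLift cs w)) (ι (reducedLift cs w')) := by
  obtain ⟨x, rfl⟩ := isConj_iff.mp hconj.symm
  obtain ⟨v, g, hv, hg, hw⟩ := h.exists_semiconjBy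
  obtain ⟨v', g', hv', hg', hw'⟩ := h'.exists_semiconjBy
  have hchambers := hv.liftsConj (ι := ι) h.three_le (hv'.comp_geomRep_inv x) g (x * g') hg
    (hg'.comp_geomRep_inv x)
  rw [show (x * g')⁻¹ * (x * w' * x⁻¹) * (x * g') = g'⁻¹ * w' * g' by group] at hchambers
  exact ((isConj_of_semiconjBy (hw.map ι)).symm.trans hchambers).trans
    (isConj_of_semiconjBy (hw'.map ι))

end Connectivity

/-! ### Springer's theorem -/

section HomogeneousComponent

open MvPolynomial

variable {σ R : Type*} [CommSemiring R]

lemma eq_zero_of_forall_homogeneousComponent {f : MvPolynomial σ R}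
    (h : ∀ k, homogeneousComponent k f = 0) : f = 0 := by
  rw [← sum_homogeneousComponent f, Finset.sum_eq_zero fun k _ ↦ h k]

lemma mem_of_forall_homogeneousComponent_mem {H : Submodule R (MvPolynomial σ R)}
    {f : MvPolynomial σ R} (h : ∀ k, homogeneousComponent k f ∈ H) : f ∈ H := by
  rw [← sum_homogeneousComponent f]
  exact sum_mem fun k _ ↦ h k

lemma homogeneousComponent_mul {g : MvPolynomial σ R} {d : ℕ} (hg : g.IsHomogeneous d) (k : ℕ)
    (f : MvPolynomial σ R) : homogeneousComponent k (f * g) =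
      if d ≤ k then homogeneousComponent (k - d) f * g else 0 := by
  induction f using MvPolynomial.induction_on' with
  | monomial m a =>
    have hm : (monomial m a).IsHomogeneous m.degree := isHomogeneous_monomial a rfl
    rw [homogeneousComponent_of_mem (hm.mul hg), homogeneousComponent_of_mem hm, ite_mul, zero_mul]
    split_ifs <;> first | rfl | lia
  | add p q hp hq =>
    rw [add_mul, map_add, map_add, hp, hq]
    split_ifs
    · rw [add_mul]
    · rw [add_zero]

lemma homogeneousComponent_aeval {τ : Type*} {g : σ → MvPolynomial τ R}
    (hg : ∀ s, (g s).IsHomogeneous 1) (k : ℕ) (f : MvPolynomial σ R) :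
    homogeneousComponent k (aeval g f) = aeval g (homogeneousComponent k f) := by
  induction f using MvPolynomial.induction_on' with
  | monomial m a =>
    have hm : (monomial m a).IsHomogeneous m.degree := isHomogeneous_monomial a rfl
    have haeval : (aeval g (monomial m a)).IsHomogeneous m.degree := by
      simpa only [one_mul] using hm.aeval g hg
    rw [homogeneousComponent_of_mem hm, homogeneousComponent_of_mem haeval]
    split_ifs
    · rfl
    · rw [map_zero]
  | add p q hp hq => rw [map_add, map_add, map_add, map_add, hp, hq]

lemma homogeneousComponent_aeval_C_mul_X (c : R) (k : ℕ) (f : MvPolynomial σ R) :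
    homogeneousComponent k (aeval (fun s ↦ C c * X s) f) = c ^ k • homogeneousComponent k f := by
  induction f using MvPolynomial.induction_on' with
  | monomial m a =>
    have hm : (monomial m a).IsHomogeneous m.degree := isHomogeneous_monomial a rfl
    have hscale : aeval (fun s ↦ C c * X s) (monomial m a) = c ^ m.degree • monomial m a := by
      rw [aeval_monomial, monomial_eq, smul_eq_C_mul, algebraMap_eq, map_pow, Finsupp.degree_apply,
        ← Finset.prod_pow_eq_pow_sum]
      simp only [mul_pow, Finsupp.prod, Finset.prod_mul_distrib]
      ring
    rw [hscale, map_smul, homogeneousComponent_of_mem hm]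
    split_ifs with h
    · rw [h]
    · rw [smul_zero, smul_zero]
  | add p q hp hq => rw [map_add, map_add, map_add, hp, hq, smul_add]

end HomogeneousComponent

section PolynomialAction

open MvPolynomial

variable {B : Type*} {M : CoxeterMatrix B} {W : Type*} [Group W] (cs : CoxeterSystem M W)

/-- The root space inside the polynomial ring, as the linear forms with real coefficients: the
variable `X s` stands for the simple root `s`. -/
noncomputable def linearForm : (B →₀ ℝ) →ₗ[ℝ] MvPolynomial B ℂ := Finsupp.linearCombination ℝ X

lemma linearForm_simpleRoot (s : B) : linearForm (simpleRoot s) = X s := by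
  rw [linearForm, simpleRoot, Finsupp.linearCombination_single, one_smul]

lemma isHomogeneous_linearForm (x : B →₀ ℝ) : (linearForm x).IsHomogeneous 1 := by
  rw [linearForm, Finsupp.linearCombination_apply]
  exact Submodule.sum_mem (homogeneousSubmodule B ℂ 1) fun s _ ↦
    Submodule.smul_of_tower_mem _ _ (isHomogeneous_X ℂ s)

lemma linearMap_ext_simpleRoot {V : Type*} [AddCommGroup V] [Module ℝ V] {f g : (B →₀ ℝ) →ₗ[ℝ] V}
    (h : ∀ s, f (simpleRoot s) = g (simpleRoot s)) : f = g :=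
  Finsupp.lhom_ext' fun s ↦ LinearMap.ext_ring (h s)

/-- Evaluation of a polynomial at the point `v` of the complexified dual of the root space. -/
noncomputable def evalAt (v : (B →₀ ℝ) →ₗ[ℝ] ℂ) : MvPolynomial B ℂ →ₐ[ℂ] ℂ :=
  aeval fun s ↦ v (simpleRoot s)

lemma evalAt_X (v : (B →₀ ℝ) →ₗ[ℝ] ℂ) (s : B) : evalAt v (X s) = v (simpleRoot s) :=
  aeval_X _ s

lemma evalAt_linearForm (v : (B →₀ ℝ) →ₗ[ℝ] ℂ) (x : B →₀ ℝ) : evalAt v (linearForm x) = v x := by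
  have : ((evalAt v).toLinearMap.restrictScalars ℝ) ∘ₗ linearForm = v :=
    linearMap_ext_simpleRoot fun s ↦ by
      simp [linearForm_simpleRoot, evalAt_X]
  exact LinearMap.congr_fun this x

lemma evalAt_aeval_C_mul_X (v : (B →₀ ℝ) →ₗ[ℝ] ℂ) (c : ℂ) (f : MvPolynomial B ℂ) :
    evalAt v (aeval (fun s ↦ C c * X s) f) = evalAt (c • v) f := by
  have : (evalAt v).comp (aeval fun s ↦ C c * X s) = evalAt (c • v) :=
    algHom_ext fun s ↦ by simp [evalAt]
  exact DFunLike.congr_fun this f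

lemma aeval_linearForm_linearForm (T : (B →₀ ℝ) →ₗ[ℝ] (B →₀ ℝ)) (x : B →₀ ℝ) :
    aeval (fun s ↦ linearForm (T (simpleRoot s))) (linearForm x) = linearForm (T x) := by
  have : ((aeval fun s ↦ linearForm (T (simpleRoot s))).toLinearMap.restrictScalars ℝ) ∘ₗ
      linearForm = linearForm ∘ₗ T :=
    linearMap_ext_simpleRoot fun s ↦ by
      simp [linearForm_simpleRoot]
  exact LinearMap.congr_fun this x

/-- The action of the Coxeter group on polynomials extending the geometric representation. -/
noncomputable def polyAct : W →* (MvPolynomial B ℂ →ₐ[ℂ] MvPolynomial B ℂ) where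
  toFun w := aeval fun s ↦ linearForm (geomRep cs w (simpleRoot s))
  map_one' := algHom_ext fun s ↦ by
    simp [linearForm_simpleRoot]
  map_mul' u w := algHom_ext fun s ↦ by
    rw [AlgHom.mul_apply, aeval_X, aeval_X, aeval_linearForm_linearForm, geomRep_mul_apply]

lemma polyAct_mul_apply (u w : W) (f : MvPolynomial B ℂ) :
    polyAct cs (u * w) f = polyAct cs u (polyAct cs w f) := by
  rw [map_mul, AlgHom.mul_apply]

lemma polyAct_X (w : W) (s : B) :
    polyAct cs w (X s) = linearForm (geomRep cs w (simpleRoot s)) :=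
  aeval_X _ s

lemma homogeneousComponent_polyAct (w : W) (k : ℕ) (f : MvPolynomial B ℂ) :
    homogeneousComponent k (polyAct cs w f) = polyAct cs w (homogeneousComponent k f) :=
  homogeneousComponent_aeval (fun _ ↦ isHomogeneous_linearForm _) k f

lemma isHomogeneous_polyAct {f : MvPolynomial B ℂ} {k : ℕ} (hf : f.IsHomogeneous k) (w : W) :
    (polyAct cs w f).IsHomogeneous k := by
  rw [← mem_homogeneousSubmodule, ← homogeneousComponent_eq_self hf, ← homogeneousComponent_polyAct]
  exact homogeneousComponent_mem k _

lemma evalAt_polyAct (v : (B →₀ ℝ) →ₗ[ℝ] ℂ) (w : W) (f : MvPolynomial B ℂ) :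
    evalAt v (polyAct cs w f) = evalAt (v ∘ₗ geomRep cs w) f := by
  have : (evalAt v).comp (polyAct cs w) = evalAt (v ∘ₗ geomRep cs w) :=
    algHom_ext fun s ↦ by
      rw [AlgHom.comp_apply, polyAct_X, evalAt_linearForm, evalAt_X, LinearMap.comp_apply]
  exact DFunLike.congr_fun this f

lemma X_dvd_sub_polyAct_simple (s : B) (f : MvPolynomial B ℂ) :
    X s ∣ f - polyAct cs (cs.simple s) f := by
  rw [← Ideal.mem_span_singleton, ← Ideal.Quotient.mk_eq_mk_iff_sub_mem]
  suffices Ideal.Quotient.mkₐ ℂ (Ideal.span {X s}) =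
      (Ideal.Quotient.mkₐ ℂ (Ideal.span {X s})).comp (polyAct cs (cs.simple s)) from
    DFunLike.congr_fun this f
  refine algHom_ext fun t ↦ Ideal.Quotient.eq.mpr ?_
  change X t - polyAct cs (cs.simple s) (X t) ∈ Ideal.span {X s}
  rw [polyAct_X, geomRep_simple_apply, map_sub, map_smul, linearForm_simpleRoot,
    linearForm_simpleRoot, sub_sub_cancel]
  exact Submodule.smul_of_tower_mem _ _ (Ideal.mem_span_singleton_self _)

end PolynomialAction

section CoinvariantIdeal

open MvPolynomial

variable {B : Type*} {M : CoxeterMatrix B} {W : Type*} [Group W] (cs : CoxeterSystem M W)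

/-- The ideal generated by the homogeneous invariant polynomials of positive degree, whose quotient
is the coinvariant algebra. -/
noncomputable def coinvariantIdeal : Ideal (MvPolynomial B ℂ) :=
  Ideal.span {f | ∃ d, 0 < d ∧ f.IsHomogeneous d ∧ ∀ w, polyAct cs w f = f}

variable {cs}

lemma mem_coinvariantIdeal_of_isHomogeneous {f : MvPolynomial B ℂ} {d : ℕ} (hd : 0 < d)
    (hf : f.IsHomogeneous d) (hinv : ∀ w, polyAct cs w f = f) : f ∈ coinvariantIdeal cs :=
  Ideal.subset_span ⟨d, hd, hf, hinv⟩

lemma polyAct_mem_coinvariantIdeal {f : MvPolynomial B ℂ} (hf : f ∈ coinvariantIdeal cs) (w : W) :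
    polyAct cs w f ∈ coinvariantIdeal cs := by
  suffices coinvariantIdeal cs ≤ (coinvariantIdeal cs).comap (polyAct cs w) from this hf
  refine Ideal.span_le.mpr fun g ⟨d, hd, hg, hinv⟩ ↦ Ideal.mem_comap.mpr ?_
  rw [hinv]
  exact mem_coinvariantIdeal_of_isHomogeneous hd hg hinv

lemma homogeneousComponent_mem_of_mem_coinvariantIdeal {K : AddSubmonoid (MvPolynomial B ℂ)} {k : ℕ}
    (hK : ∀ d, 0 < d → d ≤ k → ∀ g, g.IsHomogeneous d → (∀ w, polyAct cs w g = g) →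
      ∀ a, a.IsHomogeneous (k - d) → a * g ∈ K)
    {f : MvPolynomial B ℂ} (hf : f ∈ coinvariantIdeal cs) : homogeneousComponent k f ∈ K := by
  induction hf using Submodule.closure_induction with
  | zero => rw [map_zero]; exact K.zero_mem
  | add p q _ _ hp hq => rw [map_add]; exact K.add_mem hp hq
  | smul_mem a g hg =>
    obtain ⟨d, hd, hg, hinv⟩ := hg
    rw [smul_eq_mul, homogeneousComponent_mul hg]
    split_ifs with hdk
    · exact hK d hd hdk g hg hinv _ (homogeneousComponent_isHomogeneous _ _)
    · exact K.zero_mem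

lemma homogeneousComponent_mem_coinvariantIdeal {f : MvPolynomial B ℂ}
    (hf : f ∈ coinvariantIdeal cs) (k : ℕ) : homogeneousComponent k f ∈ coinvariantIdeal cs :=
  homogeneousComponent_mem_of_mem_coinvariantIdeal
    (K := (coinvariantIdeal cs).toAddSubmonoid)
    (fun _ hd _ _ hg hinv a _ ↦
      Ideal.mul_mem_left _ a (mem_coinvariantIdeal_of_isHomogeneous hd hg hinv)) hf

lemma sub_polyAct_mem_coinvariantIdeal {f : MvPolynomial B ℂ}
    (h : ∀ s, f - polyAct cs (cs.simple s) f ∈ coinvariantIdeal cs) (w : W) :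
    f - polyAct cs w f ∈ coinvariantIdeal cs := by
  induction w using cs.simple_induction_left with
  | one => rw [map_one, AlgHom.one_apply, sub_self]; exact zero_mem _
  | mul_simple_left w s hw =>
    have := add_mem (h s) (polyAct_mem_coinvariantIdeal hw (cs.simple s))
    rwa [map_sub, sub_add_sub_cancel, ← polyAct_mul_apply] at this

lemma mem_coinvariantIdeal_of_sub_polyAct_mem [Finite W] {f : MvPolynomial B ℂ} {k : ℕ} (hk : 0 < k)
    (hf : f.IsHomogeneous k) (h : ∀ s, f - polyAct cs (cs.simple s) f ∈ coinvariantIdeal cs) :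
    f ∈ coinvariantIdeal cs := by
  have := Fintype.ofFinite W
  have hsum : ∑ w, polyAct cs w f ∈ coinvariantIdeal cs := by
    refine mem_coinvariantIdeal_of_isHomogeneous hk
      (IsHomogeneous.sum _ _ _ fun w _ ↦ isHomogeneous_polyAct cs hf w) fun u ↦ ?_
    simp only [map_sum, ← polyAct_mul_apply]
    exact Fintype.sum_equiv (Equiv.mulLeft u) _ _ fun w ↦ rfl
  have hcard : (Fintype.card W : ℂ) • f ∈ (coinvariantIdeal cs).restrictScalars ℂ := by
    have := add_mem
      (sum_mem fun w (_ : w ∈ Finset.univ) ↦ sub_polyAct_mem_coinvariantIdeal h w) hsum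
    rwa [← Finset.sum_add_distrib, Finset.sum_congr rfl fun w _ ↦ sub_add_cancel f _,
      Finset.sum_const, Finset.card_univ, ← Nat.cast_smul_eq_nsmul ℂ] at this
  exact (Submodule.smul_mem_iff _ (Nat.cast_ne_zero.mpr Fintype.card_ne_zero)).mp hcard

-- The quotient `q` of `F - s F` by `X s` vanishes on the orbit again, because the points of the
-- orbit lie outside the reflecting hyperplanes.
theorem homogeneousComponent_mem_coinvariantIdeal_of_evalAt_eq_zero [Finite W]
    {v : (B →₀ ℝ) →ₗ[ℝ] ℂ} (hv : IsRegular cs v) {k : ℕ} {F : MvPolynomial B ℂ}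
    (hdeg : ∀ i > k, homogeneousComponent i F = 0)
    (hF : ∀ x, evalAt (v ∘ₗ geomRep cs x) F = 0) :
    homogeneousComponent k F ∈ coinvariantIdeal cs := by
  induction k generalizing F with
  | zero =>
    have hconst : F = C (coeff 0 F) := by
      refine sub_eq_zero.mp (eq_zero_of_forall_homogeneousComponent fun i ↦ ?_)
      rw [map_sub]
      rcases i.eq_zero_or_pos with rfl | hi
      · rw [homogeneousComponent_zero, homogeneousComponent_zero, coeff_zero_C, sub_self]
      · rw [hdeg i hi, homogeneousComponent_of_mem (isHomogeneous_C B _), if_neg hi.ne', sub_zero]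
    have := hF 1
    rw [hconst, evalAt, aeval_C, Algebra.algebraMap_self, RingHom.id_apply] at this
    rw [homogeneousComponent_zero, this, C_0]
    exact zero_mem _
  | succ k ih =>
    refine mem_coinvariantIdeal_of_sub_polyAct_mem k.succ_pos
      (homogeneousComponent_isHomogeneous _ F) fun s ↦ ?_
    obtain ⟨q, hq⟩ := X_dvd_sub_polyAct_simple cs s F
    have hcomp (i : ℕ) : homogeneousComponent (i + 1) F -
        polyAct cs (cs.simple s) (homogeneousComponent (i + 1) F) =
          homogeneousComponent i q * X s := by
      rw [← homogeneousComponent_polyAct, ← map_sub, hq, mul_comm,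
        homogeneousComponent_mul (isHomogeneous_X ℂ s), if_pos (Nat.le_add_left 1 i),
        Nat.add_sub_cancel]
    rw [hcomp]
    refine Ideal.mul_mem_right _ _ (ih (fun i hi ↦ ?_) fun x ↦ ?_)
    · have := hcomp i
      rw [hdeg (i + 1) (by lia), map_zero, sub_zero] at this
      exact (mul_eq_zero.mp this.symm).resolve_right (X_ne_zero s)
    · have := congrArg (evalAt (v ∘ₗ geomRep cs x)) hq
      rw [map_sub, evalAt_polyAct, LinearMap.comp_assoc, ← Module.End.mul_eq_comp, ← map_mul, hF,
        hF, sub_zero, map_mul, evalAt_X] at this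
      exact (mul_eq_zero.mp this.symm).resolve_left
        (hv _ ((isRoot_simpleRoot cs s).geomRep x))

end CoinvariantIdeal

section GradedComplement

open MvPolynomial

variable {B : Type*} {M : CoxeterMatrix B} {W : Type*} [Group W] {cs : CoxeterSystem M W}

variable (cs) in
/-- A graded complement of the coinvariant ideal that is stable under the Coxeter group; as a graded
representation it is a copy of the coinvariant algebra. -/
structure IsGradedComplement (H : Submodule ℂ (MvPolynomial B ℂ)) : Prop where
  homogeneousComponent_mem : ∀ f ∈ H, ∀ k, homogeneousComponent k f ∈ H
  polyAct_mem : ∀ f ∈ H, ∀ w, polyAct cs w f ∈ H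
  disjoint : ∀ f ∈ H, f ∈ coinvariantIdeal cs → f = 0
  exists_add_eq : ∀ k f, f.IsHomogeneous k →
    ∃ h ∈ H, ∃ j ∈ coinvariantIdeal cs, j.IsHomogeneous k ∧ h + j = f

variable (cs) in
/-- The polynomials of degree `k` in the coinvariant ideal, as a subrepresentation of the polynomial
ring. -/
noncomputable def coinvariantSubrepresentation (k : ℕ) :
    Subrepresentation (AlgHom.toEnd.comp (polyAct cs) : Representation ℂ W (MvPolynomial B ℂ)) where
  toSubmodule := (coinvariantIdeal cs).restrictScalars ℂ ⊓ homogeneousSubmodule B ℂ k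
  apply_mem_toSubmodule w _ hf :=
    ⟨polyAct_mem_coinvariantIdeal hf.1 w, isHomogeneous_polyAct cs hf.2 w⟩

variable (cs) in
theorem exists_isGradedComplement [Finite W] : ∃ H, IsGradedComplement cs H := by
  choose H hH using fun k ↦ exists_isCompl (coinvariantSubrepresentation cs k)
  have hdisjoint {k : ℕ} {f : MvPolynomial B ℂ} (hf : f ∈ H k) (hfJ : f ∈ coinvariantIdeal cs)
      (hfk : f.IsHomogeneous k) : f = 0 :=
    (hH k).disjoint.le_bot (show f ∈ coinvariantSubrepresentation cs k ⊓ H k from ⟨⟨hfJ, hfk⟩, hf⟩)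
  have hmem (f : MvPolynomial B ℂ) :
      f ∈ ⨅ k, (H k).toSubmodule.comap (homogeneousComponent k) ↔
        ∀ k, homogeneousComponent k f ∈ H k := by
    rw [Submodule.mem_iInf]
    rfl
  have hmem_of_isHomogeneous {k : ℕ} {f : MvPolynomial B ℂ} (hf : f.IsHomogeneous k)
      (hfH : f ∈ H k) (i : ℕ) : homogeneousComponent i f ∈ H i := by
    rw [homogeneousComponent_of_mem hf]
    split_ifs with h
    · rwa [h]
    · exact (H i).toSubmodule.zero_mem
  refine ⟨⨅ k, (H k).toSubmodule.comap (homogeneousComponent k), ?_, ?_, ?_, ?_⟩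
  · exact fun f hf k ↦ (hmem _).mpr
      (hmem_of_isHomogeneous (homogeneousComponent_isHomogeneous k f) ((hmem f).mp hf k))
  · refine fun f hf w ↦ (hmem _).mpr fun k ↦ ?_
    rw [homogeneousComponent_polyAct]
    exact (H k).apply_mem_toSubmodule w ((hmem f).mp hf k)
  · exact fun f hf hfJ ↦ eq_zero_of_forall_homogeneousComponent fun k ↦
      hdisjoint ((hmem f).mp hf k) (homogeneousComponent_mem_coinvariantIdeal hfJ k)
        (homogeneousComponent_isHomogeneous k f)
  · intro k f hf
    have htop : f ∈ coinvariantSubrepresentation cs k ⊔ H k :=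
      (hH k).codisjoint.top_le (Submodule.mem_top : f ∈ (⊤ : Submodule ℂ _))
    obtain ⟨j, hj, h, hh, hjh⟩ := Submodule.mem_sup.mp htop
    have hhk : h.IsHomogeneous k := by
      rw [eq_sub_of_add_eq' hjh]
      exact hf.sub hj.2
    exact ⟨h, (hmem h).mpr (hmem_of_isHomogeneous hhk hh), j, hj.1, hj.2, add_comm h j ▸ hjh⟩

lemma IsGradedComplement.aeval_C_mul_X_mem {H : Submodule ℂ (MvPolynomial B ℂ)}
    (hH : IsGradedComplement cs H) {f : MvPolynomial B ℂ} (hf : f ∈ H) (c : ℂ) :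
    aeval (fun s ↦ C c * X s) f ∈ H :=
  mem_of_forall_homogeneousComponent_mem fun k ↦ by
    rw [homogeneousComponent_aeval_C_mul_X]
    exact H.smul_mem _ (hH.homogeneousComponent_mem f hf k)

end GradedComplement

section OrbitEvaluation

open MvPolynomial

lemma algHom_pi_surjective {ι k A : Type*} [Finite ι] [Field k] [CommRing A] [Algebra k A]
    {φ : ι → A →ₐ[k] k} (hφ : Function.Injective φ) :
    Function.Surjective (AlgHom.pi φ) := by
  have hsurj (i : ι) : Function.Surjective (φ i) := fun c ↦ ⟨algebraMap k A c, (φ i).commutes c⟩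
  have hmax (i : ι) : (RingHom.ker (φ i)).IsMaximal :=
    RingHom.ker_isMaximal_of_surjective _ (hsurj i)
  have hcoprime : Pairwise (Function.onFun IsCoprime fun i ↦ RingHom.ker (φ i)) := by
    refine fun i j hij ↦ Ideal.isCoprime_of_isMaximal fun
      (hker : RingHom.ker (φ i) = RingHom.ker (φ j)) ↦ hij (hφ (AlgHom.ext fun a ↦ ?_))
    have ha : a - algebraMap k A (φ i a) ∈ RingHom.ker (φ i) := by
      rw [RingHom.mem_ker, map_sub, (φ i).commutes, Algebra.algebraMap_self, RingHom.id_apply,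
        sub_self]
    rw [hker, RingHom.mem_ker, map_sub, (φ j).commutes, Algebra.algebraMap_self, RingHom.id_apply,
      sub_eq_zero] at ha
    exact ha.symm
  intro F
  obtain ⟨a, ha⟩ := Ideal.exists_forall_sub_mem_ideal hcoprime fun i ↦ algebraMap k A (F i)
  refine ⟨a, funext fun i ↦ ?_⟩
  have := ha i
  rwa [RingHom.mem_ker, map_sub, (φ i).commutes, sub_eq_zero] at this

variable {B : Type*} {M : CoxeterMatrix B} {W : Type*} [Group W] {cs : CoxeterSystem M W}

lemma InChamber.unique {v : (B →₀ ℝ) →ₗ[ℝ] ℂ} {a b : W} (ha : InChamber cs v a)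
    (hb : InChamber cs v b) : a = b := by
  by_contra hab
  obtain ⟨s, hs⟩ := cs.exists_rightDescent_of_ne_one (w := a⁻¹ * b) (mt inv_mul_eq_one.mp hab)
  have hpos : 0 < geomRep cs (a⁻¹ * b) (simpleRoot s) := by
    rw [geomRep_mul_apply]
    exact (ha.pos_iff ((isRoot_simpleRoot cs s).geomRep b)).mpr (hb s)
  exact lt_asymm hs ((length_lt_length_mul_simple_iff cs _ s).mpr hpos)

lemma evalAt_injective : Function.Injective (evalAt (B := B)) := fun v v' h ↦
  linearMap_ext_simpleRoot fun s ↦ by rw [← evalAt_X, h, evalAt_X]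

lemma IsRegular.comp_geomRep_inv_injective [Finite W] {v : (B →₀ ℝ) →ₗ[ℝ] ℂ}
    (hv : IsRegular cs v) : Function.Injective fun x ↦ v ∘ₗ geomRep cs x⁻¹ := by
  intro x y hxy
  obtain ⟨g, hg⟩ := hv.exists_inChamber
  have hx := hg.comp_geomRep_inv x
  rw [show v ∘ₗ geomRep cs x⁻¹ = v ∘ₗ geomRep cs y⁻¹ from hxy] at hx
  exact mul_right_cancel (hx.unique (hg.comp_geomRep_inv y))

variable (cs) in
/-- Restriction of polynomial functions to the orbit of `v`, as functions on the Coxeter group. -/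
noncomputable def evalOrbit (v : (B →₀ ℝ) →ₗ[ℝ] ℂ) : MvPolynomial B ℂ →ₐ[ℂ] (W → ℂ) :=
  AlgHom.pi fun x ↦ evalAt (v ∘ₗ geomRep cs x⁻¹)

lemma evalOrbit_apply (v : (B →₀ ℝ) →ₗ[ℝ] ℂ) (f : MvPolynomial B ℂ) (x : W) :
    evalOrbit cs v f x = evalAt (v ∘ₗ geomRep cs x⁻¹) f := rfl

lemma evalOrbit_mul_of_forall_polyAct_eq (v : (B →₀ ℝ) →ₗ[ℝ] ℂ) (f : MvPolynomial B ℂ)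
    {g : MvPolynomial B ℂ} (hg : ∀ w, polyAct cs w g = g) :
    evalOrbit cs v (f * g) = evalAt v g • evalOrbit cs v f := by
  ext x
  rw [map_mul, Pi.mul_apply, Pi.smul_apply, smul_eq_mul, mul_comm, evalOrbit_apply v g,
    ← evalAt_polyAct, hg]

lemma IsRegular.evalOrbit_surjective [Finite W] {v : (B →₀ ℝ) →ₗ[ℝ] ℂ} (hv : IsRegular cs v) :
    Function.Surjective (evalOrbit cs v) :=
  algHom_pi_surjective (evalAt_injective.comp hv.comp_geomRep_inv_injective)

variable {H : Submodule ℂ (MvPolynomial B ℂ)}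

lemma IsGradedComplement.eq_zero_of_evalOrbit_eq_zero [Finite W] (hH : IsGradedComplement cs H)
    {v : (B →₀ ℝ) →ₗ[ℝ] ℂ} (hv : IsRegular cs v) {f : MvPolynomial B ℂ} (hf : f ∈ H)
    (h0 : evalOrbit cs v f = 0) : f = 0 := by
  have hvanish (x : W) : evalAt (v ∘ₗ geomRep cs x) f = 0 := by
    rw [← inv_inv x, ← evalOrbit_apply, h0, Pi.zero_apply]
  suffices ∀ k, (∀ i ≥ k, homogeneousComponent i f = 0) → f = 0 from
    this (f.totalDegree + 1) fun i hi ↦ homogeneousComponent_eq_zero i f hi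
  intro k
  induction k with
  | zero => exact fun h ↦ eq_zero_of_forall_homogeneousComponent fun i ↦ h i i.zero_le
  | succ k ih =>
    refine fun h ↦ ih fun i hi ↦ ?_
    rcases hi.eq_or_lt with rfl | hlt
    · exact hH.disjoint _ (hH.homogeneousComponent_mem f hf k)
        (homogeneousComponent_mem_coinvariantIdeal_of_evalAt_eq_zero hv (fun j hj ↦ h j hj) hvanish)
    · exact h i hlt

-- Modulo `H`, a homogeneous polynomial is a sum of terms `a * g` with `g` invariant of positive
-- degree; on the orbit `g` is constant, so `a * g` can be replaced by a multiple of `a`.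
lemma IsGradedComplement.evalOrbit_mem_map (hH : IsGradedComplement cs H)
    (v : (B →₀ ℝ) →ₗ[ℝ] ℂ) (f : MvPolynomial B ℂ) :
    evalOrbit cs v f ∈ H.map (evalOrbit cs v).toLinearMap := by
  let K := (H.map (evalOrbit cs v).toLinearMap).comap (evalOrbit cs v).toLinearMap
  suffices ∀ k f, f.IsHomogeneous k → f ∈ K from
    mem_of_forall_homogeneousComponent_mem (H := K) fun k ↦
      this k _ (homogeneousComponent_isHomogeneous k f)
  intro k
  induction k using Nat.strong_induction_on with
  | _ k ih =>
    intro f hf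
    obtain ⟨h, hh, j, hj, hjk, rfl⟩ := hH.exists_add_eq k f hf
    refine K.add_mem ⟨h, hh, rfl⟩ ?_
    rw [← homogeneousComponent_eq_self hjk]
    refine homogeneousComponent_mem_of_mem_coinvariantIdeal (K := K.toAddSubmonoid)
      (fun d hd hdk g _ hinv a ha ↦ ?_) hj
    change evalOrbit cs v (a * g) ∈ H.map (evalOrbit cs v).toLinearMap
    rw [evalOrbit_mul_of_forall_polyAct_eq v a hinv]
    exact Submodule.smul_mem _ _ (ih (k - d) (by lia) a ha)

lemma IsGradedComplement.bijective_evalOrbit [Finite W] (hH : IsGradedComplement cs H)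
    {v : (B →₀ ℝ) →ₗ[ℝ] ℂ} (hv : IsRegular cs v) :
    Function.Bijective ((evalOrbit cs v).toLinearMap ∘ₗ H.subtype) := by
  refine ⟨(injective_iff_map_eq_zero _).mpr fun f hf ↦
    Subtype.ext (hH.eq_zero_of_evalOrbit_eq_zero hv f.2 hf), fun F ↦ ?_⟩
  obtain ⟨f, rfl⟩ := hv.evalOrbit_surjective F
  obtain ⟨h, hh, he⟩ := hH.evalOrbit_mem_map v f
  exact ⟨⟨h, hh⟩, he⟩

end OrbitEvaluation

section Springer

open MvPolynomial

lemma trace_funLeft {R n : Type*} [CommRing R] [Finite n] (f : n → n) :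
    LinearMap.trace R (n → R) (LinearMap.funLeft R R f) = Nat.card (Function.fixedPoints f) := by
  classical
  have := Fintype.ofFinite n
  rw [LinearMap.trace_eq_matrix_trace R (Pi.basisFun R n), Matrix.trace]
  simp [LinearMap.funLeft_apply, Pi.single_apply, Function.fixedPoints, Function.IsFixedPt,
    Fintype.card_subtype]

variable {B : Type*} {M : CoxeterMatrix B} {W : Type*} [Group W] {cs : CoxeterSystem M W}
  {w w' : W} {N : ℕ} {v v' : (B →₀ ℝ) →ₗ[ℝ] ℂ}

variable (cs) in
/-- The action of `g`, twisted by the degree: multiplied by `c ^ k` in degree `k`. -/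
noncomputable def twistedAct (c : ℂ) (g : W) : MvPolynomial B ℂ →ₐ[ℂ] MvPolynomial B ℂ :=
  (polyAct cs g).comp (aeval fun s ↦ C c * X s)

lemma IsGradedComplement.twistedAct_mem {H : Submodule ℂ (MvPolynomial B ℂ)}
    (hH : IsGradedComplement cs H) (c : ℂ) (g : W) :
    ∀ f ∈ H, (twistedAct cs c g).toLinearMap f ∈ H :=
  fun _ hf ↦ hH.polyAct_mem _ (hH.aeval_C_mul_X_mem hf c) g

lemma IsRegularEigenvector.evalOrbit_twistedAct (h : IsRegularEigenvector cs w N v) (g : W)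
    (f : MvPolynomial B ℂ) :
    evalOrbit cs v (twistedAct cs (zeta N) g f) =
      LinearMap.funLeft ℂ ℂ (fun x ↦ g⁻¹ * x * w) (evalOrbit cs v f) := by
  ext x
  rw [LinearMap.funLeft_apply, evalOrbit_apply, evalOrbit_apply, twistedAct, AlgHom.comp_apply,
    evalAt_polyAct, evalAt_aeval_C_mul_X]
  congr 2
  refine LinearMap.ext fun β ↦ ?_
  rw [LinearMap.smul_apply, LinearMap.comp_apply, LinearMap.comp_apply, LinearMap.comp_apply,
    smul_eq_mul, ← h.apply_inv, ← geomRep_mul_apply, ← geomRep_mul_apply]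
  congr 3
  group

lemma IsGradedComplement.trace_twistedAct [Finite W] {H : Submodule ℂ (MvPolynomial B ℂ)}
    (hH : IsGradedComplement cs H) (h : IsRegularEigenvector cs w N v) (g : W) :
    LinearMap.trace ℂ H ((twistedAct cs (zeta N) g).toLinearMap.restrict
      (hH.twistedAct_mem (zeta N) g)) = Nat.card (Function.fixedPoints fun x ↦ g⁻¹ * x * w) := by
  let e := LinearEquiv.ofBijective _ (hH.bijective_evalOrbit h.isRegular)
  rw [← LinearMap.trace_conj' _ e, ← trace_funLeft]
  congr 1
  refine LinearMap.ext fun F ↦ ?_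
  obtain ⟨f, rfl⟩ := e.surjective F
  rw [LinearEquiv.conj_apply_apply, LinearEquiv.symm_apply_apply]
  exact h.evalOrbit_twistedAct g f

-- `1` is a fixed point of `x ↦ w⁻¹ * x * w`, so by the trace formula `x ↦ w⁻¹ * x * w'` has a fixed
-- point too.
theorem IsRegularEigenvector.isConj [Finite W] (h : IsRegularEigenvector cs w N v)
    (h' : IsRegularEigenvector cs w' N v') : IsConj w w' := by
  obtain ⟨H, hH⟩ := exists_isGradedComplement cs
  have hcard : Nat.card (Function.fixedPoints fun x ↦ w⁻¹ * x * w) =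
      Nat.card (Function.fixedPoints fun x ↦ w⁻¹ * x * w') :=
    Nat.cast_injective (R := ℂ)
      ((hH.trace_twistedAct h w).symm.trans (hH.trace_twistedAct h' w))
  have hone : (1 : W) ∈ Function.fixedPoints fun x ↦ w⁻¹ * x * w := by
    rw [Function.mem_fixedPoints_iff, mul_one, inv_mul_cancel]
  have : Nonempty (Function.fixedPoints fun x ↦ w⁻¹ * x * w) := ⟨1, hone⟩
  obtain ⟨⟨x, hx⟩⟩ := (Nat.card_pos_iff.mp (hcard ▸ Nat.card_pos)).1
  rw [Function.mem_fixedPoints_iff, mul_assoc, inv_mul_eq_iff_eq_mul] at hx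
  exact (isConj_of_semiconjBy hx).symm

end Springer

/-! ### Conjugacy of periodic elements -/

section BalancedRoots

universe u
variable {B : Type u} {M : CoxeterMatrix B} {W : Type*} [Group W] {cs : CoxeterSystem M W}
  {w₀ : W} {Γ : Type*} [Group Γ] {ι : ArtinTitsMonoid M →* Γ} {n : ℕ} {z z' : Γ}

lemma pow_eq_reducedLift {a : ArtinTitsMonoid M} {j : ℕ} {w : W}
    (h : ∃ c, a ^ j * c = reducedLift cs w) : a ^ j = reducedLift cs (toCoxeter cs a ^ j) := by
  obtain ⟨c, hc⟩ := h
  obtain ⟨u, -, hu, -⟩ := exists_of_mul_eq_reducedLift hc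
  rw [← map_pow, hu, toCoxeter_reducedLift]

lemma geomRep_mul_inv_neg_of_mul_eq [Finite W] (hw₀ : ∀ w : W, cs.length w ≤ cs.length w₀)
    {u t : W} {y : ArtinTitsMonoid M}
    (h : reducedLift cs u * reducedLift cs t = reducedLift cs w₀ * y) {β : B →₀ ℝ}
    (hβ : IsRoot cs β) (hpos : 0 < β) (hu : 0 < geomRep cs u⁻¹ β) :
    geomRep cs (u * t)⁻¹ β < 0 := by
  rw [← reducedLift_mul_eq_longest hw₀ u, mul_assoc] at h
  obtain ⟨u', r, hu', -, rfl, hadd⟩ :=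
    exists_of_mul_eq_reducedLift (mul_left_cancel_of_finite cs h).symm
  have heq : u⁻¹ * w₀ = u' := by
    rw [← toCoxeter_reducedLift (cs := cs) (u⁻¹ * w₀), hu', toCoxeter_reducedLift]
  have hneg : geomRep cs u'⁻¹ (geomRep cs u⁻¹ β) < 0 := by
    rw [← geomRep_mul_apply, ← mul_inv_rev, ← heq, mul_inv_cancel_left]
    exact geomRep_longest_inv_neg hw₀ hβ hpos
  have := hadd.geomRep_inv_neg (hβ.geomRep u⁻¹) hu hneg
  rwa [← geomRep_mul_apply, ← mul_inv_rev] at this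

theorem IsBalancedRoot.exists_isGoodElement [Finite W]
    (hw₀ : ∀ w : W, cs.length w ≤ cs.length w₀) (hι : Function.Injective ι)
    (h : IsBalancedRoot (MonoidHom.mrange ι) (ι (reducedLift cs w₀)) n z) (hn : 3 ≤ n) :
    ∃ w, z = ι (reducedLift cs w) ∧ IsGoodElement cs w n := by
  obtain ⟨a, rfl⟩ := h.mem
  have hpow (j : ℕ) (hj : 2 * j ≤ n) : a ^ j = reducedLift cs (toCoxeter cs a ^ j) := by
    obtain ⟨c, hc⟩ := h.inv_pow_mul_mem j hj
    exact pow_eq_reducedLift (w := w₀)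
      ⟨c, hι (by rw [map_mul, hc, map_pow, mul_inv_cancel_left])⟩
  have ha := hpow 1 (by lia)
  rw [pow_one, pow_one] at ha
  refine ⟨toCoxeter cs a, congrArg ι ha, hn, ?_, fun i j hij ↦ ?_, fun β hβ hpos hhalf ↦ ?_⟩
  · have hroot : a ^ n = reducedLift cs w₀ ^ 2 := hι (by rw [map_pow, map_pow, h.pow_eq])
    rw [← map_pow, hroot, map_pow, toCoxeter_reducedLift, pow_two, longest_mul_self hw₀]
  · have := congrArg degree (pow_add a i j)
    rwa [degree_mul, hpow _ hij, hpow i (by lia), hpow j (by lia), degree_reducedLift,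
      degree_reducedLift, degree_reducedLift, pow_add] at this
  · obtain ⟨y, hy⟩ := h.inv_mul_pow_mem (n - n / 2) (by lia)
    have hΔ : a ^ (n - n / 2) = reducedLift cs w₀ * y :=
      hι (by rw [map_mul, hy, map_pow, mul_inv_cancel_left])
    obtain ⟨ε, hε⟩ : ∃ ε, n - n / 2 = n / 2 + ε := ⟨n - 2 * (n / 2), by lia⟩
    rw [hε, pow_add, hpow _ (by lia), hpow ε (by lia)] at hΔ
    rw [hε, pow_add]
    exact geomRep_mul_inv_neg_of_mul_eq hw₀ hΔ hβ hpos hhalf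

lemma IsBalancedRoot.eq_of_lt_three {P : Submonoid Γ} {Δ : Γ} (G : IsGarside P Δ)
    (h : IsBalancedRoot P Δ n z) (h' : IsBalancedRoot P Δ n z') (h0 : 0 < n) (h3 : n < 3) :
    z = z' := by
  obtain rfl | rfl : n = 1 ∨ n = 2 := by lia
  · rw [← pow_one z, h.pow_eq, ← h'.pow_eq, pow_one]
  · have heq {z : Γ} (h : IsBalancedRoot P Δ 2 z) : z = Δ := by
      have hle := h.inv_pow_mul_mem 1 le_rfl
      have hge := h.inv_mul_pow_mem 1 le_rfl
      rw [pow_one] at hle hge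
      exact inv_mul_eq_one.mp (G.eq_one_of_inv_mem _ hle (by rwa [mul_inv_rev, inv_inv]))
    rw [heq h, heq h']

theorem IsBalancedRoot.isConj [Finite W] (hw₀ : ∀ w : W, cs.length w ≤ cs.length w₀)
    (hι : Function.Injective ι)
    (G : IsGarside (MonoidHom.mrange ι) (ι (reducedLift cs w₀))) (hn : 0 < n)
    (h : IsBalancedRoot (MonoidHom.mrange ι) (ι (reducedLift cs w₀)) n z)
    (h' : IsBalancedRoot (MonoidHom.mrange ι) (ι (reducedLift cs w₀)) n z') : IsConj z z' := by
  rcases lt_or_ge n 3 with h3 | h3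
  · exact h.eq_of_lt_three G h' hn h3 ▸ IsConj.refl z
  · obtain ⟨w, rfl, hw⟩ := h.exists_isGoodElement hw₀ hι h3
    obtain ⟨w', rfl, hw'⟩ := h'.exists_isGoodElement hw₀ hι h3
    exact hw.isConj_map_reducedLift hw'
      (hw.isRegularEigenvector_heightProjection.isConj hw'.isRegularEigenvector_heightProjection)

theorem isConj_map_of_pow_eq [Finite W] (hw₀ : ∀ w : W, cs.length w ≤ cs.length w₀)
    (hι : Function.Injective ι)
    (G : IsGarside (MonoidHom.mrange ι) (ι (reducedLift cs w₀))) {x y : ArtinTitsMonoid M}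
    {N K : ℕ} (hN : 0 < N) (hx : x ^ N = (reducedLift cs w₀ ^ 2) ^ K)
    (hy : y ^ N = (reducedLift cs w₀ ^ 2) ^ K) : IsConj (ι x) (ι y) := by
  obtain ⟨n, k, hnk, hNn, hKk⟩ := Nat.exists_coprime N K
  have hg : 0 < N.gcd K := Nat.gcd_pos_of_pos_left K hN
  have hn : 0 < n := Nat.pos_of_mul_pos_right (hNn ▸ hN)
  have hroot {x : ArtinTitsMonoid M} (hx : x ^ N = (reducedLift cs w₀ ^ 2) ^ K) :
      ∃ z, IsBalancedRoot (MonoidHom.mrange ι) (ι (reducedLift cs w₀)) n z ∧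
        IsConj (ι x) (z ^ k) := by
    obtain ⟨b, z, hz, hb⟩ := G.exists_isBalancedRoot ⟨x, rfl⟩ hg hn hnk
      (by rw [← hNn, ← hKk, ← map_pow, ← map_pow, ← map_pow, hx])
    exact ⟨z, hz, isConj_iff.mpr ⟨b⁻¹, by rw [inv_inv, hb]⟩⟩
  obtain ⟨z, hz, hxz⟩ := hroot hx
  obtain ⟨z', hz', hyz'⟩ := hroot hy
  exact (hxz.trans ((hz.isConj hw₀ hι G hn hz').pow k)).trans hyz'.symm

lemma exists_mul_eq_mul_of_isConj_map (hw₀ : ∀ w : W, cs.length w ≤ cs.length w₀)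
    (hι : Function.Injective ι)
    (hfrac : ∀ γ : Γ, ∃ k b, ι (reducedLift cs w₀ ^ 2) ^ k * γ = ι b) {x y : ArtinTitsMonoid M}
    (h : IsConj (ι x) (ι y)) : ∃ g, x * g = g * y := by
  obtain ⟨c, hc⟩ := isConj_iff.mp h.symm
  obtain ⟨k, g, hg⟩ := hfrac c
  have hcomm := (commute_map_longest_sq hw₀ hfrac (ι x)).pow_left k
  refine ⟨g, hι ?_⟩
  rw [map_mul, map_mul, ← hg, ← mul_assoc, ← hcomm.eq, mul_assoc, mul_assoc, ← hc,
    inv_mul_cancel_right]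

theorem cyclicallyConj_of_pow_eq [Finite W] (hw₀ : ∀ w : W, cs.length w ≤ cs.length w₀)
    {x y : ArtinTitsMonoid M} {N K : ℕ} (hN : 0 < N) (hK : 0 < K)
    (hx : x ^ N = (reducedLift cs w₀ ^ 2) ^ K) (hy : y ^ N = (reducedLift cs w₀ ^ 2) ^ K) :
    CyclicallyConj x y := by
  obtain ⟨Γ, _, ι, hι, hfrac⟩ := exists_artinTitsGroup hw₀
  have hconj := isConj_map_of_pow_eq hw₀ hι (isGarside_mrange hw₀ hι hfrac) hN hx hy
  obtain ⟨g, hg⟩ := exists_mul_eq_mul_of_isConj_map hw₀ hι hfrac hconj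
  exact cyclicallyConj_of_mul_eq hw₀ hK g hx hg

end BalancedRoots

end ArtinTits

/-- In the Artin–Tits monoid of a finite Coxeter system, two periodic elements of the same
period are cyclically conjugate.  Here `Δ` is the Garside element: the image in `B⁺` of a
reduced word for the longest element `w₀` of `W`. -/
theorem periodic_elements_of_same_period_cyclically_conjugate
    {B : Type*} (M : CoxeterMatrix B) {W : Type*} [Group W] (cs : CoxeterSystem M W)
    [Finite W]
    (w₀ : W) (hw₀ : ∀ w : W, cs.length w ≤ cs.length w₀)
    (l : List B) (hl : cs.wordProd l = w₀) (hlen : l.length = cs.length w₀)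
    (Δ : ArtinTitsMonoid M) (hΔ : Δ = (braidCon M).mk' (FreeMonoid.ofList l))
    (x y : ArtinTitsMonoid M) (d p d' p' : ℕ)
    (hd : 0 < d) (hp : 0 < p) (hd' : 0 < d') (hp' : 0 < p')
    (hx : x ^ d = Δ ^ p) (hy : y ^ d' = Δ ^ p')
    (hperiod : d * p' = d' * p) :
    Relation.ReflTransGen
      (fun u v : ArtinTitsMonoid M => ∃ a b, u = a * b ∧ v = b * a) x y := by
  have hred : cs.IsReduced l := by rw [CoxeterSystem.IsReduced, hl, hlen]
  have hΔ₀ : Δ = ArtinTits.reducedLift cs w₀ := by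
    rw [hΔ, ← hl, ArtinTits.reducedLift_wordProd hred]
    rfl
  rw [hΔ₀] at hx hy
  refine ArtinTits.cyclicallyConj_of_pow_eq hw₀ (N := d * (2 * p')) (K := p * p')
    (by positivity) (by positivity) ?_ ?_
  · rw [pow_mul, hx, ← pow_mul, ← pow_mul]
    congr 1
    ring
  · rw [show d * (2 * p') = d' * (2 * p) by lia, pow_mul, hy, ← pow_mul, ← pow_mul]
    congr 1
    ring
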